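/- arXiv:1110.2351 — 2 statements merged into one kernel-verified Lean document; each statement's English description precedes it below -/
import Mathlib

section
/- For every Jordan curve C in the plane, there exists a homeomorphism h of ℝ² onto itself such that h(C) is the unit circle S¹ = {x ∈ ℝ² : |x| = 1} (the Schönflies theorem). -/
/-!
The Jordan curve theorem is obtained from continuous logarithms: by Borsuk and Eilenberg, a compact
planar set `K` fails to separate the plane exactly when every nonvanishing continuous function on
`K` has a continuous logarithm, and gluing logarithms along two arcs of a circle counts the
complementary components of a Jordan curve.

The inside of the curve, with connected complement, has holomorphic square roots, so the extremal
argument of Koebe maps it conformally onto the unit disk. A bounded holomorphic function that is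
small on a crosscut near the boundary is small at an interior point (multiply its rotates), so the
conformal map has a unique limit at each boundary point, and the extension is a homeomorphism of
the closures. The outside becomes the inside of another Jordan curve under `z ↦ 1 / z`. The two
boundary maps differ by a homeomorphism of the circle, which the radial extension absorbs, and the
two halves glue.
-/

namespace Schoenflies

open Set Filter Topology Metric Complex
open scoped ComplexConjugate Pointwise

section Logarithms

variable {X Y : Type*} [TopologicalSpace X] [TopologicalSpace Y] {f f' g g' : X → ℂ} {s t : Set X}

/-- `g` is a continuous logarithm of `f` on `s`. -/
structure IsLogOn (g f : X → ℂ) (s : Set X) : Prop where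
  continuousOn : ContinuousOn g s
  exp_eq : ∀ x ∈ s, exp (g x) = f x

/-- `f` admits a continuous logarithm on `s`; when `s` is a circle, this means that `f` does not
vanish on `s` and has winding number zero. -/
def HasLog (f : X → ℂ) (s : Set X) : Prop := ∃ g, IsLogOn g f s

namespace IsLogOn

lemma mono (h : IsLogOn g f s) (hts : t ⊆ s) : IsLogOn g f t :=
  ⟨h.continuousOn.mono hts, fun x hx => h.exp_eq x (hts hx)⟩

lemma congr (h : IsLogOn g f s) (hf : EqOn f f' s) : IsLogOn g f' s :=
  ⟨h.continuousOn, fun x hx => (h.exp_eq x hx).trans (hf hx)⟩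

lemma add (h : IsLogOn g f s) (h' : IsLogOn g' f' s) : IsLogOn (g + g') (f * f') s :=
  ⟨h.continuousOn.add h'.continuousOn, fun x hx => by
    simp only [Pi.add_apply, Pi.mul_apply, exp_add, h.exp_eq x hx, h'.exp_eq x hx]⟩

lemma neg (h : IsLogOn g f s) : IsLogOn (-g) f⁻¹ s :=
  ⟨h.continuousOn.neg, fun x hx => by
    simp only [Pi.neg_apply, Pi.inv_apply, exp_neg, h.exp_eq x hx]⟩

lemma sub (h : IsLogOn g f s) (h' : IsLogOn g' f' s) : IsLogOn (g - g') (f / f') s := by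
  simpa only [sub_eq_add_neg, div_eq_mul_inv] using h.add h'.neg

lemma comp {φ : Y → X} {t : Set Y} (h : IsLogOn g f s) (hφ : ContinuousOn φ t)
    (hts : MapsTo φ t s) : IsLogOn (g ∘ φ) (f ∘ φ) t :=
  ⟨h.continuousOn.comp hφ hts, fun y hy => h.exp_eq (φ y) (hts hy)⟩

lemma ne_zero (h : IsLogOn g f s) {x : X} (hx : x ∈ s) : f x ≠ 0 :=
  h.exp_eq x hx ▸ exp_ne_zero _

lemma clog (hf : ContinuousOn f s) (hslit : ∀ x ∈ s, f x ∈ slitPlane) :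
    IsLogOn (fun x => log (f x)) f s :=
  ⟨hf.clog hslit, fun x hx => exp_log (slitPlane_ne_zero (hslit x hx))⟩

lemma const {w c : ℂ} (hc : exp w = c) : IsLogOn (fun _ => w) (fun _ => c) s :=
  ⟨continuousOn_const, fun _ _ => hc⟩

lemma exists_int (h : IsLogOn g f s) (h' : IsLogOn g' f s) {x : X} (hx : x ∈ s) :
    ∃ n : ℤ, g x - g' x = n * (2 * Real.pi * I) := by
  obtain ⟨n, hn⟩ := exp_eq_exp_iff_exists_int.mp ((h.exp_eq x hx).trans (h'.exp_eq x hx).symm)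
  exact ⟨n, by rw [hn]; ring⟩

lemma exists_continuousOn_int (h : IsLogOn g f s) (h' : IsLogOn g' f s) :
    ∃ n : X → ℤ, ContinuousOn n s ∧ ∀ x ∈ s, g x - g' x = n x * (2 * Real.pi * I) := by
  choose! n hn using fun x (hx : x ∈ s) => h.exists_int h' hx
  refine ⟨n, ?_, hn⟩
  have hre : ContinuousOn (fun x => ((g x - g' x) / (2 * Real.pi * I)).re) s :=
    continuous_re.comp_continuousOn ((h.continuousOn.sub h'.continuousOn).div_const _)
  refine Int.isClosedEmbedding_coe_real.isInducing.continuousOn_iff.mpr (hre.congr fun x hx => ?_)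
  simp [hn x hx]

lemma sub_eq_sub (hs : IsPreconnected s) (h : IsLogOn g f s) (h' : IsLogOn g' f s) {x y : X}
    (hx : x ∈ s) (hy : y ∈ s) : g x - g' x = g y - g' y := by
  obtain ⟨n, hn, heq⟩ := h.exists_continuousOn_int h'
  rw [heq x hx, heq y hy, hs.constant hn hx hy]

lemma hasLog_union (hs : IsClosed s) (ht : IsClosed t) (h : IsLogOn g f s) (h' : IsLogOn g' f t)
    (heq : EqOn g g' (s ∩ t)) : HasLog f (s ∪ t) := by
  classical
  have hgs : EqOn (s.piecewise g g') g s := s.piecewise_eqOn g g'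
  have hgt : EqOn (s.piecewise g g') g' t := fun x hx => by
    by_cases hxs : x ∈ s
    · rw [hgs hxs, heq ⟨hxs, hx⟩]
    · exact s.piecewise_eq_of_notMem g g' hxs
  refine ⟨s.piecewise g g', ?_, ?_⟩
  · exact (h.continuousOn.congr hgs).union_of_isClosed (h'.continuousOn.congr hgt) hs ht
  · rintro x (hx | hx)
    · rw [hgs hx, h.exp_eq x hx]
    · rw [hgt hx, h'.exp_eq x hx]

end IsLogOn

namespace HasLog

lemma mono (h : HasLog f s) (hts : t ⊆ s) : HasLog f t :=
  h.imp fun _ hg => hg.mono hts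

lemma congr (h : HasLog f s) (hf : EqOn f f' s) : HasLog f' s :=
  h.imp fun _ hg => hg.congr hf

lemma mul (h : HasLog f s) (h' : HasLog f' s) : HasLog (f * f') s :=
  let ⟨_, hg⟩ := h; let ⟨_, hg'⟩ := h'; ⟨_, hg.add hg'⟩

lemma inv (h : HasLog f s) : HasLog f⁻¹ s :=
  let ⟨_, hg⟩ := h; ⟨_, hg.neg⟩

lemma comp {φ : Y → X} {t : Set Y} (h : HasLog f s) (hφ : ContinuousOn φ t)
    (hts : MapsTo φ t s) : HasLog (f ∘ φ) t :=
  let ⟨_, hg⟩ := h; ⟨_, hg.comp hφ hts⟩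

lemma empty : HasLog f ∅ :=
  ⟨f, continuousOn_empty f, by simp⟩

lemma of_norm_sub_lt {c : ℂ} (hf : ContinuousOn f s) (h : ∀ x ∈ s, ‖f x - c‖ < ‖c‖) :
    HasLog f s := by
  rcases s.eq_empty_or_nonempty with rfl | ⟨x₀, hx₀⟩
  · exact empty
  have hc : c ≠ 0 := norm_pos_iff.mp ((norm_nonneg _).trans_lt (h x₀ hx₀))
  have hslit : ∀ x ∈ s, f x / c ∈ slitPlane := fun x hx => by
    have hlt : ‖f x / c - 1‖ < 1 := by
      rw [div_sub_one hc, norm_div]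
      exact (div_lt_one (norm_pos_iff.mpr hc)).mpr (h x hx)
    simpa using mem_slitPlane_of_norm_lt_one hlt
  refine ⟨_, ((IsLogOn.clog (hf.div_const c) hslit).add (.const (exp_log hc))).congr ?_⟩
  exact fun x _ => div_mul_cancel₀ _ hc

lemma union (hs : IsClosed s) (ht : IsClosed t) (h : HasLog f s) (h' : HasLog f t)
    (hst : IsPreconnected (s ∩ t)) : HasLog f (s ∪ t) := by
  obtain ⟨g, hg⟩ := h
  obtain ⟨g', hg'⟩ := h'
  rcases (s ∩ t).eq_empty_or_nonempty with hem | ⟨x₀, hx₀⟩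
  · exact hg.hasLog_union hs ht hg' (by simp [hem])
  have hone : exp (g x₀ - g' x₀) = 1 := by
    rw [exp_sub, hg.exp_eq _ hx₀.1, hg'.exp_eq _ hx₀.2, div_self (hg.ne_zero hx₀.1)]
  refine hg.hasLog_union hs ht ((hg'.add (.const hone)).congr fun x _ => mul_one _) fun x hx => ?_
  have := IsLogOn.sub_eq_sub hst (hg.mono inter_subset_left) (hg'.mono inter_subset_right) hx hx₀
  exact sub_eq_iff_eq_add'.mp this

end HasLog

lemma hasLog_univ [SimplyConnectedSpace X] [LocallyPathConnectedSpace X] (hf : Continuous f)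
    (hne : ∀ x, f x ≠ 0) : HasLog f univ := by
  obtain ⟨x₀⟩ : Nonempty X := inferInstance
  obtain ⟨g, ⟨-, hg⟩, -⟩ := isCoveringMapOn_exp.existsUnique_continuousMap_lifts
    (⟨f, hf⟩ : C(X, ℂ)) (a₀ := x₀) (e₀ := log (f x₀)) (exp_log (hne x₀)) fun x => hne x
  exact ⟨g, g.continuous.continuousOn, fun x _ => congrFun hg x⟩

end Logarithms

section Borsuk

variable {K S : Set ℂ} {f : ℂ → ℂ} {a b z : ℂ} {c : ℝ}

lemma hasLog_sub_div_sub (hK : IsClosed K) (hS : IsPreconnected S) (hd : Disjoint S K)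
    (ha : a ∈ S) (hb : b ∈ S) : HasLog (fun z => (z - a) / (z - b)) K := by
  have hne : ∀ x ∈ S, ∀ z ∈ K, z - x ≠ 0 := fun x hx z hz =>
    sub_ne_zero.mpr fun h => hd.ne_of_mem hx hz h.symm
  have hsymm : ∀ x y, HasLog (fun z => (z - x) / (z - y)) K →
      HasLog (fun z => (z - y) / (z - x)) K :=
    fun x y h => h.inv.congr fun z _ => inv_div _ _
  refine hS.induction₂ (fun x y => HasLog (fun z => (z - x) / (z - y)) K) ?_ ?_
    (fun x y _ _ => hsymm x y) ha hb
  · intro x hx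
    obtain ⟨r, hr, hball⟩ := Metric.isOpen_iff.mp hK.isOpen_compl x (hd.notMem_of_mem_left hx)
    filter_upwards [mem_nhdsWithin_of_mem_nhds (ball_mem_nhds x hr)] with y hy
    refine hsymm y x (.of_norm_sub_lt (c := 1) ?_ fun z hz => ?_)
    · exact ContinuousOn.div (by fun_prop) (by fun_prop) (hne x hx)
    · have hrz : r ≤ ‖z - x‖ := by
        rw [← dist_eq_norm]
        exact not_lt.mp fun h => hball h hz
      rw [div_sub_one (hne x hx z hz), norm_div, norm_one,
        div_lt_one (norm_pos_iff.mpr (hne x hx z hz)), sub_sub_sub_cancel_left, norm_sub_rev,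
        ← dist_eq_norm]
      exact (mem_ball.mp hy).trans_le hrz
  · intro x y w _ hy _ h1 h2
    exact (h1.mul h2).congr fun z hz => div_mul_div_cancel₀ (hne y hy z hz)

/-- The points `y` up to which `u` agrees on `T` with a member of `J` that is constant on the
rest of `T`; `J` collects the integer jumps that can be removed by changing logarithms. -/
def matchedUpTo (J : AddSubgroup (ℝ → ℤ)) (T : Set ℝ) (u : ℝ → ℤ) : Set ℝ :=
  {y | ∃ v ∈ J, ∃ x ≥ y, EqOn v u (T ∩ Iic x) ∧ ∃ k, ∀ t ∈ T ∩ Ici x, v t = k}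

lemma Iio_subset_matchedUpTo {J : AddSubgroup (ℝ → ℤ)} {T : Set ℝ} {u : ℝ → ℤ}
    (hJ : ∀ x ∉ T, (Ici x).indicator 1 ∈ J) {s ε : ℝ} {n : ℤ}
    (hn : ∀ t ∈ T, |t - s| < ε → u t = n) {y : ℝ} (hy : y ∈ matchedUpTo J T u) (hsy : s - ε < y) :
    Iio (s + ε) ⊆ matchedUpTo J T u := by
  obtain ⟨v, hvJ, x, hxy, hvu, k, hk⟩ := hy
  intro z hz
  rcases le_or_gt z x with hzx | hxz
  · exact ⟨v, hvJ, x, hzx, hvu, k, hk⟩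
  have hn' : ∀ t ∈ T, x ≤ t → t ≤ z → u t = n := fun t ht hxt htz =>
    hn t ht (abs_lt.mpr ⟨by linarith, by linarith [mem_Iio.mp hz]⟩)
  obtain ⟨w, hwJ, hwv, hwn⟩ : ∃ w ∈ J, EqOn w v (T ∩ Iic x) ∧ ∀ t ∈ T ∩ Ici x, w t = n := by
    by_cases hx : x ∈ T
    · have hkn : k = n := by
        rw [← hk x ⟨hx, self_mem_Ici⟩, hvu ⟨hx, self_mem_Iic⟩, hn' x hx le_rfl hxz.le]
      exact ⟨v, hvJ, eqOn_refl _ _, hkn ▸ hk⟩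
    · refine ⟨v + (n - k) • (Ici x).indicator 1, J.add_mem hvJ (J.zsmul_mem (hJ x hx) _),
        fun t ht => ?_, fun t ht => ?_⟩
      · have : t < x := lt_of_le_of_ne ht.2 fun h => hx (h ▸ ht.1)
        simp [this]
      · simp [hk t ht, ht.2.out]
  refine ⟨w, hwJ, z, le_rfl, fun t ht => ?_, n, fun t ht => hwn t ⟨ht.1, hxz.le.trans ht.2⟩⟩
  rcases le_total t x with htx | hxt
  · rw [hwv ⟨ht.1, htx⟩, hvu ⟨ht.1, htx⟩]
  · rw [hwn t ⟨ht.1, hxt⟩, hn' t ht.1 hxt ht.2]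

lemma exists_mem_eqOn_of_indicator_mem {T : Set ℝ} (hT : IsCompact T) {u : ℝ → ℤ}
    (hu : ContinuousOn u T) {J : AddSubgroup (ℝ → ℤ)}
    (hJ : ∀ x ∉ T, (Ici x).indicator 1 ∈ J) : ∃ v ∈ J, EqOn v u T := by
  have hloc : ∀ s, ∃ ε > 0, ∃ n, ∀ t ∈ T, |t - s| < ε → u t = n := fun s => by
    by_cases hs : s ∈ T
    · obtain ⟨ε, hε, h⟩ := Metric.continuousWithinAt_iff.mp (hu s hs) 1 one_pos
      refine ⟨ε, hε, u s, fun t ht hts => ?_⟩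
      have hlt : |((u t : ℝ) - u s)| < 1 := h ht (by rwa [Real.dist_eq])
      exact eq_of_sub_eq_zero (Int.abs_lt_one_iff.mp (by exact_mod_cast hlt))
    · obtain ⟨ε, hε, h⟩ := Metric.isOpen_iff.mp hT.isClosed.isOpen_compl s hs
      exact ⟨ε, hε, 0, fun t ht hts => absurd ht (h (by rwa [mem_ball, Real.dist_eq]))⟩
  have hclopen : IsClopen (matchedUpTo J T u) := by
    refine ⟨isClosed_of_closure_subset fun s hs => ?_, isOpen_iff_mem_nhds.mpr fun s hs => ?_⟩
    · obtain ⟨ε, hε, n, hn⟩ := hloc s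
      obtain ⟨y, hy, hys⟩ := Metric.mem_closure_iff.mp hs ε hε
      exact Iio_subset_matchedUpTo hJ hn hy (by linarith [(abs_lt.mp hys).2]) (by simpa using hε)
    · obtain ⟨ε, hε, n, hn⟩ := hloc s
      exact mem_of_superset (Iio_mem_nhds (by linarith))
        (Iio_subset_matchedUpTo hJ hn hs (by linarith))
  obtain ⟨m, hm⟩ := hT.bddBelow
  obtain ⟨M, hM⟩ := hT.bddAbove
  have hmem : m - 1 ∈ matchedUpTo J T u := by
    refine ⟨0, J.zero_mem, m - 1, le_rfl, fun t ht => ?_, 0, fun _ _ => rfl⟩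
    have htm : t ≤ m - 1 := ht.2
    linarith [hm ht.1]
  obtain ⟨v, hvJ, x, hxM, hvu, -⟩ : M ∈ matchedUpTo J T u := by
    rw [hclopen.eq_univ ⟨_, hmem⟩]; trivial
  exact ⟨v, hvJ, fun t ht => hvu ⟨ht, (hM ht).trans hxM⟩⟩

lemma sub_mem_slitPlane (hne : z ≠ a) (h : a.re ≤ z.re) : z - a ∈ slitPlane := by
  rw [mem_slitPlane_iff, sub_re, sub_im, sub_pos, sub_ne_zero]
  rcases h.lt_or_eq with hlt | heq
  · exact .inl hlt
  · exact .inr fun him => hne (Complex.ext heq.symm him)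

lemma log_sub_sub_log_sub (hre : z.re = a.re) (him : z.im < a.im) :
    log (a - z) - log (z - a) = Real.pi * I := by
  have ha : a - z = ((a.im - z.im : ℝ) : ℂ) * I := by apply Complex.ext <;> simp [hre]
  have hz : z - a = ((a.im - z.im : ℝ) : ℂ) * -I := by rw [← neg_sub, ha, mul_neg]
  have hpos : 0 < a.im - z.im := sub_pos.mpr him
  rw [ha, hz, log_ofReal_mul hpos I_ne_zero, log_ofReal_mul hpos (neg_ne_zero.mpr I_ne_zero),
    log_I, log_neg_I]
  ring

/-- The integer functions `v` for which `2πi • v`, seen on the vertical line `re z = c`, is the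
difference across that line of logarithms of `1` on the two halves of `K`. -/
def jumpGroup (K : Set ℂ) (c : ℝ) : AddSubgroup (ℝ → ℤ) where
  carrier := {v | ∃ p q : ℂ → ℂ, IsLogOn p 1 (K ∩ {z | z.re ≤ c}) ∧
    IsLogOn q 1 (K ∩ {z | c ≤ z.re}) ∧
    ∀ z ∈ K, z.re = c → p z - q z = v z.im * (2 * Real.pi * I)}
  zero_mem' := ⟨0, 0, .const exp_zero, .const exp_zero, by simp⟩
  add_mem' := by
    rintro v v' ⟨p, q, hp, hq, h⟩ ⟨p', q', hp', hq', h'⟩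
    refine ⟨p + p', q + q', by simpa using hp.add hp', by simpa using hq.add hq',
      fun z hz hzc => ?_⟩
    simp only [Pi.add_apply, add_sub_add_comm, h z hz hzc, h' z hz hzc, Int.cast_add, add_mul]
  neg_mem' := by
    rintro v ⟨p, q, hp, hq, h⟩
    refine ⟨-p, -q, by simpa using hp.neg, by simpa using hq.neg, fun z hz hzc => ?_⟩
    simp only [Pi.neg_apply, neg_sub_neg, ← neg_sub (p z), h z hz hzc, Int.cast_neg, neg_mul]

/-- The jump at height `y` comes from dividing out a logarithm of `(z - a) / (z - b)`, where `b` is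
a point of the line above `K`. -/
lemma indicator_mem_jumpGroup (hK : IsCompact K) (hKc : IsPreconnected Kᶜ) {y : ℝ}
    (hy : (⟨c, y⟩ : ℂ) ∉ K) : (Ici y).indicator 1 ∈ jumpGroup K c := by
  obtain ⟨M, hM⟩ := (hK.image continuous_im).bddAbove
  have hKM : ∀ z ∈ K, z.im < max M y + 1 := fun z hz =>
    ((hM (mem_image_of_mem _ hz)).trans (le_max_left M y)).trans_lt (lt_add_one _)
  set a : ℂ := ⟨c, y⟩
  set b : ℂ := ⟨c, max M y + 1⟩
  have hb : b ∉ K := fun h => (hKM b h).false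
  have hza : ∀ z ∈ K, z ≠ a := fun z hz h => hy (h ▸ hz)
  have hzb : ∀ z ∈ K, z ≠ b := fun z hz h => hb (h ▸ hz)
  obtain ⟨l, hl⟩ := hasLog_sub_div_sub hK.isClosed hKc disjoint_compl_left hy hb
  refine ⟨fun z => l z - (log (a - z) - log (b - z)), fun z => l z - (log (z - a) - log (z - b)),
    ((hl.mono inter_subset_left).sub ((IsLogOn.clog (by fun_prop) ?_).sub
      (.clog (by fun_prop) ?_))).congr ?_,
    ((hl.mono inter_subset_left).sub ((IsLogOn.clog (by fun_prop) ?_).sub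
      (.clog (by fun_prop) ?_))).congr ?_, fun z hz hzc => ?_⟩
  · exact fun z hz => sub_mem_slitPlane (hza z hz.1).symm hz.2
  · exact fun z hz => sub_mem_slitPlane (hzb z hz.1).symm hz.2
  · intro z hz
    have h1 := sub_ne_zero.mpr (hza z hz.1)
    have h2 := sub_ne_zero.mpr (hzb z hz.1)
    simp only [Pi.div_apply, Pi.one_apply]
    rw [← neg_sub z a, ← neg_sub z b, neg_div_neg_eq, div_self (div_ne_zero h1 h2)]
  · exact fun z hz => sub_mem_slitPlane (hza z hz.1) hz.2
  · exact fun z hz => sub_mem_slitPlane (hzb z hz.1) hz.2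
  · exact fun z hz => div_self (div_ne_zero (sub_ne_zero.mpr (hza z hz.1))
      (sub_ne_zero.mpr (hzb z hz.1)))
  · have hjump := log_sub_sub_log_sub (z := z) (a := b) hzc (hKM z hz)
    rcases lt_trichotomy z.im y with hlt | heq | hgt
    · have := log_sub_sub_log_sub (z := z) (a := a) hzc hlt
      rw [indicator_of_notMem (by simpa using hlt)]
      linear_combination hjump - this
    · exact absurd (Complex.ext hzc heq) (hza z hz)
    · have := log_sub_sub_log_sub (z := a) (a := z) hzc.symm hgt
      rw [indicator_of_mem (mem_Ici.mpr hgt.le), Pi.one_apply, Int.cast_one]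
      linear_combination hjump + this

lemma HasLog.of_halfPlanes (hK : IsCompact K) (hKc : IsPreconnected Kᶜ)
    (hl : HasLog f (K ∩ {z | z.re ≤ c})) (hr : HasLog f (K ∩ {z | c ≤ z.re})) : HasLog f K := by
  obtain ⟨g, hg⟩ := hl
  obtain ⟨h, hh⟩ := hr
  have hline : K ∩ {z | z.re = c} = K ∩ {z | z.re ≤ c} ∩ (K ∩ {z | c ≤ z.re}) := by
    ext z; simp only [mem_inter_iff, mem_ofPred_eq, le_antisymm_iff]; tauto
  obtain ⟨n, hn, hgh⟩ := (hg.mono (hline.trans_subset inter_subset_left)).exists_continuousOn_int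
    (hh.mono (hline.trans_subset inter_subset_right))
  let φ : ℝ → ℂ := fun t => ⟨c, t⟩
  have hφ : IsClosedEmbedding φ :=
    (Isometry.of_dist_eq fun s t => dist_of_re_eq (z := φ s) (w := φ t) rfl).isClosedEmbedding
  have hT : IsCompact (φ ⁻¹' K) := hφ.isCompact_preimage hK
  obtain ⟨v, ⟨p, q, hp, hq, hpq⟩, hvn⟩ := exists_mem_eqOn_of_indicator_mem hT
    (hn.comp hφ.continuous.continuousOn fun t ht => ⟨ht, rfl⟩)
    fun t ht => indicator_mem_jumpGroup (c := c) hK hKc ht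
  have hunion : K = K ∩ {z | z.re ≤ c} ∪ K ∩ {z | c ≤ z.re} := by
    rw [← inter_union_distrib_left, eq_comm, inter_eq_left]
    exact fun z _ => le_total z.re c
  rw [hunion]
  refine ((hg.sub hp).congr fun z _ => div_one _).hasLog_union
    (hK.isClosed.inter (isClosed_le continuous_re continuous_const))
    (hK.isClosed.inter (isClosed_le continuous_const continuous_re))
    ((hh.sub hq).congr fun z _ => div_one _) fun z hz => ?_
  rw [← hline] at hz
  have hz' : φ z.im = z := Complex.ext hz.2.out.symm rfl
  have hvz : v z.im = n z := by
    have := hvn (show z.im ∈ φ ⁻¹' K by rw [mem_preimage, hz']; exact hz.1)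
    rwa [Function.comp_apply, hz'] at this
  have h1 := hgh z hz
  have h2 := hpq z hz.1 hz.2
  rw [hvz] at h2
  simp only [Pi.sub_apply]
  linear_combination h1 - h2

lemma isPreconnected_compl_inter {Q : Set ℂ} (hK : Bornology.IsBounded K)
    (hKc : IsPreconnected Kᶜ) (hQ : IsPreconnected Qᶜ) (hQb : ¬ Bornology.IsBounded Qᶜ) :
    IsPreconnected (K ∩ Q)ᶜ := by
  obtain ⟨z, hzQ, hzK⟩ := not_subset.mp fun h => hQb (hK.subset h)
  rw [compl_inter]
  exact IsPreconnected.union z hzK hzQ hKc hQ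

lemma isPreconnected_compl_inter_le (hK : Bornology.IsBounded K) (hKc : IsPreconnected Kᶜ)
    (L : StrongDual ℝ ℂ) (hL : L ≠ 0) (c : ℝ) : IsPreconnected (K ∩ {z | L z ≤ c})ᶜ := by
  have hc : {z | L z ≤ c}ᶜ = {z | c < L z} := by ext; simp
  refine isPreconnected_compl_inter hK hKc ?_ fun hb => ?_
  · rw [hc]
    exact (convex_halfSpace_gt L.isLinear c).isPreconnected
  · obtain ⟨M, hM⟩ := (L.lipschitz.isBounded_image (hc ▸ hb)).bddAbove
    obtain ⟨z, hz⟩ := LinearMap.surjective_of_ne_zero (f := L.toLinearMap)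
      (fun h => hL (ContinuousLinearMap.coe_injective h)) (max c M + 1)
    have hz : L z = max c M + 1 := hz
    have : L z ≤ M := hM ⟨z, by rw [mem_ofPred_eq, hz]; linarith [le_max_left c M], rfl⟩
    linarith [le_max_right c M]

lemma reCLM_ne_zero : reCLM ≠ 0 :=
  fun h => one_ne_zero (α := ℝ) (congrArg (fun L => L 1) h)

lemma HasLog.of_re_strips (hK : IsCompact K) (hKc : IsPreconnected Kᶜ) {δ : ℝ} (hδ : 0 < δ)
    (h : ∀ c, HasLog f (K ∩ {z | c ≤ z.re ∧ z.re ≤ c + δ})) : HasLog f K := by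
  obtain ⟨m, hm⟩ := (hK.image continuous_re).bddBelow
  obtain ⟨M, hM⟩ := (hK.image continuous_re).bddAbove
  have hleft : ∀ j : ℕ, HasLog f (K ∩ {z | z.re ≤ m + j * δ}) := fun j => by
    induction j with
    | zero =>
      refine (h (m - δ)).mono fun z hz => ⟨hz.1, ?_, ?_⟩
      · linarith [hm (mem_image_of_mem re hz.1)]
      · simpa using hz.2
    | succ j ih =>
      refine .of_halfPlanes (c := m + j * δ)
        (hK.inter_right (isClosed_le continuous_re continuous_const))
        (isPreconnected_compl_inter_le hK.isBounded hKc reCLM reCLM_ne_zero _)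
        (ih.mono fun z hz => ⟨hz.1.1, hz.2⟩) ((h (m + j * δ)).mono fun z hz => ⟨hz.1.1, hz.2, ?_⟩)
      have : z.re ≤ m + (j + 1 : ℕ) * δ := hz.1.2
      push_cast at this
      linarith
  obtain ⟨j, hj⟩ := exists_nat_gt ((M - m) / δ)
  rw [div_lt_iff₀ hδ] at hj
  exact (hleft j).mono fun z hz => ⟨hz, show z.re ≤ _ by linarith [hM (mem_image_of_mem re hz)]⟩

lemma HasLog.of_im_strips (hK : IsCompact K) (hKc : IsPreconnected Kᶜ) {δ : ℝ} (hδ : 0 < δ)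
    (h : ∀ c, HasLog f (K ∩ {z | c ≤ z.im ∧ z.im ≤ c + δ})) : HasLog f K := by
  let e : ℂ ≃ₜ ℂ := Homeomorph.mulLeft₀ I I_ne_zero
  have key : HasLog (f ∘ e) (e ⁻¹' K) := by
    refine .of_re_strips (e.isCompact_preimage.mpr hK) ?_ hδ fun c => ?_
    · rwa [← preimage_compl, e.isPreconnected_preimage]
    · exact (h c).comp e.continuous.continuousOn fun z hz => ⟨hz.1, by simpa [e] using hz.2⟩
  refine (key.comp (φ := e.symm) (t := K) e.symm.continuous.continuousOn fun z hz => ?_).congr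
    fun z _ => ?_
  · simpa using hz
  · simp

/-- `K` is cut into strips, then into squares on which `f` is nearly constant. -/
theorem HasLog.of_isPreconnected_compl (hK : IsCompact K) (hKc : IsPreconnected Kᶜ)
    (hf : ContinuousOn f K) (hf0 : ∀ z ∈ K, f z ≠ 0) : HasLog f K := by
  rcases K.eq_empty_or_nonempty with rfl | hne
  · exact .empty
  obtain ⟨z₀, hz₀, hmin⟩ := hK.exists_isMinOn hne hf.norm
  obtain ⟨δ, hδ, hunif⟩ := Metric.uniformContinuousOn_iff.mp
    (hK.uniformContinuousOn_of_continuous hf) _ (norm_pos_iff.mpr (hf0 z₀ hz₀))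
  have hδ3 : 0 < δ / 3 := by positivity
  refine .of_re_strips hK hKc hδ3 fun c => ?_
  have hstrip : K ∩ {z | c ≤ z.re ∧ z.re ≤ c + δ / 3} =
      K ∩ {z | reCLM z ≤ c + δ / 3} ∩ {z | (-reCLM) z ≤ -c} := by
    ext z; simp; tauto
  refine .of_im_strips (hK.inter_right ?_) ?_ hδ3 fun d => ?_
  · exact (isClosed_le continuous_const continuous_re).inter
      (isClosed_le continuous_re continuous_const)
  · rw [hstrip]
    exact isPreconnected_compl_inter_le (hK.isBounded.subset inter_subset_left)
      (isPreconnected_compl_inter_le hK.isBounded hKc _ reCLM_ne_zero _) _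
      (neg_ne_zero.mpr reCLM_ne_zero) _
  rcases Set.eq_empty_or_nonempty (K ∩ {z | c ≤ z.re ∧ z.re ≤ c + δ / 3} ∩
    {z | d ≤ z.im ∧ z.im ≤ d + δ / 3}) with hem | ⟨w, ⟨hwK, hwr, hwr'⟩, hwi, hwi'⟩
  · exact hem ▸ .empty
  refine .of_norm_sub_lt (c := f w) (hf.mono fun z hz => hz.1.1) ?_
  rintro z ⟨⟨hzK, hzr, hzr'⟩, hzi, hzi'⟩
  have hzw : dist z w < δ := by
    have hre : |(z - w).re| ≤ δ / 3 := abs_le.mpr ⟨by simp; linarith, by simp; linarith⟩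
    have him : |(z - w).im| ≤ δ / 3 := abs_le.mpr ⟨by simp; linarith, by simp; linarith⟩
    rw [dist_eq_norm]
    linarith [norm_le_abs_re_add_abs_im (z - w)]
  rw [← dist_eq_norm]
  exact (hunif z hzK w hwK hzw).trans_le (hmin hwK)

end Borsuk

section Eilenberg

variable {K V : Set ℂ} {a b : ℂ}

lemma continuousOn_extend_range {X Y Z : Type*} [TopologicalSpace X] [TopologicalSpace Y]
    [TopologicalSpace Z] {f : X → Y} (hf : IsEmbedding f) {g : X → Z} (hg : Continuous g)
    (e : Y → Z) : ContinuousOn (Function.extend f g e) (range f) := by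
  rw [continuousOn_iff_continuous_domRestrict, ← hf.toHomeomorph.comp_continuous_iff']
  exact hg.congr fun x => (hf.injective.extend_apply g e x).symm

lemma HasLog.range_of_comp {X Y : Type*} [TopologicalSpace X] [TopologicalSpace Y] {f : X → Y}
    (hf : IsEmbedding f) {u : Y → ℂ} (h : HasLog (u ∘ f) univ) : HasLog u (range f) := by
  obtain ⟨g, hg⟩ := h
  refine ⟨Function.extend f g 0,
    continuousOn_extend_range hf (continuousOn_univ.mp hg.continuousOn) 0, ?_⟩
  rintro _ ⟨x, rfl⟩
  rw [hf.injective.extend_apply]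
  exact hg.exp_eq x trivial

lemma HasLog.image_Icc {γ : ℝ → ℂ} {s t : ℝ} (hst : s ≤ t) (hγ : Continuous γ)
    (hinj : InjOn γ (Icc s t)) {u : ℂ → ℂ} (hu : ContinuousOn u (γ '' Icc s t))
    (hu0 : ∀ z ∈ γ '' Icc s t, u z ≠ 0) : HasLog u (γ '' Icc s t) := by
  have hemb : IsEmbedding fun x : Icc s t => γ x :=
    ((hγ.comp continuous_subtype_val).isClosedEmbedding hinj.injective).isEmbedding
  have hmem : ∀ x : ℝ, γ (projIcc s t hst x) ∈ γ '' Icc s t := fun x =>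
    mem_image_of_mem γ (projIcc s t hst x).2
  have hlog : HasLog (fun x => u (γ (projIcc s t hst x))) univ :=
    hasLog_univ (hu.comp_continuous (hemb.continuous.comp continuous_projIcc) hmem)
      fun x => hu0 _ (hmem x)
  rw [image_eq_range]
  refine .range_of_comp hemb ((hlog.comp continuous_subtype_val.continuousOn
    (mapsTo_univ _ _)).congr fun x _ => ?_)
  simp only [Function.comp_apply, projIcc_val]

lemma eq_zero_of_hasLog_zpow {n : ℤ} (h : HasLog (fun x : Circle => (x : ℂ) ^ n) univ) :
    n = 0 := by
  have hline : IsLogOn (fun t : ℝ => n * (t * I)) (fun t => (Circle.exp t : ℂ) ^ n) univ :=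
    ⟨by fun_prop, fun t _ => by rw [exp_int_mul, Circle.coe_exp]⟩
  obtain ⟨g, hg⟩ := h
  have hdiff := IsLogOn.sub_eq_sub isPreconnected_univ hline
    (hg.comp (φ := Circle.exp) Circle.exp.continuous.continuousOn (mapsTo_univ _ _))
    (mem_univ (2 * Real.pi)) (mem_univ 0)
  have hzero : (n : ℂ) * (2 * Real.pi * I) = 0 := by
    simpa [Circle.exp_two_pi, sub_eq_neg_add] using hdiff
  exact_mod_cast (mul_eq_zero.mp hzero).resolve_right two_pi_I_ne_zero

/-- A logarithm on `frontier V` lets one replace `(z - a) ^ n` inside `V` by a nowhere vanishing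
function, producing a logarithm of `(z - a) ^ n` on a large circle. -/
lemma eq_zero_of_hasLog_frontier (hV : IsOpen V) (hVb : Bornology.IsBounded V) (ha : a ∈ V)
    {h : ℂ → ℂ} (hh : ContinuousOn h (closure V)) (hh0 : ∀ z ∈ closure V, h z ≠ 0) {n : ℤ}
    (hlog : HasLog (fun z => (z - a) ^ n * h z) (frontier V)) : n = 0 := by
  classical
  obtain ⟨g, hg⟩ := hlog
  obtain ⟨G, hG⟩ := ContinuousMap.exists_restrict_eq isClosed_frontier
    (⟨(frontier V).domRestrict g, hg.continuousOn.domRestrict⟩ : C(frontier V, ℂ))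
  have hGg : ∀ z ∈ frontier V, G z = g z := fun z hz => DFunLike.congr_fun hG ⟨z, hz⟩
  have hza : ∀ z ∉ V, z - a ≠ 0 := fun z hz h => hz (sub_eq_zero.mp h ▸ ha)
  let F : ℂ → ℂ := V.piecewise (fun z => exp (G z) / h z) fun z => (z - a) ^ n
  have hF : Continuous F := by
    refine continuous_piecewise (fun z hz => ?_) ?_ ?_
    · rw [hGg z hz, hg.exp_eq z hz, mul_div_cancel_right₀ _ (hh0 z (frontier_subset_closure hz))]
    · exact ContinuousOn.div (by fun_prop) hh hh0
    · rw [closure_compl, hV.interior_eq]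
      exact ContinuousOn.zpow₀ (by fun_prop) n fun z hz => .inl (hza z hz)
  have hF0 : ∀ z, F z ≠ 0 := fun z => by
    by_cases hz : z ∈ V
    · rw [show F z = _ from piecewise_eq_of_mem _ _ _ hz]
      exact div_ne_zero (exp_ne_zero _) (hh0 z (subset_closure hz))
    · rw [show F z = _ from piecewise_eq_of_notMem _ _ _ hz]
      exact zpow_ne_zero n (hza z hz)
  obtain ⟨R, hR, hVR⟩ := hVb.subset_ball_lt 0 a
  have hcircle : HasLog (fun x : Circle => ((R : ℂ) * x) ^ n) univ := by
    refine ((hasLog_univ hF hF0).comp (φ := fun x : Circle => a + R * x)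
      (by fun_prop) (mapsTo_univ _ _)).congr fun x _ => ?_
    have hx : a + R * (x : ℂ) ∉ V := fun hx => by
      simpa [abs_of_pos hR, Circle.norm_coe] using hVR hx
    rw [Function.comp_apply, show F _ = _ from piecewise_eq_of_notMem _ _ _ hx, add_sub_cancel_left]
  have hRn : ((R : ℂ) ^ n) ≠ 0 := zpow_ne_zero n (ofReal_ne_zero.mpr hR.ne')
  refine eq_zero_of_hasLog_zpow ((HasLog.mul ⟨_, .const (exp_log (inv_ne_zero hRn))⟩
    hcircle).congr fun x _ => ?_)
  rw [Pi.mul_apply, mul_zpow, inv_mul_cancel_left₀ hRn]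

lemma closure_connectedComponentIn_subset {X : Type*} [TopologicalSpace X]
    [LocallyConnectedSpace X] {U : Set X} (hU : IsOpen U) (x : X) :
    closure (connectedComponentIn U x) ⊆ connectedComponentIn U x ∪ Uᶜ := by
  intro y hy
  by_cases hyU : y ∈ U
  · obtain ⟨z, hzy, hzx⟩ := mem_closure_iff.mp hy _ hU.connectedComponentIn
      (mem_connectedComponentIn hyU)
    left
    rw [connectedComponentIn_eq hzx, ← connectedComponentIn_eq hzy]
    exact mem_connectedComponentIn hyU
  · exact .inr hyU

lemma eq_zero_of_hasLog_zpow_mul_zpow (hK : IsClosed K) (ha : a ∉ K) (hb : b ∉ K)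
    (hbd : Bornology.IsBounded (connectedComponentIn Kᶜ a)) (hab : b ∉ connectedComponentIn Kᶜ a)
    {m n : ℤ} (h : HasLog (fun z => (z - a) ^ m * (z - b) ^ n) K) : m = 0 := by
  have hV : IsOpen (connectedComponentIn Kᶜ a) := hK.isOpen_compl.connectedComponentIn
  have hcl := closure_connectedComponentIn_subset hK.isOpen_compl a
  rw [compl_compl] at hcl
  have hzb : ∀ z ∈ closure (connectedComponentIn Kᶜ a), z - b ≠ 0 := fun z hz hzb =>
    (hcl (sub_eq_zero.mp hzb ▸ hz)).elim hab hb
  refine eq_zero_of_hasLog_frontier hV hbd (mem_connectedComponentIn ha) ?_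
    (fun z hz => zpow_ne_zero n (hzb z hz)) (h.mono fun z hz => ?_)
  · exact ContinuousOn.zpow₀ (by fun_prop) n fun z hz => .inl (hzb z hz)
  · rw [hV.frontier_eq] at hz
    exact (hcl hz.1).resolve_left hz.2

lemma isPreconnected_compl_closedBall (a : ℂ) {R : ℝ} (hR : 0 < R) :
    IsPreconnected (closedBall a R)ᶜ := by
  have himage : (closedBall a R)ᶜ = (fun w => a + exp w) '' {w | Real.log R < w.re} := by
    ext z
    rw [mem_compl_iff, mem_closedBall, not_le, dist_eq_norm]
    constructor
    · intro h
      have hz : z - a ≠ 0 := norm_pos_iff.mp (hR.trans h)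
      refine ⟨log (z - a), ?_, by simp only [exp_log hz, add_sub_cancel]⟩
      rw [mem_ofPred_eq, log_re]
      exact Real.log_lt_log hR h
    · rintro ⟨w, hw, rfl⟩
      rwa [add_sub_cancel_left, norm_exp, ← Real.log_lt_iff_lt_exp hR]
  rw [himage]
  exact (convex_halfSpace_re_gt _).isPreconnected.image _ (by fun_prop)

lemma mem_connectedComponentIn_of_not_isBounded (hK : Bornology.IsBounded K) (hb : b ∉ K)
    (ha' : ¬ Bornology.IsBounded (connectedComponentIn Kᶜ a))
    (hb' : ¬ Bornology.IsBounded (connectedComponentIn Kᶜ b)) : b ∈ connectedComponentIn Kᶜ a := by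
  obtain ⟨R, hR, hKR⟩ := hK.subset_closedBall_lt 0 0
  obtain ⟨x, hxa, hxR⟩ := not_subset.mp fun h => ha' (isBounded_closedBall.subset h)
  obtain ⟨y, hyb, hyR⟩ := not_subset.mp fun h => hb' (isBounded_closedBall.subset h)
  have hsub : (closedBall 0 R)ᶜ ⊆ connectedComponentIn Kᶜ x :=
    (isPreconnected_compl_closedBall 0 hR).subset_connectedComponentIn hxR
      (compl_subset_compl.mpr hKR)
  rw [connectedComponentIn_eq hxa, connectedComponentIn_eq (hsub hyR),
    ← connectedComponentIn_eq hyb]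
  exact mem_connectedComponentIn hb

lemma mem_connectedComponentIn_of_hasLog (hK : IsCompact K) (ha : a ∉ K) (hb : b ∉ K)
    (h : HasLog (fun z => (z - a) / (z - b)) K) : b ∈ connectedComponentIn Kᶜ a := by
  by_contra hab
  by_cases hbd : Bornology.IsBounded (connectedComponentIn Kᶜ a)
  · refine one_ne_zero (eq_zero_of_hasLog_zpow_mul_zpow hK.isClosed ha hb hbd hab (m := 1)
      (n := -1) (h.congr fun z _ => ?_))
    simp only [zpow_one, zpow_neg_one, div_eq_mul_inv]
  · have hbd' : Bornology.IsBounded (connectedComponentIn Kᶜ b) := by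
      by_contra hbd'
      exact hab (mem_connectedComponentIn_of_not_isBounded hK.isBounded hb hbd hbd')
    have hba : a ∉ connectedComponentIn Kᶜ b := fun hba =>
      hab (connectedComponentIn_eq hba ▸ mem_connectedComponentIn hb)
    refine one_ne_zero (eq_zero_of_hasLog_zpow_mul_zpow hK.isClosed hb ha hbd' hba (m := 1)
      (n := -1) (h.inv.congr fun z _ => ?_))
    rw [Pi.inv_apply, inv_div, zpow_one, zpow_neg_one, div_eq_mul_inv]

lemma isPreconnected_compl_of_hasLog (hK : IsCompact K)
    (h : ∀ u : ℂ → ℂ, ContinuousOn u K → (∀ z ∈ K, u z ≠ 0) → HasLog u K) :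
    IsPreconnected Kᶜ := by
  have hne : ∀ x ∉ K, ∀ z ∈ K, z - x ≠ 0 := fun x hx z hz h => hx (sub_eq_zero.mp h ▸ hz)
  refine isPreconnected_of_forall_pair fun a ha b hb => ⟨connectedComponentIn Kᶜ a,
    connectedComponentIn_subset _ _, mem_connectedComponentIn ha,
    mem_connectedComponentIn_of_hasLog hK ha hb (h _ ?_ ?_), isPreconnected_connectedComponentIn⟩
  · exact ContinuousOn.div (by fun_prop) (by fun_prop) (hne b hb)
  · exact fun z hz => div_ne_zero (hne a ha z hz) (hne b hb z hz)

end Eilenberg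

section Jordan

lemma HasLog.zpow {X : Type*} [TopologicalSpace X] {f : X → ℂ} {s : Set X} (h : HasLog f s)
    (n : ℤ) : HasLog (f ^ n) s := by
  obtain ⟨g, hg⟩ := h
  refine ⟨fun x => n * g x, continuousOn_const.mul hg.continuousOn, fun x hx => ?_⟩
  rw [exp_int_mul, hg.exp_eq x hx, Pi.pow_apply]

lemma continuous_comp_arg {g : ℝ → ℂ} (hg : Continuous g)
    (hper : Function.Periodic g (2 * Real.pi)) : Continuous fun x : Circle => g (arg x) := by
  have hquot : IsQuotientMap Circle.exp :=
    isLocalHomeomorph_circleExp.isOpenMap.isQuotientMap Circle.exp.continuous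
      Circle.exp_surjective
  refine hquot.continuous_iff.mpr (hg.congr fun t => ?_)
  obtain ⟨m, hm⟩ := Circle.exp_eq_exp.mp (Circle.exp_arg (Circle.exp t))
  rw [Function.comp_apply, hm]
  exact (hper.int_mul m t).symm

/-- `-n` is the winding number of `u`. -/
lemma exists_int_hasLog {u : Circle → ℂ} (hu : Continuous u) (hu0 : ∀ x, u x ≠ 0) :
    ∃ n : ℤ, HasLog (fun x : Circle => (x : ℂ) ^ n * u x) univ := by
  obtain ⟨g, hg⟩ := hasLog_univ (hu.comp Circle.exp.continuous) fun t => hu0 (Circle.exp t)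
  have hgc : Continuous g := continuousOn_univ.mp hg.continuousOn
  have hshift : IsLogOn (fun t => g (t + 2 * Real.pi)) (u ∘ Circle.exp) univ :=
    ⟨by fun_prop, fun t _ => by
      simp only [hg.exp_eq _ trivial, Function.comp_apply, Circle.exp_add_two_pi]⟩
  obtain ⟨n, hn⟩ := hshift.exists_int hg (mem_univ 0)
  have hstep : ∀ t, g (t + 2 * Real.pi) - g t = n * (2 * Real.pi * I) := fun t =>
    (hshift.sub_eq_sub isPreconnected_univ hg trivial trivial).trans hn
  let p : ℝ → ℂ := fun t => g t - n * (t * I)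
  have hper : Function.Periodic p (2 * Real.pi) := fun t => by
    simp only [p, ofReal_add, ofReal_mul, ofReal_ofNat]
    linear_combination hstep t
  refine ⟨-n, fun x => p (arg x),
    (continuous_comp_arg (by fun_prop) hper).continuousOn, fun x _ => ?_⟩
  have hx : exp (arg x * I) = x :=
    congrArg (fun y : Circle => (y : ℂ)) (Circle.exp_arg x)
  simp only [p]
  rw [exp_sub, exp_int_mul, hg.exp_eq _ trivial, Function.comp_apply, Circle.exp_arg, hx,
    zpow_neg, div_eq_inv_mul]

variable {f : Circle → ℂ} {a b : ℂ}

lemma not_isPreconnected_compl_range (hf : IsEmbedding f) : ¬ IsPreconnected (range f)ᶜ := by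
  intro hcon
  have hlog : HasLog (Function.extend f (fun x => (x : ℂ)) 1) (range f) := by
    refine .of_isPreconnected_compl (isCompact_range hf.continuous) hcon
      (continuousOn_extend_range hf (by fun_prop) 1) ?_
    rintro _ ⟨x, rfl⟩
    rw [hf.injective.extend_apply]
    exact x.coe_ne_zero
  refine one_ne_zero (eq_zero_of_hasLog_zpow (n := 1) ((hlog.comp hf.continuous.continuousOn
    fun x _ => mem_range_self x).congr fun x _ => ?_))
  rw [Function.comp_apply, hf.injective.extend_apply, zpow_one]

lemma mem_connectedComponentIn_of_isBounded (hf : IsEmbedding f) (ha : a ∉ range f)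
    (hb : b ∉ range f) (ha' : Bornology.IsBounded (connectedComponentIn (range f)ᶜ a))
    (hb' : Bornology.IsBounded (connectedComponentIn (range f)ᶜ b)) :
    b ∈ connectedComponentIn (range f)ᶜ a := by
  by_contra hab
  have hba : a ∉ connectedComponentIn (range f)ᶜ b := fun hba =>
    hab (connectedComponentIn_eq hba ▸ mem_connectedComponentIn hb)
  have hfc := hf.continuous
  have hK : IsClosed (range f) := (isCompact_range hfc).isClosed
  have hne : ∀ c ∉ range f, ∀ x, f x - c ≠ 0 := fun c hc x h => hc ⟨x, sub_eq_zero.mp h⟩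
  obtain ⟨m, hm⟩ := exists_int_hasLog (u := fun x => f x - a) (by fun_prop) (hne a ha)
  obtain ⟨n, hn⟩ := exists_int_hasLog (u := fun x => f x - b) (by fun_prop) (hne b hb)
  have hmn : HasLog (fun z => (z - a) ^ n * (z - b) ^ (-m)) (range f) := by
    refine .range_of_comp hf (((hm.zpow n).mul (hn.zpow (-m))).congr fun x _ => ?_)
    have hx := x.coe_ne_zero
    simp only [Pi.mul_apply, Pi.pow_apply, Function.comp_apply, mul_zpow, ← zpow_mul]
    rw [mul_mul_mul_comm, ← zpow_add₀ hx, mul_comm n, neg_mul, add_neg_cancel, zpow_zero, one_mul]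
  obtain rfl : n = 0 := eq_zero_of_hasLog_zpow_mul_zpow hK ha hb ha' hab hmn
  refine one_ne_zero (eq_zero_of_hasLog_zpow_mul_zpow hK hb ha hb' hba (m := 1) (n := 0)
    (.range_of_comp hf (hn.congr fun x _ => ?_)))
  simp only [zpow_zero, one_mul, mul_one, zpow_one, Function.comp_apply]

/-- The arc is the whole curve except for a short piece around `x`. -/
lemma exists_arc (hf : IsEmbedding f) {x : ℂ} (hx : x ∈ range f) {r : ℝ} (hr : 0 < r) :
    ∃ B ⊆ range f, IsCompact B ∧ IsPreconnected B ∧ IsPreconnected Bᶜ ∧ x ∉ B ∧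
      range f \ ball x r ⊆ B := by
  obtain ⟨y, rfl⟩ := hx
  obtain ⟨t₀, rfl⟩ := Circle.exp_surjective y
  let γ : ℝ → ℂ := f ∘ Circle.exp
  have hγ : Continuous γ := hf.continuous.comp Circle.exp.continuous
  obtain ⟨η', hη', hclose⟩ := Metric.continuousAt_iff.mp (hγ.continuousAt (x := t₀)) r hr
  obtain ⟨η, hη, hηη'⟩ := exists_between (lt_min hη' one_pos)
  obtain ⟨hηη', hη1⟩ := lt_min_iff.mp hηη'
  have hπ := Real.pi_gt_three
  have hinj : InjOn γ (Icc (t₀ + η) (t₀ + 2 * Real.pi - η)) := fun s hs t ht hst =>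
    Circle.exp_injOn_Icc (by linarith) hs ht (hf.injective hst)
  have hcomp : IsCompact (γ '' Icc (t₀ + η) (t₀ + 2 * Real.pi - η)) := isCompact_Icc.image hγ
  refine ⟨γ '' Icc (t₀ + η) (t₀ + 2 * Real.pi - η), ?_, hcomp,
    isPreconnected_Icc.image _ hγ.continuousOn, isPreconnected_compl_of_hasLog hcomp fun u =>
      HasLog.image_Icc (by linarith) hγ hinj, ?_, ?_⟩
  · rintro _ ⟨t, -, rfl⟩
    exact mem_range_self _
  · rintro ⟨t, ht, h⟩
    have := Circle.exp_injOn_Ico (a := t₀) (b := t₀ + 2 * Real.pi) (by linarith)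
      ⟨by linarith [ht.1], by linarith [ht.2]⟩ ⟨le_rfl, by linarith⟩ (hf.injective h)
    linarith [ht.1]
  · rintro _ ⟨⟨y, rfl⟩, hz⟩
    obtain ⟨t, rfl⟩ := Circle.exp_surjective y
    obtain ⟨t', ht', heq⟩ := Circle.periodic_exp.exists_mem_Ico (by positivity) t t₀
    rw [heq] at hz ⊢
    refine ⟨t', ⟨not_lt.mp fun hlt => hz (hclose ?_), not_lt.mp fun hlt => hz ?_⟩, rfl⟩
    · rw [Real.dist_eq, abs_lt]
      constructor <;> linarith [ht'.1]
    · rw [← Circle.exp_sub_two_pi t']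
      refine hclose (x := t' - 2 * Real.pi) ?_
      rw [Real.dist_eq, abs_lt]
      constructor <;> linarith [ht'.2]

/-- Otherwise a component missing a point of the curve would have its frontier in an arc, whose
complement is connected. -/
lemma frontier_connectedComponentIn_compl_range (hf : IsEmbedding f) (ha : a ∉ range f)
    (hb : b ∉ range f) (hab : b ∉ connectedComponentIn (range f)ᶜ a) :
    frontier (connectedComponentIn (range f)ᶜ a) = range f := by
  have hK : IsOpen (range f)ᶜ := (isCompact_range hf.continuous).isClosed.isOpen_compl
  have hV : IsOpen (connectedComponentIn (range f)ᶜ a) := hK.connectedComponentIn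
  have hsub : frontier (connectedComponentIn (range f)ᶜ a) ⊆ range f := fun z hz => by
    rw [hV.frontier_eq] at hz
    simpa [hz.2] using closure_connectedComponentIn_subset hK a hz.1
  refine hsub.antisymm fun x hx => ?_
  rw [hV.frontier_eq]
  refine ⟨?_, fun h => connectedComponentIn_subset _ _ h hx⟩
  by_contra hcl
  obtain ⟨r, hr, hball⟩ := Metric.isOpen_iff.mp isClosed_closure.isOpen_compl x hcl
  obtain ⟨B, hBf, -, -, hBc, -, hBr⟩ := exists_arc hf hx hr
  refine hab (hBc.subset_of_closure_inter_subset hV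
    ⟨a, fun h => ha (hBf h), mem_connectedComponentIn ha⟩ ?_ fun h => hb (hBf h))
  rintro z ⟨hz, hzB⟩
  by_contra hzV
  have hzf : z ∈ frontier (connectedComponentIn (range f)ᶜ a) := by
    rw [hV.frontier_eq]
    exact ⟨hz, hzV⟩
  exact hzB (hBr ⟨hsub hzf, fun h => hball h hz⟩)

lemma exists_not_isBounded_connectedComponentIn_compl {K : Set ℂ} (hK : Bornology.IsBounded K) :
    ∃ b ∉ K, ¬ Bornology.IsBounded (connectedComponentIn Kᶜ b) := by
  obtain ⟨R, hR, hKR⟩ := hK.subset_closedBall_lt 0 0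
  have hunb : ¬ Bornology.IsBounded (closedBall (0 : ℂ) R)ᶜ := fun h =>
    NormedSpace.unbounded_univ ℝ ℂ (compl_union_self (closedBall (0 : ℂ) R) ▸
      h.union isBounded_closedBall)
  obtain ⟨b, hb⟩ : (closedBall (0 : ℂ) R)ᶜ.Nonempty :=
    nonempty_iff_ne_empty.mpr fun h => hunb (h ▸ Bornology.isBounded_empty)
  exact ⟨b, fun h => hb (hKR h), fun h => hunb (h.subset
    ((isPreconnected_compl_closedBall 0 hR).subset_connectedComponentIn hb
      (compl_subset_compl.mpr hKR)))⟩

/-- The sets `U` and `E` are the inside and the outside of the plane curve `C`. -/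
structure IsJordanDecomposition (C U E : Set ℂ) : Prop where
  isOpen_inside : IsOpen U
  isOpen_outside : IsOpen E
  isConnected_inside : IsConnected U
  isConnected_outside : IsConnected E
  disjoint : Disjoint U E
  union_eq : U ∪ E = Cᶜ
  isBounded_inside : Bornology.IsBounded U
  not_isBounded_outside : ¬ Bornology.IsBounded E
  frontier_inside : frontier U = C
  frontier_outside : frontier E = C

theorem jordan_curve (hf : IsEmbedding f) :
    ∃ U E : Set ℂ, IsJordanDecomposition (range f) U E := by
  have hK : IsCompact (range f) := isCompact_range hf.continuous
  have hKo : IsOpen (range f)ᶜ := hK.isClosed.isOpen_compl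
  obtain ⟨b, hb, hE⟩ := exists_not_isBounded_connectedComponentIn_compl hK.isBounded
  obtain ⟨a, ha, hab⟩ : ∃ a ∉ range f, a ∉ connectedComponentIn (range f)ᶜ b := by
    by_contra! hcon
    refine not_isPreconnected_compl_range hf ?_
    rw [← (connectedComponentIn_subset (range f)ᶜ b).antisymm hcon]
    exact isPreconnected_connectedComponentIn
  have hU : Bornology.IsBounded (connectedComponentIn (range f)ᶜ a) := by
    by_contra hU
    exact hab (mem_connectedComponentIn_of_not_isBounded hK.isBounded ha hE hU)
  have hba : b ∉ connectedComponentIn (range f)ᶜ a := fun h =>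
    hE (connectedComponentIn_eq h ▸ hU)
  refine ⟨connectedComponentIn (range f)ᶜ a, connectedComponentIn (range f)ᶜ b,
    hKo.connectedComponentIn, hKo.connectedComponentIn,
    isConnected_connectedComponentIn_iff.mpr ha, isConnected_connectedComponentIn_iff.mpr hb,
    disjoint_left.mpr fun z hza hzb => hE ?_, ?_, hU, hE,
    frontier_connectedComponentIn_compl_range hf ha hb hba,
    frontier_connectedComponentIn_compl_range hf hb ha hab⟩
  · rwa [connectedComponentIn_eq hzb, ← connectedComponentIn_eq hza]
  · refine (union_subset (connectedComponentIn_subset _ _)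
      (connectedComponentIn_subset _ _)).antisymm fun z hz => ?_
    by_cases hzb : Bornology.IsBounded (connectedComponentIn (range f)ᶜ z)
    · exact .inl (mem_connectedComponentIn_of_isBounded hf ha hz hU hzb)
    · exact .inr (mem_connectedComponentIn_of_not_isBounded hK.isBounded hz hE hzb)

lemma subset_ball_of_disjoint_sphere {W : Set ℂ} (hW : IsPreconnected W) {w : ℂ}
    {ε : ℝ} (hd : Disjoint W (sphere w ε)) {a : ℂ} (ha : a ∈ W) (haε : a ∈ ball w ε) :
    W ⊆ ball w ε := by
  refine hW.subset_left_of_subset_union isOpen_ball isClosed_closedBall.isOpen_compl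
    (disjoint_compl_right_iff_subset.mpr ball_subset_closedBall) (fun z hz => ?_) ⟨a, ha, haε⟩
  rw [← ball_union_sphere, compl_union]
  exact (em (z ∈ ball w ε)).imp_right fun h => ⟨h, disjoint_left.mp hd hz⟩

/-- The two points are separated neither by the curve nor by an arc of it together with the sphere
of radius `ε`, and these two closed sets meet in a connected set. -/
lemma exists_isPreconnected_subset_ball (hf : IsEmbedding f) {U : Set ℂ}
    (hU : IsPreconnected U) (hd : Disjoint U (range f)) {w : ℂ} (hw : w ∈ range f)
    {ε : ℝ} (hε : 0 < ε) :
    ∃ δ > 0, δ < ε ∧ ∀ a ∈ U ∩ ball w δ, ∀ b ∈ U ∩ ball w δ,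
      ∃ W ⊆ ball w ε, IsOpen W ∧ IsPreconnected W ∧ W ⊆ (range f)ᶜ ∧ a ∈ W ∧ b ∈ W := by
  have hK : IsCompact (range f) := isCompact_range hf.continuous
  obtain ⟨B, hBf, hBc, hBp, -, hwB, hBr⟩ := exists_arc hf hw hε
  obtain ⟨δ', hδ', hball⟩ := Metric.isOpen_iff.mp hBc.isClosed.isOpen_compl w hwB
  obtain ⟨δ, hδ, hlt⟩ := exists_between (lt_min hδ' hε)
  obtain ⟨hδδ', hδε⟩ := lt_min_iff.mp hlt
  refine ⟨δ, hδ, hδε, fun a ⟨haU, haδ⟩ b ⟨hbU, hbδ⟩ => ?_⟩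
  have hBS : IsCompact (B ∪ sphere w ε) := hBc.union (isCompact_sphere _ _)
  have hsphere : Disjoint (ball w δ) (sphere w ε) :=
    sphere_disjoint_ball.symm.mono_left (ball_subset_ball hδε.le)
  have hdBS : Disjoint (ball w δ) (B ∪ sphere w ε) :=
    disjoint_union_right.mpr ⟨disjoint_left.mpr fun z hz hzB =>
      hball (ball_subset_ball hδδ'.le hz) hzB, hsphere⟩
  have hinter : range f ∩ (B ∪ sphere w ε) = B := by
    refine subset_antisymm ?_ fun z hz => ⟨hBf hz, .inl hz⟩
    rintro z ⟨hz, hzB | hzS⟩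
    · exact hzB
    · exact hBr ⟨hz, disjoint_left.mp sphere_disjoint_ball hzS⟩
  have hlog : HasLog (fun z => (z - a) / (z - b)) (range f ∪ (B ∪ sphere w ε)) :=
    (hasLog_sub_div_sub hK.isClosed hU hd haU hbU).union hK.isClosed hBS.isClosed
      (hasLog_sub_div_sub hBS.isClosed (convex_ball w δ).isPreconnected hdBS haδ hbδ)
      (hinter.symm ▸ hBp)
  have hmem : ∀ x ∈ U, x ∈ ball w δ → x ∉ range f ∪ (B ∪ sphere w ε) := fun x hxU hx =>
    disjoint_left.mp (disjoint_union_right.mpr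
      ⟨hd.mono_left inter_subset_left, hdBS.mono_left inter_subset_right⟩) ⟨hxU, hx⟩
  have hWK := connectedComponentIn_subset (range f ∪ (B ∪ sphere w ε))ᶜ a
  refine ⟨connectedComponentIn (range f ∪ (B ∪ sphere w ε))ᶜ a, ?_,
    (hK.union hBS).isClosed.isOpen_compl.connectedComponentIn, isPreconnected_connectedComponentIn,
    fun z hz h => hWK hz (.inl h), mem_connectedComponentIn (hmem a haU haδ),
    mem_connectedComponentIn_of_hasLog (hK.union hBS) (hmem a haU haδ) (hmem b hbU hbδ) hlog⟩
  exact subset_ball_of_disjoint_sphere isPreconnected_connectedComponentIn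
    (disjoint_left.mpr fun z hz h => hWK hz (.inr (.inr h)))
    (mem_connectedComponentIn (hmem a haU haδ)) (ball_subset_ball hδε.le haδ)

lemma HasLog.iUnion {X : Type*} [TopologicalSpace X] {f : X → ℂ} {V : ℕ → Set X} {x₀ : X}
    (hV : Monotone V) (hVo : ∀ n, IsOpen (V n)) (hVc : ∀ n, IsPreconnected (V n))
    (hx₀ : ∀ n, x₀ ∈ V n) (h : ∀ n, HasLog f (V n)) : HasLog f (⋃ n, V n) := by
  choose g hg using h
  choose! k hk using fun x (hx : x ∈ ⋃ n, V n) => mem_iUnion.mp hx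
  have hagree_le : ∀ m n, m ≤ n → ∀ x ∈ V m, g m x - g m x₀ = g n x - g n x₀ :=
    fun m n hmn x hx => by
      have := (hg m).sub_eq_sub (hVc m) ((hg n).mono (hV hmn)) hx (hx₀ m)
      linear_combination this
  have hagree : ∀ n, ∀ x ∈ V n, g (k x) x - g (k x) x₀ = g n x - g n x₀ := fun n x hx => by
    rcases le_total (k x) n with hkn | hnk
    · exact hagree_le _ _ hkn x (hk x (mem_iUnion_of_mem n hx))
    · exact (hagree_le _ _ hnk x hx).symm
  refine ⟨fun x => g (k x) x - g (k x) x₀ + g 0 x₀, ?_, fun x hx => ?_⟩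
  · refine ContinuousOn.iUnion_of_isOpen (fun n => ?_) hVo
    exact (((hg n).continuousOn.sub continuousOn_const).add continuousOn_const).congr
      fun x hx => by rw [hagree n x hx, Pi.add_apply, Pi.sub_apply]
  · have hx' := hk x hx
    simp only [exp_add, exp_sub, (hg _).exp_eq _ hx', (hg _).exp_eq _ (hx₀ _)]
    exact div_mul_cancel₀ _ ((hg 0).ne_zero (hx₀ 0))

lemma isPreconnected_thickening {E : Type*} [NormedAddCommGroup E] [NormedSpace ℝ E] {A : Set E}
    (hA : IsPreconnected A) (r : ℝ) : IsPreconnected (thickening r A) := by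
  rw [← ball_add_zero, ← image2_add, ← image_prod]
  exact ((convex_ball _ _).isPreconnected.prod hA).image _ (by fun_prop)

lemma exists_mem_connectedComponentIn_lt_infDist {U : Set ℂ} (hU : IsOpen U)
    (hUc : IsPreconnected U) (hne : Uᶜ.Nonempty) {z₀ z : ℂ} (hz₀ : z₀ ∈ U) (hz : z ∈ U) {r : ℝ} :
    ∃ n : ℕ, z ∈ connectedComponentIn {w | r / (n + 1) < infDist w Uᶜ} z₀ := by
  obtain ⟨γ, hγ⟩ := (hU.isConnected_iff_isPathConnected.mp ⟨⟨z₀, hz₀⟩, hUc⟩).joinedIn z₀ hz₀ z hz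
  have hd : Continuous fun w : ℂ => infDist w Uᶜ := continuous_infDist_pt _
  obtain ⟨_, ⟨t, rfl⟩, hmin⟩ := (isCompact_range γ.continuous).exists_isMinOn
    (range_nonempty γ) hd.continuousOn
  have hpos : 0 < infDist (γ t) Uᶜ :=
    (hU.isClosed_compl.notMem_iff_infDist_pos hne).mp fun h => h (hγ t)
  obtain ⟨n, hn⟩ := exists_nat_gt (r / infDist (γ t) Uᶜ)
  refine ⟨n, (isPreconnected_range γ.continuous).subset_connectedComponentIn ⟨0, γ.source⟩
    (fun y hy => ?_) ⟨1, γ.target⟩⟩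
  have hle : infDist (γ t) Uᶜ ≤ infDist y Uᶜ := hmin hy
  refine lt_of_lt_of_le ?_ hle
  rw [div_lt_comm₀ n.cast_add_one_pos hpos]
  exact hn.trans (lt_add_one _)

lemma HasLog.of_isPreconnected_compl_of_isOpen {U : Set ℂ} (hU : IsOpen U)
    (hUc : IsPreconnected U) (hUb : Bornology.IsBounded U) (hcc : IsPreconnected Uᶜ) {F : ℂ → ℂ}
    (hF : ContinuousOn F U) (hF0 : ∀ z ∈ U, F z ≠ 0) : HasLog F U := by
  rcases U.eq_empty_or_nonempty with rfl | ⟨z₀, hz₀⟩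
  · exact .empty
  have hne : Uᶜ.Nonempty := nonempty_iff_ne_empty.mpr fun h =>
    NormedSpace.unbounded_univ ℝ ℂ (compl_empty_iff.mp h ▸ hUb)
  have hd : Continuous fun w : ℂ => infDist w Uᶜ := continuous_infDist_pt _
  have hpos : ∀ z, z ∈ U ↔ 0 < infDist z Uᶜ := fun z => by
    rw [← hU.isClosed_compl.notMem_iff_infDist_pos hne, notMem_compl_iff]
  let r : ℕ → ℝ := fun n => infDist z₀ Uᶜ / 2 / (n + 1)
  have hr : ∀ n, 0 < r n := fun n => div_pos (half_pos ((hpos z₀).mp hz₀)) n.cast_add_one_pos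
  have hrmono : Antitone r := fun m n hmn =>
    div_le_div_of_nonneg_left (half_pos ((hpos z₀).mp hz₀)).le m.cast_add_one_pos (by gcongr)
  have hlog : ∀ n, HasLog F {z | r n ≤ infDist z Uᶜ} := fun n => by
    have hsub : {z | r n ≤ infDist z Uᶜ} ⊆ U := fun z hz => (hpos z).mpr ((hr n).trans_le hz)
    refine .of_isPreconnected_compl (isCompact_of_isClosed_isBounded
      (isClosed_le continuous_const hd) (hUb.subset hsub)) ?_ (hF.mono hsub)
      fun z hz => hF0 z (hsub hz)
    convert isPreconnected_thickening hcc (r n)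
    ext z
    simp only [mem_compl_iff, mem_ofPred_eq, not_le, mem_thickening_iff_infDist_lt hne]
  let V : ℕ → Set ℂ := fun n => connectedComponentIn {z | r n < infDist z Uᶜ} z₀
  have hVmono : Monotone V := fun m n hmn => connectedComponentIn_mono z₀ fun z hz =>
    (hrmono hmn).trans_lt hz
  have hVo : ∀ n, IsOpen (V n) := fun n => (isOpen_lt continuous_const hd).connectedComponentIn
  refine (HasLog.iUnion hVmono hVo (fun n => isPreconnected_connectedComponentIn) (x₀ := z₀)
    (fun n => mem_connectedComponentIn ?_) fun n => (hlog n).mono fun z hz =>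
      (connectedComponentIn_subset {z | r n < infDist z Uᶜ} z₀ hz).out.le).mono fun z hz =>
        mem_iUnion.mpr (exists_mem_connectedComponentIn_lt_infDist hU hUc hne hz₀ hz)
  have := (hpos z₀).mp hz₀
  exact (div_le_self (half_pos this).le (by simp)).trans_lt (half_lt_self this)

end Jordan

section RiemannMapping

variable {U D : Set ℂ} {F f g ψ φ : ℂ → ℂ} {a b w z z₀ : ℂ}

lemma IsLogOn.differentiableOn (hU : IsOpen U) (hF : DifferentiableOn ℂ F U)
    (h : IsLogOn g F U) : DifferentiableOn ℂ g U := by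
  intro z hz
  have hlog : DifferentiableAt ℂ (fun w => g z + log (F w / F z)) z := by
    refine (((hF.differentiableAt (hU.mem_nhds hz)).div_const _).clog ?_).const_add _
    rw [div_self (h.ne_zero hz)]
    exact one_mem_slitPlane
  refine (hlog.congr_of_eventuallyEq ?_).differentiableWithinAt
  have hnear := (h.continuousOn.continuousAt (hU.mem_nhds hz)).eventually (ball_mem_nhds _ one_pos)
  filter_upwards [hU.mem_nhds hz, hnear] with w hw hwz
  have him := abs_lt.mp ((abs_im_le_norm (g w - g z)).trans_lt (mem_ball_iff_norm.mp hwz))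
  rw [← h.exp_eq w hw, ← h.exp_eq z hz, ← exp_sub, log_exp (by linarith [Real.pi_gt_three])
    (by linarith [Real.pi_gt_three]), add_sub_cancel]

/-- The only consequence of simple connectedness used in the proof of the Riemann mapping theorem:
every nowhere vanishing holomorphic function on `U` has a holomorphic square root. -/
def HasHolomorphicSqrt (U : Set ℂ) : Prop :=
  ∀ F : ℂ → ℂ, DifferentiableOn ℂ F U → (∀ z ∈ U, F z ≠ 0) →
    ∃ h : ℂ → ℂ, DifferentiableOn ℂ h U ∧ ∀ z ∈ U, h z ^ 2 = F z

lemma hasHolomorphicSqrt_of_isPreconnected_compl (hU : IsOpen U) (hUc : IsPreconnected U)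
    (hUb : Bornology.IsBounded U) (hcc : IsPreconnected Uᶜ) : HasHolomorphicSqrt U := by
  intro F hF hF0
  obtain ⟨g, hg⟩ := HasLog.of_isPreconnected_compl_of_isOpen hU hUc hUb hcc hF.continuousOn hF0
  refine ⟨fun z => exp (g z / 2), ((hg.differentiableOn hU hF).div_const 2).cexp, fun z hz => ?_⟩
  rw [← exp_nat_mul, Nat.cast_ofNat, mul_div_cancel₀ _ two_ne_zero, hg.exp_eq z hz]

lemma dist_le_of_mapsTo_ball_one (hf : DifferentiableOn ℂ f U) (hm : MapsTo f U (ball 0 1))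
    {R : ℝ} (hR : ball z R ⊆ U) (hw : w ∈ ball z R) : dist (f w) (f z) ≤ 2 / R * dist w z := by
  refine dist_le_div_mul_dist_of_mapsTo_ball (hf.mono hR) (fun x hx => ?_) hw
  have hx := mem_ball_zero_iff.mp (hm (hR hx))
  have hz := mem_ball_zero_iff.mp (hm (hR (mem_ball_self (pos_of_mem_ball hw))))
  rw [mem_closedBall, dist_eq_norm]
  linarith [norm_sub_le (f x) (f z)]

lemma exists_tendstoLocallyUniformlyOn {ι : Type*} (p : Ultrafilter ι) (hU : IsOpen U)
    {f : ι → ℂ → ℂ} (hf : ∀ n, DifferentiableOn ℂ (f n) U) (hm : ∀ n, MapsTo (f n) U (ball 0 1)) :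
    ∃ F : ℂ → ℂ, TendstoLocallyUniformlyOn f F p U := by
  have hlim : ∀ z, ∃ w, z ∈ U → Tendsto (fun n => f n z) p (𝓝 w) := by
    intro z
    by_cases hz : z ∈ U
    · obtain ⟨w, -, hw⟩ := (isCompact_closedBall (0 : ℂ) 1).ultrafilter_le_nhds
        (p.map fun n => f n z) (le_principal_iff.mpr <| mem_map.mpr <| univ_mem' fun n =>
          ball_subset_closedBall (hm n hz))
      exact ⟨w, fun _ => hw⟩
    · exact ⟨0, fun h => absurd h hz⟩
  choose F hF using hlim
  refine ⟨F, Metric.tendstoLocallyUniformlyOn_iff.mpr fun ε hε z hz => ?_⟩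
  obtain ⟨R, hR0, hR⟩ := Metric.isOpen_iff.mp hU z hz
  set ρ := min R (ε * R / 8)
  have hρ : 0 < ρ := lt_min hR0 (by positivity)
  refine ⟨ball z ρ, mem_nhdsWithin_of_mem_nhds (ball_mem_nhds z hρ), ?_⟩
  filter_upwards [Metric.tendsto_nhds.mp (hF z hz) (ε / 4) (by positivity)] with n hn y hy
  have hyR : y ∈ ball z R := ball_subset_ball (min_le_left _ _) hy
  have hequi : ∀ m, dist (f m y) (f m z) ≤ ε / 4 := fun m => calc
    dist (f m y) (f m z) ≤ 2 / R * dist y z := dist_le_of_mapsTo_ball_one (hf m) (hm m) hR hyR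
    _ ≤ 2 / R * (ε * R / 8) := by
      gcongr
      exact (mem_ball.mp hy).le.trans (min_le_right _ _)
    _ = ε / 4 := by field_simp; norm_num
  have hequiF : dist (F y) (F z) ≤ ε / 4 :=
    le_of_tendsto ((hF y (hR hyR)).dist (hF z hz)) (Eventually.of_forall hequi)
  have hy := hequi n
  rw [dist_comm] at hy hn
  linarith [dist_triangle4 (F y) (F z) (f n z) (f n y)]

lemma eventually_ne_of_deriv_ne_zero (hU : IsOpen U) (hUc : IsPreconnected U)
    (hF : DifferentiableOn ℂ F U) (hz₀ : z₀ ∈ U) (hd : deriv F z₀ ≠ 0) (hb : b ∈ U) :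
    ∀ᶠ z in 𝓝[≠] b, F z ≠ F b := by
  have han : AnalyticOnNhd ℂ F U := hF.analyticOnNhd hU
  refine ((han b hb).eventually_eq_or_eventually_ne analyticAt_const).resolve_left fun h => hd ?_
  have hconst : EqOn F (fun _ => F b) U :=
    han.eqOn_of_preconnected_of_eventuallyEq analyticOnNhd_const hUc hb h
  rw [(hconst.eventuallyEq_of_mem (hU.mem_nhds hz₀)).deriv_eq, deriv_const]

lemma frequently_ne_of_injOn (hU : IsOpen U) (hi : InjOn f U) (hz : z ∈ U) :
    ∃ᶠ w in 𝓝 z, f w ≠ f z := by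
  have hev : ∀ᶠ w in 𝓝[≠] z, f w ≠ f z := by
    filter_upwards [self_mem_nhdsWithin, mem_nhdsWithin_of_mem_nhds (hU.mem_nhds hz)]
      with w hne hw h
    exact hne (hi hw hz h)
  exact hev.frequently.filter_mono nhdsWithin_le_nhds

lemma injOn_of_tendstoLocallyUniformlyOn {ι : Type*} {p : Filter ι} [p.NeBot] (hU : IsOpen U)
    {f : ι → ℂ → ℂ} (hf : ∀ n, DifferentiableOn ℂ (f n) U) (hinj : ∀ n, InjOn (f n) U)
    (hF : TendstoLocallyUniformlyOn f F p U) (hne : ∀ b ∈ U, ∀ᶠ z in 𝓝[≠] b, F z ≠ F b) :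
    InjOn F U := by
  intro a ha b hb hab
  by_contra hab'
  have hnear : ∀ᶠ z in 𝓝 b, (z ≠ b → F z ≠ F b) ∧ z ∈ U ∧ z ≠ a :=
    (eventually_nhdsWithin_iff.mp (hne b hb)).and
      ((hU.eventually_mem hb).and (isOpen_ne.eventually_mem (Ne.symm hab')))
  obtain ⟨r, hr, hball⟩ := nhds_basis_closedBall.eventually_iff.mp hnear
  have hrU : closedBall b r ⊆ U := fun z hz => (hball hz).2.1
  have hFc : ContinuousOn F U := hF.continuousOn (.of_forall fun n => (hf n).continuousOn)
  obtain ⟨x, hx, hmin⟩ := (isCompact_sphere b r).exists_isMinOn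
    (NormedSpace.sphere_nonempty.mpr hr.le)
    ((hFc.mono (sphere_subset_closedBall.trans hrU)).sub continuousOn_const).norm
      (f := (‖F · - F b‖))
  set m := ‖F x - F b‖
  have hm : 0 < m := norm_sub_pos_iff.mpr
    ((hball (sphere_subset_closedBall hx)).1 (ne_of_mem_sphere hx hr.ne'))
  have hunif := (tendstoLocallyUniformlyOn_iff_forall_isCompact hU).mp hF _
    (insert_subset ha hrU) ((isCompact_closedBall b r).insert a)
  obtain ⟨n, hn⟩ := (Metric.tendstoUniformlyOn_iff.mp hunif (m / 8) (by positivity)).exists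
  have hnb := hn b (mem_insert_of_mem _ (mem_closedBall_self hr.le))
  have hfa : f n a ∈ ball (f n b) (m / 2 / 2) := by
    have hna := hn a (mem_insert _ _)
    rw [dist_comm, hab] at hna
    rw [mem_ball]
    linarith [dist_triangle (f n a) (F b) (f n b)]
  have hsph : ∀ z ∈ sphere b r, m / 2 ≤ ‖f n z - f n b‖ := by
    intro z hz
    have hz' := hn z (mem_insert_of_mem _ (sphere_subset_closedBall hz))
    have hle : m ≤ ‖F z - F b‖ := hmin hz
    rw [← dist_eq_norm] at hle ⊢
    rw [dist_comm] at hnb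
    linarith [dist_triangle4 (F z) (f n z) (f n b) (F b)]
  have hcl : DiffContOnCl ℂ (f n) (ball b r) :=
    ((hf n).mono (closure_ball_subset_closedBall.trans hrU)).diffContOnCl
  obtain ⟨z, hz, hza⟩ := hcl.ball_subset_image_closedBall hr hsph
    (frequently_ne_of_injOn hU (hinj n) hb) hfa
  exact (hball hz).2.2 (hinj n (hrU hz) ha hza)

lemma continuousOn_invOn (hU : IsOpen U) (hψ : DifferentiableOn ℂ ψ U) (hi : InjOn ψ U)
    (hinv : RightInvOn φ ψ D) (hm : MapsTo φ D U) : ContinuousOn φ D := by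
  intro w hw
  have hopen : 𝓝 (ψ (φ w)) ≤ map ψ (𝓝 (φ w)) :=
    ((hψ.analyticAt (hU.mem_nhds (hm hw))).eventually_constant_or_nhds_le_map_nhds).resolve_left
      fun h => frequently_ne_of_injOn hU hi (hm hw) (h.mono fun z hz => not_not.mpr hz)
  rw [hinv hw] at hopen
  intro V hV
  rw [mem_map]
  filter_upwards [mem_nhdsWithin_of_mem_nhds (hopen (image_mem_map (inter_mem (hU.mem_nhds (hm hw))
    hV))), self_mem_nhdsWithin] with v ⟨z, ⟨hzU, hzV⟩, hzv⟩ hvD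
  rwa [mem_preimage, hi (hm hvD) hzU ((hinv hvD).trans hzv.symm)]

lemma eventually_deriv_ne_zero_of_injOn (hU : IsOpen U) (hψ : DifferentiableOn ℂ ψ U)
    (hi : InjOn ψ U) (hz : z ∈ U) : ∀ᶠ w in 𝓝[≠] z, deriv ψ w ≠ 0 := by
  refine ((hψ.analyticAt (hU.mem_nhds hz)).deriv.eventually_eq_zero_or_eventually_ne_zero
    ).resolve_left fun h => ?_
  obtain ⟨r, hr, hball⟩ := nhds_basis_ball.eventually_iff.mp (h.and (hU.mem_nhds hz))
  refine frequently_ne_of_injOn hU hi hz ?_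
  filter_upwards [ball_mem_nhds z hr] with w hw
  exact not_not.mpr <| isOpen_ball.is_const_of_deriv_eq_zero (convex_ball z r).isPreconnected
    (hψ.mono fun y hy => (hball hy).2) (fun y hy => (hball hy).1) hw (mem_ball_self hr)

lemma differentiableOn_invOn (hU : IsOpen U) (hD : IsOpen D) (hψ : DifferentiableOn ℂ ψ U)
    (hi : InjOn ψ U) (hinv : RightInvOn φ ψ D) (hm : MapsTo φ D U) :
    DifferentiableOn ℂ φ D := by
  have hc := continuousOn_invOn hU hψ hi hinv hm
  have hgood : ∀ w ∈ D, deriv ψ (φ w) ≠ 0 → DifferentiableAt ℂ φ w := fun w hw hd =>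
    (HasDerivAt.of_local_left_inverse (hc.continuousAt (hD.mem_nhds hw))
      (hψ.differentiableAt (hU.mem_nhds (hm hw))).hasDerivAt hd
      (eventually_of_mem (hD.mem_nhds hw) hinv)).differentiableAt
  intro w hw
  have hcw := hc.continuousAt (hD.mem_nhds hw)
  have htend : Tendsto φ (𝓝[≠] w) (𝓝[≠] (φ w)) := by
    refine tendsto_nhdsWithin_of_tendsto_nhds_of_eventually_within _
      (hcw.tendsto.mono_left nhdsWithin_le_nhds) ?_
    filter_upwards [self_mem_nhdsWithin, mem_nhdsWithin_of_mem_nhds (hD.mem_nhds hw)]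
      with v hv hvD h
    exact hv (hinv.injOn hvD hw h)
  refine (analyticAt_of_differentiable_on_punctured_nhds_of_continuousAt ?_
    hcw).differentiableAt.differentiableWithinAt
  filter_upwards [htend.eventually (eventually_deriv_ne_zero_of_injOn hU hψ hi (hm hw)),
    mem_nhdsWithin_of_mem_nhds (hD.mem_nhds hw)] with v hv hvD
  exact hgood v hvD hv

end RiemannMapping

section RiemannMapping

variable {U : Set ℂ} {ψ : ℂ → ℂ} {a w z₀ : ℂ}

/-- The automorphism `w ↦ (w - a) / (1 - conj a * w)` of the unit disk, for `‖a‖ < 1`. -/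
noncomputable def diskAut (a w : ℂ) : ℂ := (w - a) / (1 - (starRingEnd ℂ) a * w)

lemma one_sub_conj_mul_ne_zero (ha : a ∈ ball (0 : ℂ) 1) (hw : w ∈ ball (0 : ℂ) 1) :
    1 - (starRingEnd ℂ) a * w ≠ 0 := by
  rw [mem_ball_zero_iff] at ha hw
  refine sub_ne_zero.mpr fun h => ?_
  have h1 : ‖a‖ * ‖w‖ = 1 := by simpa using (congrArg norm h).symm
  nlinarith [norm_nonneg a, norm_nonneg w]

lemma mapsTo_diskAut (ha : a ∈ ball (0 : ℂ) 1) :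
    MapsTo (diskAut a) (ball 0 1) (ball 0 1) := by
  intro w hw
  have hden := one_sub_conj_mul_ne_zero ha hw
  rw [mem_ball_zero_iff] at ha hw ⊢
  rw [diskAut, norm_div, div_lt_one (norm_pos_iff.mpr hden)]
  have h1 : ‖1 - (starRingEnd ℂ) a * w‖ ^ 2 - ‖w - a‖ ^ 2 = (1 - ‖a‖ ^ 2) * (1 - ‖w‖ ^ 2) := by
    simp only [← normSq_eq_norm_sq, normSq_apply, sub_re, one_re, mul_re, conj_re, conj_im, sub_im,
      one_im, mul_im]
    ring
  have h2 : 0 < (1 - ‖a‖ ^ 2) * (1 - ‖w‖ ^ 2) := by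
    apply mul_pos <;> nlinarith [norm_nonneg a, norm_nonneg w]
  exact lt_of_pow_lt_pow_left₀ 2 (norm_nonneg _) (by linarith)

lemma differentiableOn_diskAut (ha : a ∈ ball (0 : ℂ) 1) :
    DifferentiableOn ℂ (diskAut a) (ball 0 1) :=
  (differentiableOn_id.sub_const a).div ((differentiableOn_id.const_mul _).const_sub 1)
    fun _ hw => one_sub_conj_mul_ne_zero ha hw

lemma neg_mem_ball_zero {r : ℝ} (ha : a ∈ ball (0 : ℂ) r) : -a ∈ ball (0 : ℂ) r := by simpa using ha

lemma diskAut_neg_diskAut (ha : a ∈ ball (0 : ℂ) 1) (hw : w ∈ ball (0 : ℂ) 1) :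
    diskAut (-a) (diskAut a w) = w := by
  have hmul : diskAut a w * (1 - (starRingEnd ℂ) a * w) = w - a :=
    div_mul_cancel₀ _ (one_sub_conj_mul_ne_zero ha hw)
  have hden' := one_sub_conj_mul_ne_zero (neg_mem_ball_zero ha) (mapsTo_diskAut ha hw)
  rw [diskAut, div_eq_iff hden', map_neg]
  linear_combination hmul

lemma injOn_diskAut (ha : a ∈ ball (0 : ℂ) 1) : InjOn (diskAut a) (ball 0 1) :=
  LeftInvOn.injOn fun _ => diskAut_neg_diskAut ha

lemma norm_deriv_lt_one_of_mapsTo_ball {Φ : ℂ → ℂ} (hd : DifferentiableOn ℂ Φ (ball 0 1))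
    (hm : MapsTo Φ (ball 0 1) (ball 0 1)) (h0 : Φ 0 = 0) (hw : w ∈ ball (0 : ℂ) 1) (hw0 : w ≠ 0)
    (hΦw : Φ w = 0) : ‖deriv Φ 0‖ < 1 := by
  have hm' : MapsTo Φ (ball 0 1) (closedBall (Φ 0) 1) := by
    rw [h0]
    exact hm.mono_right ball_subset_closedBall
  refine (norm_deriv_le_one_of_mapsTo_ball hd hm' one_pos).lt_of_ne fun h => ?_
  have haff := affine_of_mapsTo_ball_of_norm_dslope_eq_div hd hm' (mem_ball_self one_pos)
    (by rw [dslope_same, h, div_one]) hw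
  have hmul : w * deriv Φ 0 = 0 := by simpa [h0, hΦw, eq_comm] using haff
  rcases mul_eq_zero.mp hmul with h' | h'
  · exact hw0 h'
  · rw [h', norm_zero] at h
    exact zero_ne_one h

/-- The competitors in the extremal problem of Riemann's theorem: injective holomorphic maps of `U`
into the unit disk that send `z₀` to `0`. -/
structure IsDiskEmbedding (U : Set ℂ) (z₀ : ℂ) (f : ℂ → ℂ) : Prop where
  differentiableOn : DifferentiableOn ℂ f U
  mapsTo : MapsTo f U (ball 0 1)
  injOn : InjOn f U
  map_base : f z₀ = 0

/-- If `b² = diskAut a 0`, this is a holomorphic self-map of the disk which fixes `0` and through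
which `ψ` factors whenever `diskAut a ∘ ψ` has a square root taking the value `b` at the base point.
It is two-to-one, so the Schwarz lemma makes it a strict contraction at `0`. -/
noncomputable def koebeMap (a b w : ℂ) : ℂ := diskAut (-a) (diskAut (-b) w ^ 2)

lemma sq_mem_ball_one_iff : w ^ 2 ∈ ball (0 : ℂ) 1 ↔ w ∈ ball (0 : ℂ) 1 := by
  rw [mem_ball_zero_iff, mem_ball_zero_iff, norm_pow, sq_lt_one_iff₀ (norm_nonneg _)]

lemma mapsTo_koebeMap {b : ℂ} (ha : a ∈ ball (0 : ℂ) 1) (hb : b ∈ ball (0 : ℂ) 1) :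
    MapsTo (koebeMap a b) (ball 0 1) (ball 0 1) := fun _ hw =>
  mapsTo_diskAut (neg_mem_ball_zero ha)
    (sq_mem_ball_one_iff.mpr (mapsTo_diskAut (neg_mem_ball_zero hb) hw))

lemma differentiableOn_koebeMap {b : ℂ} (ha : a ∈ ball (0 : ℂ) 1) (hb : b ∈ ball (0 : ℂ) 1) :
    DifferentiableOn ℂ (koebeMap a b) (ball 0 1) :=
  (differentiableOn_diskAut (neg_mem_ball_zero ha)).comp
    ((differentiableOn_diskAut (neg_mem_ball_zero hb)).pow 2) fun _ hw =>
      sq_mem_ball_one_iff.mpr (mapsTo_diskAut (neg_mem_ball_zero hb) hw)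

lemma norm_deriv_koebeMap_lt_one {b : ℂ} (ha : a ∈ ball (0 : ℂ) 1) (hb : b ∈ ball (0 : ℂ) 1)
    (hb0 : b ≠ 0) (hab : b ^ 2 = -a) : koebeMap a b 0 = 0 ∧ ‖deriv (koebeMap a b) 0‖ < 1 := by
  have hzero : ∀ w, diskAut (-b) w ^ 2 = b ^ 2 → koebeMap a b w = 0 := by
    intro w hw
    rw [koebeMap, hw, hab, diskAut, sub_self, zero_div]
  have h0 : koebeMap a b 0 = 0 := hzero 0 (by simp [diskAut])
  have hmem := neg_mem_ball_zero hb
  have hinv : diskAut (-b) (diskAut b (-b)) = -b := diskAut_neg_diskAut hb hmem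
  refine ⟨h0, norm_deriv_lt_one_of_mapsTo_ball (differentiableOn_koebeMap ha hb)
    (mapsTo_koebeMap ha hb) h0 (mapsTo_diskAut hb hmem) (fun h => hb0 ?_)
    (hzero _ (by rw [hinv, neg_sq]))⟩
  rw [h, diskAut] at hinv
  simpa [self_eq_neg] using hinv

lemma exists_isDiskEmbedding_norm_deriv_lt (hU : IsOpen U) (hS : HasHolomorphicSqrt U)
    (hz₀ : z₀ ∈ U) (hψ : IsDiskEmbedding U z₀ ψ) (hd : deriv ψ z₀ ≠ 0) (ha : a ∈ ball (0 : ℂ) 1)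
    (hna : a ∉ ψ '' U) : ∃ k, IsDiskEmbedding U z₀ k ∧ ‖deriv ψ z₀‖ < ‖deriv k z₀‖ := by
  obtain ⟨h, hhd, hh⟩ := hS (diskAut a ∘ ψ)
    ((differentiableOn_diskAut ha).comp hψ.differentiableOn hψ.mapsTo) fun z hz =>
      div_ne_zero (sub_ne_zero.mpr fun hza => hna ⟨z, hz, hza⟩)
        (one_sub_conj_mul_ne_zero ha (hψ.mapsTo hz))
  have hhm : MapsTo h U (ball 0 1) := fun z hz =>
    sq_mem_ball_one_iff.mp (hh z hz ▸ mapsTo_diskAut ha (hψ.mapsTo hz))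
  set b := h z₀ with hbdef
  have hb : b ∈ ball (0 : ℂ) 1 := hhm hz₀
  have hab : b ^ 2 = -a := by simp [hbdef, hh z₀ hz₀, hψ.map_base, diskAut]
  have hb0 : b ≠ 0 := by
    intro hb0
    refine hna ⟨z₀, hz₀, ?_⟩
    rw [hψ.map_base]
    simpa [hb0, eq_comm] using hab
  have hk : IsDiskEmbedding U z₀ (diskAut b ∘ h) :=
    { differentiableOn := (differentiableOn_diskAut hb).comp hhd hhm
      mapsTo := (mapsTo_diskAut hb).comp hhm
      injOn := (injOn_diskAut hb).comp (fun z hz w hw hzw => hψ.injOn hz hw <|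
        injOn_diskAut ha (hψ.mapsTo hz) (hψ.mapsTo hw) <| by
          rw [← Function.comp_apply (f := diskAut a), ← hh z hz, hzw, hh w hw,
            Function.comp_apply]) hhm
      map_base := by simp [diskAut, hbdef] }
  have hfactor : EqOn ψ (koebeMap a b ∘ (diskAut b ∘ h)) U := by
    intro z hz
    simp only [koebeMap, Function.comp_apply]
    rw [diskAut_neg_diskAut hb (hhm hz), hh z hz, Function.comp_apply,
      diskAut_neg_diskAut ha (hψ.mapsTo hz)]
  refine ⟨_, hk, ?_⟩
  obtain ⟨-, hlt⟩ := norm_deriv_koebeMap_lt_one ha hb hb0 hab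
  have hchain : deriv ψ z₀ = deriv (koebeMap a b) 0 * deriv (diskAut b ∘ h) z₀ := by
    rw [(hfactor.eventuallyEq_of_mem (hU.mem_nhds hz₀)).deriv_eq, deriv_comp _ _
      (hk.differentiableOn.differentiableAt (hU.mem_nhds hz₀)), hk.map_base]
    rw [hk.map_base]
    exact (differentiableOn_koebeMap ha hb).differentiableAt (ball_mem_nhds _ one_pos)
  rw [hchain] at hd ⊢
  rw [norm_mul]
  exact mul_lt_of_lt_one_left (norm_pos_iff.mpr (right_ne_zero_of_mul hd)) hlt

lemma IsDiskEmbedding.of_tendstoLocallyUniformlyOn {ι : Type*} {p : Filter ι} [p.NeBot]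
    (hU : IsOpen U) (hUc : IsPreconnected U) (hz₀ : z₀ ∈ U) {f : ι → ℂ → ℂ}
    (hf : ∀ n, IsDiskEmbedding U z₀ (f n)) (hψ : TendstoLocallyUniformlyOn f ψ p U)
    (hd : deriv ψ z₀ ≠ 0) : IsDiskEmbedding U z₀ ψ := by
  have hψd := hψ.differentiableOn (.of_forall fun n => (hf n).differentiableOn) hU
  have hψ0 : ψ z₀ = 0 := by
    refine tendsto_nhds_unique (hψ.tendsto_at hz₀) ?_
    simp only [(hf _).map_base, tendsto_const_nhds]
  have hle : ∀ z ∈ U, ‖ψ z‖ ≤ 1 := fun z hz => le_of_tendsto (hψ.tendsto_at hz).norm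
    (.of_forall fun n => (mem_ball_zero_iff.mp ((hf n).mapsTo hz)).le)
  refine ⟨hψd, fun z hz => ?_, ?_, hψ0⟩
  · refine mem_ball_zero_iff.mpr ((hle z hz).lt_of_ne fun h1 => ?_)
    have hmax : IsMaxOn (norm ∘ ψ) U z := fun w hw => by simpa [h1] using hle w hw
    simpa [hψ0, h1] using norm_eqOn_of_isPreconnected_of_isMaxOn hUc hU hψd hz hmax hz₀
  · exact injOn_of_tendstoLocallyUniformlyOn hU (fun n => (hf n).differentiableOn)
      (fun n => (hf n).injOn) hψ fun b hb => eventually_ne_of_deriv_ne_zero hU hUc hψd hz₀ hd hb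

lemma exists_isDiskEmbedding (hUb : Bornology.IsBounded U) (z₀ : ℂ) :
    ∃ f, IsDiskEmbedding U z₀ f ∧ deriv f z₀ ≠ 0 := by
  obtain ⟨R, hR0, hR⟩ := hUb.subset_ball_lt 0 z₀
  have hRc : (R : ℂ) ≠ 0 := ofReal_ne_zero.mpr hR0.ne'
  refine ⟨fun z => (z - z₀) / R, ⟨by fun_prop, fun z hz => ?_, fun z _ w _ h => ?_, by simp⟩, ?_⟩
  · rw [mem_ball_zero_iff, norm_div, norm_real, Real.norm_of_nonneg hR0.le, div_lt_one hR0]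
    exact mem_ball_iff_norm.mp (hR hz)
  · exact sub_left_injective ((div_left_inj' hRc).mp h)
  · simp [hRc]

lemma exists_isDiskEmbedding_norm_deriv_max (hU : IsOpen U) (hUc : IsPreconnected U)
    (hUb : Bornology.IsBounded U) (hz₀ : z₀ ∈ U) :
    ∃ ψ, IsDiskEmbedding U z₀ ψ ∧ deriv ψ z₀ ≠ 0 ∧
      ∀ k, IsDiskEmbedding U z₀ k → ‖deriv k z₀‖ ≤ ‖deriv ψ z₀‖ := by
  set S : Set ℝ := (fun f => ‖deriv f z₀‖) '' {f | IsDiskEmbedding U z₀ f}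
  obtain ⟨f₀, hf₀, hf₀d⟩ := exists_isDiskEmbedding hUb z₀
  obtain ⟨ρ, hρ0, hρ⟩ := Metric.isOpen_iff.mp hU z₀ hz₀
  have hSb : BddAbove S := by
    refine ⟨1 / ρ, forall_mem_image.mpr fun f hf => norm_deriv_le_div_of_mapsTo_ball
      (hf.differentiableOn.mono hρ) ?_ hρ0⟩
    rw [hf.map_base]
    exact (hf.mapsTo.mono_left hρ).mono_right ball_subset_closedBall
  obtain ⟨u, -, hu, huS⟩ := exists_seq_tendsto_sSup ⟨_, mem_image_of_mem _ hf₀⟩ hSb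
  choose f hf hfu using huS
  obtain ⟨ψ, hψ⟩ := exists_tendstoLocallyUniformlyOn (hyperfilter ℕ) hU
    (fun n => (hf n).differentiableOn) (fun n => (hf n).mapsTo)
  have hsup : ‖deriv ψ z₀‖ = sSup S := by
    refine tendsto_nhds_unique ((hψ.deriv (.of_forall fun n => (hf n).differentiableOn)
      hU).tendsto_at hz₀).norm ((hu.mono_left Nat.hyperfilter_le_atTop).congr fun n => ?_)
    exact (hfu n).symm
  have hmax : ∀ k, IsDiskEmbedding U z₀ k → ‖deriv k z₀‖ ≤ ‖deriv ψ z₀‖ := fun k hk =>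
    hsup ▸ le_csSup hSb (mem_image_of_mem _ hk)
  have hd : deriv ψ z₀ ≠ 0 := norm_pos_iff.mp ((norm_pos_iff.mpr hf₀d).trans_le (hmax f₀ hf₀))
  exact ⟨ψ, .of_tendstoLocallyUniformlyOn hU hUc hz₀ hf hψ hd, hd, hmax⟩

/-- `ψ` and `φ` are mutually inverse biholomorphic maps between `U` and the unit disk. -/
structure IsRiemannMap (U : Set ℂ) (ψ φ : ℂ → ℂ) : Prop where
  differentiableOn : DifferentiableOn ℂ ψ U
  differentiableOn_inv : DifferentiableOn ℂ φ (ball 0 1)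
  mapsTo : MapsTo ψ U (ball 0 1)
  mapsTo_inv : MapsTo φ (ball 0 1) U
  invOn : InvOn φ ψ U (ball 0 1)

theorem exists_isRiemannMap (hU : IsOpen U) (hUc : IsPreconnected U)
    (hUb : Bornology.IsBounded U) (hS : HasHolomorphicSqrt U) (hz₀ : z₀ ∈ U) :
    ∃ ψ φ, IsRiemannMap U ψ φ ∧ ψ z₀ = 0 := by
  obtain ⟨ψ, hψ, hd, hmax⟩ := exists_isDiskEmbedding_norm_deriv_max hU hUc hUb hz₀
  have hsurj : SurjOn ψ U (ball 0 1) := by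
    intro a ha
    by_contra hna
    obtain ⟨k, hk, hlt⟩ := exists_isDiskEmbedding_norm_deriv_lt hU hS hz₀ hψ hd ha hna
    exact hlt.not_ge (hmax k hk)
  have hinv : InvOn (Function.invFunOn ψ U) ψ U (ball 0 1) :=
    (BijOn.mk hψ.mapsTo hψ.injOn hsurj).invOn_invFunOn
  exact ⟨ψ, _, ⟨hψ.differentiableOn, differentiableOn_invOn hU isOpen_ball hψ.differentiableOn
    hψ.injOn hinv.2 hsurj.mapsTo_invFunOn, hψ.mapsTo, hsurj.mapsTo_invFunOn, hinv⟩, hψ.map_base⟩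

end RiemannMapping

section Rotation

variable {Ω : Set ℂ} {f : ℂ → ℂ} {T : Finset ℂ} {c z ω : ℂ} {M ε ρ : ℝ}

/-- The map `z ↦ c + ω (z - c)`, which is the rotation about `c` by the angle of `ω` when
`‖ω‖ = 1`. -/
def rotateAbout (c ω z : ℂ) : ℂ := c + ω * (z - c)

@[simp] lemma rotateAbout_self : rotateAbout c ω c = c := by simp [rotateAbout]

lemma differentiable_rotateAbout : Differentiable ℂ (rotateAbout c ω) := by
  unfold rotateAbout
  fun_prop

lemma dist_rotateAbout (hω : ‖ω‖ = 1) : dist (rotateAbout c ω z) c = dist z c := by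
  simp [rotateAbout, dist_eq_norm, hω]

lemma exists_finset_rotateAbout_mem {O : Set ℂ} (hO : IsOpen O) {p : ℂ} (hp : p ∈ O)
    (hpc : p ≠ c) :
    ∃ T : Finset ℂ, (∀ ω ∈ T, ‖ω‖ = 1) ∧
      ∀ z ∈ sphere c (dist p c), ∃ ω ∈ T, rotateAbout c ω z ∈ O := by
  classical
  have hpc' : dist p c ≠ 0 := dist_ne_zero.mpr hpc
  obtain ⟨t, ht, hcov⟩ := (isCompact_sphere c (dist p c)).elim_nhds_subcover
    (fun z => rotateAbout c ((p - c) / (z - c)) ⁻¹' O) fun z hz => by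
      refine (hO.preimage differentiable_rotateAbout.continuous).mem_nhds ?_
      have hzc : z - c ≠ 0 := sub_ne_zero.mpr (dist_ne_zero.mp (mem_sphere.mp hz ▸ hpc'))
      simpa [rotateAbout, hzc] using hp
  refine ⟨t.image fun z => (p - c) / (z - c), ?_, fun z hz => ?_⟩
  · simp only [Finset.forall_mem_image]
    intro z hz
    rw [norm_div, ← dist_eq_norm, ← dist_eq_norm, mem_sphere.mp (ht z hz), div_self hpc']
  · obtain ⟨y, hy, hzy⟩ := mem_iUnion₂.mp (hcov hz)
    exact ⟨_, Finset.mem_image_of_mem _ hy, hzy⟩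

/-- The set of points of the disk of radius `ρ` about `c` all of whose rotations about `c` by
elements of `T` lie in `Ω`. -/
def rotatedInter (c : ℂ) (ρ : ℝ) (T : Finset ℂ) (Ω : Set ℂ) : Set ℂ :=
  ball c ρ ∩ ⋂ ω ∈ T, rotateAbout c ω ⁻¹' Ω

lemma isOpen_rotatedInter (hΩ : IsOpen Ω) : IsOpen (rotatedInter c ρ T Ω) :=
  isOpen_ball.inter <| isOpen_biInter_finset fun _ _ =>
    hΩ.preimage differentiable_rotateAbout.continuous

lemma mem_rotatedInter_self (hρ : 0 < ρ) (hc : c ∈ Ω) : c ∈ rotatedInter c ρ T Ω :=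
  ⟨mem_ball_self hρ, mem_iInter₂.mpr fun ω _ => by simpa using hc⟩

lemma mapsTo_rotateAbout_rotatedInter (hω : ω ∈ T) :
    MapsTo (rotateAbout c ω) (rotatedInter c ρ T Ω) Ω :=
  fun _ hz => mem_iInter₂.mp hz.2 ω hω

lemma mapsTo_rotateAbout_closure_rotatedInter (hT : ∀ ω ∈ T, ‖ω‖ = 1) (hω : ω ∈ T) :
    MapsTo (rotateAbout c ω) (closure (rotatedInter c ρ T Ω)) (closure Ω ∩ closedBall c ρ) :=
  fun z hz => ⟨(mapsTo_rotateAbout_rotatedInter hω).closure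
    differentiable_rotateAbout.continuous hz, by
      rw [mem_closedBall, dist_rotateAbout (hT ω hω)]
      exact closure_ball_subset_closedBall (closure_mono inter_subset_left hz)⟩

lemma exists_rotateAbout_mem_frontier (hΩ : IsOpen Ω) (hT : ∀ ω ∈ T, ‖ω‖ = 1)
    (hrot : ∀ z ∈ sphere c ρ, ∃ ω ∈ T, rotateAbout c ω z ∉ closure Ω)
    (hz : z ∈ frontier (rotatedInter c ρ T Ω)) :
    ∃ ω ∈ T, rotateAbout c ω z ∈ frontier Ω ∩ closedBall c ρ := by
  rw [(isOpen_rotatedInter hΩ).frontier_eq] at hz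
  have hmaps : ∀ ω ∈ T, rotateAbout c ω z ∈ closure Ω ∩ closedBall c ρ := fun ω hω =>
    mapsTo_rotateAbout_closure_rotatedInter hT hω hz.1
  have hzc : z ∈ closedBall c ρ :=
    closure_ball_subset_closedBall (closure_mono inter_subset_left hz.1)
  have hzb : z ∈ ball c ρ := lt_of_le_of_ne hzc fun heq => by
    obtain ⟨ω, hω, hno⟩ := hrot z heq
    exact hno (hmaps ω hω).1
  obtain ⟨ω, hω, hno⟩ : ∃ ω ∈ T, rotateAbout c ω z ∉ Ω := by
    by_contra! hcon
    exact hz.2 ⟨hzb, mem_iInter₂.mpr hcon⟩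
  rw [hΩ.frontier_eq]
  exact ⟨ω, hω, ⟨(hmaps ω hω).1, hno⟩, (hmaps ω hω).2⟩

/-- The maximum principle applied to the product of the rotated copies of `f`: on the boundary of
the common domain some factor is at most `ε`. -/
lemma norm_pow_card_le_of_rotateAbout (hΩ : IsOpen Ω) (hc : c ∈ Ω) (hρ : 0 < ρ)
    (hT : ∀ ω ∈ T, ‖ω‖ = 1) (hf : DifferentiableOn ℂ f Ω)
    (hfc : ContinuousOn f (closure Ω ∩ closedBall c ρ))
    (hM : ∀ z ∈ closure Ω ∩ closedBall c ρ, ‖f z‖ ≤ M)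
    (hε : ∀ z ∈ frontier Ω ∩ closedBall c ρ, ‖f z‖ ≤ ε) (hε₀ : 0 ≤ ε)
    (hrot : ∀ z ∈ sphere c ρ, ∃ ω ∈ T, rotateAbout c ω z ∉ closure Ω) :
    ‖f c‖ ^ T.card ≤ ε * M ^ (T.card - 1) := by
  classical
  set g : ℂ → ℂ := fun z => ∏ ω ∈ T, f (rotateAbout c ω z) with hg
  have hmaps := fun ω (hω : ω ∈ T) =>
    mapsTo_rotateAbout_closure_rotatedInter (c := c) (ρ := ρ) (Ω := Ω) hT hω
  have hgd : DiffContOnCl ℂ g (rotatedInter c ρ T Ω) :=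
    ⟨.fun_finsetProd fun ω hω => hf.comp differentiable_rotateAbout.differentiableOn
        (mapsTo_rotateAbout_rotatedInter hω),
      continuousOn_finsetProd _ fun ω hω =>
        hfc.comp differentiable_rotateAbout.continuous.continuousOn (hmaps ω hω)⟩
  have hbound : ∀ z ∈ frontier (rotatedInter c ρ T Ω), ‖g z‖ ≤ ε * M ^ (T.card - 1) := by
    intro z hz
    obtain ⟨ω, hω, hfr⟩ := exists_rotateAbout_mem_frontier hΩ hT hrot hz
    rw [hg, norm_prod, ← Finset.mul_prod_erase T _ hω, ← Finset.card_erase_of_mem hω]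
    refine mul_le_mul (hε _ hfr) ?_ (Finset.prod_nonneg fun _ _ => norm_nonneg _) hε₀
    exact (Finset.prod_le_prod (fun _ _ => norm_nonneg _) fun ω' hω' =>
      hM _ (hmaps ω' (Finset.mem_of_mem_erase hω') (frontier_subset_closure hz))).trans_eq
        (Finset.prod_const M)
  simpa [hg] using norm_le_of_forall_mem_frontier_norm_le (isBounded_ball.subset inter_subset_left)
    hgd hbound (subset_closure (mem_rotatedInter_self hρ hc))

end Rotation

section InscribedAngle

variable {u z ζ ζ₁ ζ₂ x y y₁ y₂ : ℂ} {K S : Set ℂ}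

lemma one_sub_mem_slitPlane (hz : ‖z‖ ≤ 1) (hz1 : z ≠ 1) : 1 - z ∈ slitPlane := by
  by_contra h
  obtain ⟨hre, him⟩ : 1 ≤ z.re ∧ z.im = 0 := by
    simpa [mem_slitPlane_iff, not_or] using h
  have hre' : z.re = 1 := le_antisymm ((re_le_norm z).trans hz) hre
  exact hz1 (Complex.ext (by simpa using hre') (by simpa using him))

/-- The oriented angle at which a point `y` of the unit circle sees the chord between two points
`ζ₁`, `ζ₂` of the circle. -/
noncomputable def inscribedAngle (ζ₁ ζ₂ y : ℂ) : ℝ := arg (1 - ζ₁ / y) - arg (1 - ζ₂ / y)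

lemma one_sub_div_mem_slitPlane (hz : ‖z‖ ≤ 1) (hy : ‖y‖ = 1) (hzy : z ≠ y) :
    1 - z / y ∈ slitPlane := by
  have hy₀ : y ≠ 0 := norm_ne_zero_iff.mp (hy ▸ one_ne_zero)
  exact one_sub_mem_slitPlane (by rwa [norm_div, hy, div_one]) (by rwa [Ne, div_eq_one_iff_eq hy₀])

lemma continuousAt_inscribedAngle (hζ₁ : ‖ζ₁‖ = 1) (hζ₂ : ‖ζ₂‖ = 1) (hx : ‖x‖ = 1)
    (h₁ : ζ₁ ≠ x) (h₂ : ζ₂ ≠ x) : ContinuousAt (inscribedAngle ζ₁ ζ₂) x := by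
  have hx₀ : x ≠ 0 := norm_ne_zero_iff.mp (hx ▸ one_ne_zero)
  have key : ∀ ζ : ℂ, ‖ζ‖ = 1 → ζ ≠ x → ContinuousAt (fun y => arg (1 - ζ / y)) x := fun ζ hζ h =>
    ContinuousAt.comp (f := fun y => 1 - ζ / y)
      (continuousAt_arg (one_sub_div_mem_slitPlane hζ.le hx h)) (by fun_prop (disch := assumption))
  exact (key ζ₁ hζ₁ h₁).sub (key ζ₂ hζ₂ h₂)

lemma inscribedAngle_mul_conj_mul (hu : u.im ≠ 0) (hy : y ≠ 0) :
    inscribedAngle (u * y) (conj u * y) y = 2 * arg (1 - u) := by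
  have hpi : arg (1 - u) ≠ Real.pi := fun h => hu (by simpa using (arg_eq_pi_iff.mp h).2)
  rw [inscribedAngle, mul_div_cancel_right₀ _ hy, mul_div_cancel_right₀ _ hy,
    show 1 - conj u = conj (1 - u) by simp, arg_conj, if_neg hpi]
  ring

lemma mul_ne_self_of_im_ne_zero (hu : u.im ≠ 0) (hy : y ≠ 0) : u * y ≠ y := fun h =>
  hu (by simp [mul_right_cancel₀ hy (h.trans (one_mul y).symm)])

lemma exists_eq_mul_conj_mul (hζ₁ : ‖ζ₁‖ = 1) (hζ₂ : ‖ζ₂‖ = 1) (hne : ζ₁ ≠ ζ₂) :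
    ∃ u y : ℂ, ‖y‖ = 1 ∧ 0 < u.im ∧ ζ₁ = u * y ∧ ζ₂ = conj u * y := by
  obtain ⟨y, hy⟩ := IsAlgClosed.exists_pow_nat_eq (ζ₁ * ζ₂) two_pos
  have hyn : ‖y‖ = 1 := (pow_eq_one_iff_of_nonneg (norm_nonneg y) two_ne_zero).mp (by
    rw [← norm_pow, hy, norm_mul, hζ₁, hζ₂, mul_one])
  have hy₀ : y ≠ 0 := norm_ne_zero_iff.mp (hyn ▸ one_ne_zero)
  have hζ₀ : ζ₁ ≠ 0 := norm_ne_zero_iff.mp (hζ₁ ▸ one_ne_zero)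
  set u := ζ₁ / y with hu
  have h₁ : ζ₁ = u * y := (div_mul_cancel₀ _ hy₀).symm
  have h₂ : ζ₂ = conj u * y := by
    rw [← inv_eq_conj (by rw [hu, norm_div, hζ₁, hyn, div_one]), hu, inv_div, div_mul_eq_mul_div,
      ← pow_two, hy, mul_div_cancel_left₀ _ hζ₀]
  have him : u.im ≠ 0 := fun h => hne (by rw [h₁, h₂, conj_eq_iff_im.mpr h])
  rcases him.lt_or_gt with h | h
  · exact ⟨-u, -y, by rwa [norm_neg], by simpa using h, by rwa [neg_mul_neg],
      by rwa [map_neg, neg_mul_neg]⟩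
  · exact ⟨u, y, hyn, h, h₁, h₂⟩

lemma exists_inscribedAngle_neg (hζ₁ : ‖ζ₁‖ = 1) (hζ₂ : ‖ζ₂‖ = 1) (hne : ζ₁ ≠ ζ₂) :
    ∃ x, ‖x‖ = 1 ∧ ζ₁ ≠ x ∧ ζ₂ ≠ x ∧ inscribedAngle ζ₁ ζ₂ x < 0 := by
  obtain ⟨u, y, hy, hu, rfl, rfl⟩ := exists_eq_mul_conj_mul hζ₁ hζ₂ hne
  have hy₀ : y ≠ 0 := norm_ne_zero_iff.mp (hy ▸ one_ne_zero)
  refine ⟨y, hy, mul_ne_self_of_im_ne_zero hu.ne' hy₀,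
    mul_ne_self_of_im_ne_zero (by simpa using hu.ne') hy₀, ?_⟩
  rw [inscribedAngle_mul_conj_mul hu.ne' hy₀]
  exact mul_neg_of_pos_of_neg two_pos (arg_neg_iff.mpr (by simpa using hu))

lemma exists_inscribedAngle_pos (hζ₁ : ‖ζ₁‖ = 1) (hζ₂ : ‖ζ₂‖ = 1) (hne : ζ₁ ≠ ζ₂) :
    ∃ x, ‖x‖ = 1 ∧ ζ₁ ≠ x ∧ ζ₂ ≠ x ∧ 0 < inscribedAngle ζ₁ ζ₂ x := by
  obtain ⟨x, hx, h₂, h₁, hneg⟩ := exists_inscribedAngle_neg hζ₂ hζ₁ hne.symm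
  refine ⟨x, hx, h₁, h₂, ?_⟩
  rw [inscribedAngle] at hneg ⊢
  linarith

lemma isLogOn_one_sub_div (hK : K ⊆ closedBall 0 1) (hy : ‖y‖ = 1) (hyK : y ∉ K) :
    IsLogOn (fun z => log (1 - z / y)) (fun z => 1 - z / y) K :=
  .clog (by fun_prop) fun z hz => one_sub_div_mem_slitPlane (mem_closedBall_zero_iff.mp (hK hz)) hy
    fun h => hyK (h ▸ hz)

/-- The reflection in the unit circle (with the junk value `0` at `0`). -/
noncomputable def circleReflection (z : ℂ) : ℂ := (conj z)⁻¹

lemma circleReflection_of_norm_eq_one (hz : ‖z‖ = 1) : circleReflection z = z := by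
  rw [circleReflection, ← map_inv₀, inv_eq_conj hz, conj_conj]

lemma continuousOn_circleReflection (hK₀ : 0 ∉ K) : ContinuousOn circleReflection K :=
  ContinuousOn.inv₀ (f := fun z => conj z) continuous_conj.continuousOn
    fun _ hz h => hK₀ ((map_eq_zero _).mp h ▸ hz)

lemma disjoint_image_circleReflection (hKb : K ⊆ closedBall 0 1) (hK₀ : 0 ∉ K)
    (hSb : S ⊆ closedBall 0 1) (hSK : Disjoint S K) : Disjoint S (circleReflection '' K) := by
  refine disjoint_right.mpr ?_
  rintro _ ⟨z, hz, rfl⟩ hjz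
  have hz₁ : ‖z‖ ≤ 1 := mem_closedBall_zero_iff.mp (hKb hz)
  have hz₂ : ‖z‖⁻¹ ≤ 1 := by simpa [circleReflection] using hSb hjz
  have hz₀ : 0 < ‖z‖ := norm_pos_iff.mpr fun h => hK₀ (h ▸ hz)
  rw [circleReflection_of_norm_eq_one (hz₁.antisymm ((inv_le_one₀ hz₀).mp hz₂))] at hjz
  exact disjoint_left.mp hSK hjz hz

lemma circleReflection_sub_div_sub (hz : z ≠ 0) (hy₁ : ‖y₁‖ = 1) (hy₂ : ‖y₂‖ = 1) :
    (circleReflection z - y₁) / (circleReflection z - y₂) =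
      conj ((1 - z / y₁) / (1 - z / y₂)) := by
  have hz' : conj z ≠ 0 := (map_ne_zero _).mpr hz
  have key : ∀ y : ℂ, ‖y‖ = 1 → conj (1 - z / y) = conj z * (circleReflection z - y) := by
    intro y hy
    rw [circleReflection, mul_sub, mul_inv_cancel₀ hz', map_sub, map_one, map_div₀,
      ← inv_eq_conj hy, div_inv_eq_mul]
  rw [map_div₀, key y₁ hy₁, key y₂ hy₂, mul_div_mul_left _ _ hz']

/-- A logarithm of `(z - y₁) / (z - y₂)` on the union of `K` and its mirror image in the circle
restricts to two logarithms on `K`, which up to conjugation differ by a constant. Since `ζ₁` and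
`ζ₂` are fixed by the reflection, its increment between them is real. -/
lemma inscribedAngle_eq_of_isPreconnected (hK : IsCompact K) (hKp : IsPreconnected K)
    (hKb : K ⊆ closedBall 0 1) (hK₀ : 0 ∉ K) (hζ₁ : ‖ζ₁‖ = 1) (hζ₂ : ‖ζ₂‖ = 1) (hK₁ : ζ₁ ∈ K)
    (hK₂ : ζ₂ ∈ K) (hS : IsPreconnected S) (hSb : S ⊆ closedBall 0 1) (hSK : Disjoint S K)
    (hy₁ : ‖y₁‖ = 1) (hy₂ : ‖y₂‖ = 1) (hyS₁ : y₁ ∈ S) (hyS₂ : y₂ ∈ S) :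
    inscribedAngle ζ₁ ζ₂ y₁ = inscribedAngle ζ₁ ζ₂ y₂ := by
  have hy₁₀ : y₁ ≠ 0 := norm_ne_zero_iff.mp (hy₁ ▸ one_ne_zero)
  have hy₂₀ : y₂ ≠ 0 := norm_ne_zero_iff.mp (hy₂ ▸ one_ne_zero)
  have hjc := continuousOn_circleReflection hK₀
  obtain ⟨g, hg⟩ := hasLog_sub_div_sub (hK.union (hK.image_of_continuousOn hjc)).isClosed hS
    (disjoint_union_right.mpr ⟨hSK, disjoint_image_circleReflection hKb hK₀ hSb hSK⟩) hyS₁ hyS₂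
  have hlog := (isLogOn_one_sub_div hKb hy₁ (hSK.notMem_of_mem_left hyS₁)).sub
    (isLogOn_one_sub_div hKb hy₂ (hSK.notMem_of_mem_left hyS₂))
  set l := (fun z => log (1 - z / y₁)) - fun z => log (1 - z / y₂) with hl
  have hin : IsLogOn (l + fun _ => log (y₁ / y₂)) (fun z => (z - y₁) / (z - y₂)) K :=
    (hlog.add (.const (exp_log (div_ne_zero hy₁₀ hy₂₀)))).congr fun z _ => by
      simp only [Pi.mul_apply, Pi.div_apply]
      rw [div_mul_div_comm, one_sub_mul, one_sub_mul, div_mul_cancel₀ _ hy₁₀,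
        div_mul_cancel₀ _ hy₂₀, ← neg_sub z, ← neg_sub z, neg_div_neg_eq]
  have hout : IsLogOn (fun z => conj (l z))
      ((fun z => (z - y₁) / (z - y₂)) ∘ circleReflection) K :=
    ⟨continuous_conj.comp_continuousOn hlog.continuousOn, fun z hz => by
      rw [exp_conj, hlog.exp_eq z hz, Function.comp_apply,
        circleReflection_sub_div_sub (fun h => hK₀ (h ▸ hz)) hy₁ hy₂, Pi.div_apply]⟩
  have e₁ := hin.sub_eq_sub hKp (hg.mono subset_union_left) hK₁ hK₂
  have e₂ := hout.sub_eq_sub hKp (hg.comp hjc fun z hz => .inr (mem_image_of_mem _ hz)) hK₁ hK₂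
  simp only [hl, Function.comp_apply, circleReflection_of_norm_eq_one hζ₁,
    circleReflection_of_norm_eq_one hζ₂, Pi.add_apply, Pi.sub_apply] at e₁ e₂
  have him₁ := congrArg im e₁
  have him₂ := congrArg im e₂
  simp only [add_im, sub_im, conj_im, log_im] at him₁ him₂
  rw [inscribedAngle, inscribedAngle]
  linarith

end InscribedAngle

section Crosscut

variable {f : ℂ → ℂ} {c p x ζ₁ ζ₂ : ℂ} {M τ : ℝ} {Γ K : Set ℂ}

lemma exists_pos_forall_exists_mem_closure (hf : DifferentiableOn ℂ f (ball 0 1))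
    (hM : ∀ z ∈ ball (0 : ℂ) 1, ‖f z‖ ≤ M) (hf₀ : ∀ z ∈ ball (0 : ℂ) 1, f z ≠ 0)
    (hc : ‖c‖ < 1) (hp : 1 < ‖p‖) :
    ∃ ε > 0, ∀ Ω ⊆ ball (0 : ℂ) 1, IsOpen Ω → c ∈ Ω →
      (∀ z ∈ frontier Ω ∩ ball 0 1 ∩ closedBall c (dist p c), ‖f z‖ ≤ ε) →
      ∃ y ∈ closure Ω, ‖y‖ = 1 ∧ dist y c ≤ dist p c := by
  have hpc : p ≠ c := fun h => (h ▸ hc).not_gt hp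
  obtain ⟨T, hT, hrot⟩ := exists_finset_rotateAbout_mem isClosed_closedBall.isOpen_compl
    (by simpa using hp : p ∈ (closedBall (0 : ℂ) 1)ᶜ) hpc
  obtain ⟨ε, hε, hlt⟩ := exists_pos_mul_lt
    (pow_pos (norm_pos_iff.mpr (hf₀ c (mem_ball_zero_iff.mpr hc))) T.card) (M ^ (T.card - 1))
  refine ⟨ε, hε, fun Ω hΩb hΩ hcΩ hfr => ?_⟩
  have hcl : closure Ω ⊆ closedBall 0 1 :=
    closure_minimal (hΩb.trans ball_subset_closedBall) isClosed_closedBall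
  by_contra! hcon
  have hin : closure Ω ∩ closedBall c (dist p c) ⊆ ball 0 1 := fun z hz =>
    mem_ball.mpr ((hcl hz.1).lt_of_ne fun h =>
      (hcon z hz.1 (by rwa [dist_zero_right] at h)).not_ge hz.2)
  have hle := norm_pow_card_le_of_rotateAbout hΩ hcΩ (dist_pos.mpr hpc) hT (hf.mono hΩb)
    (hf.continuousOn.mono hin) (fun z hz => hM z (hin hz))
    (fun z hz => hfr z ⟨⟨hz.1, hin ⟨frontier_subset_closure hz.1, hz.2⟩⟩, hz.2⟩) hε.le
    fun z hz => (hrot z hz).imp fun ω h => ⟨h.1, fun hc => h.2 (hcl hc)⟩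
  rw [mul_comm] at hle
  exact hlt.not_ge hle

lemma exists_pos_forall_exists_mem_closure_dist_le (hf : DifferentiableOn ℂ f (ball 0 1))
    (hM : ∀ z ∈ ball (0 : ℂ) 1, ‖f z‖ ≤ M) (hf₀ : ∀ z ∈ ball (0 : ℂ) 1, f z ≠ 0)
    (hx : ‖x‖ = 1) (hτ : 0 < τ) (hτ₁ : τ < 1) :
    ∃ ε > 0, ∀ Ω ⊆ ball (0 : ℂ) 1, IsOpen Ω → closedBall 0 (1 - τ) ⊆ Ω →
      (∀ z ∈ frontier Ω ∩ ball 0 1 ∩ closedBall x (3 * τ), ‖f z‖ ≤ ε) →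
      ∃ y ∈ closure Ω, ‖y‖ = 1 ∧ dist y x ≤ 3 * τ := by
  have hnorm : ∀ t : ℝ, ‖(t : ℂ) * x‖ = |t| := fun t => by
    rw [norm_mul, hx, mul_one, norm_real, Real.norm_eq_abs]
  have hc : ‖((1 - τ : ℝ) : ℂ) * x‖ = 1 - τ := by rw [hnorm, abs_of_pos (by linarith)]
  have hp : ‖((1 + τ : ℝ) : ℂ) * x‖ = 1 + τ := by rw [hnorm, abs_of_pos (by linarith)]
  have hcx : dist (((1 - τ : ℝ) : ℂ) * x) x = τ := by
    rw [dist_eq_norm, ← sub_one_mul, ← ofReal_one, ← ofReal_sub, hnorm, sub_sub_cancel_left,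
      abs_neg, abs_of_pos hτ]
  have hpc : dist (((1 + τ : ℝ) : ℂ) * x) (((1 - τ : ℝ) : ℂ) * x) = 2 * τ := by
    rw [dist_eq_norm, ← sub_mul, ← ofReal_sub, hnorm, abs_of_pos] <;> linarith
  obtain ⟨ε, hε, h⟩ := exists_pos_forall_exists_mem_closure hf hM hf₀
    (by linarith : ‖((1 - τ : ℝ) : ℂ) * x‖ < 1) (by linarith : 1 < ‖((1 + τ : ℝ) : ℂ) * x‖)
  rw [hpc] at h
  refine ⟨ε, hε, fun Ω hΩb hΩ hcΩ hfr => ?_⟩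
  obtain ⟨y, hy, hy₁, hyc⟩ := h Ω hΩb hΩ (hcΩ (mem_closedBall_zero_iff.mpr hc.le)) fun z hz =>
    hfr z ⟨hz.1, closedBall_subset_closedBall' (by linarith) hz.2⟩
  exact ⟨y, hy, hy₁, (dist_triangle_right y x _).trans (by rw [dist_comm x]; linarith)⟩

lemma exists_isCompact_isPreconnected_superset (hΓ : IsCompact Γ) (hΓp : IsPreconnected Γ)
    (hΓb : Γ ⊆ ball 0 1) (hζ₁ : ‖ζ₁‖ = 1) (hζ₂ : ‖ζ₂‖ = 1) (h₁ : ∃ p ∈ Γ, dist p ζ₁ < τ)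
    (h₂ : ∃ p ∈ Γ, dist p ζ₂ < τ) :
    ∃ K, IsCompact K ∧ IsPreconnected K ∧ K ⊆ closedBall 0 1 ∧ ζ₁ ∈ K ∧ ζ₂ ∈ K ∧
      K ⊆ Γ ∪ (ball ζ₁ τ ∪ ball ζ₂ τ) := by
  obtain ⟨p, hp, hp₁⟩ := h₁
  obtain ⟨q, hq, hq₂⟩ := h₂
  have hcpt : ∀ a b : ℂ, IsCompact (segment ℝ a b) := fun a b => by
    rw [← Path.range_segment a b]
    exact isCompact_range (Path.segment a b).continuous
  have hball : ∀ {a ζ : ℂ}, a ∈ Γ → ‖ζ‖ = 1 → segment ℝ a ζ ⊆ closedBall 0 1 :=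
    fun {a ζ} ha hζ => (convex_closedBall 0 1).segment_subset
      (ball_subset_closedBall (hΓb ha)) (by simp [hζ])
  have hnear : ∀ {a ζ : ℂ}, dist a ζ < τ → segment ℝ a ζ ⊆ ball ζ τ := fun {a ζ} h =>
    (convex_ball ζ τ).segment_subset h (mem_ball_self (dist_nonneg.trans_lt h))
  refine ⟨Γ ∪ segment ℝ p ζ₁ ∪ segment ℝ q ζ₂, (hΓ.union (hcpt _ _)).union (hcpt _ _), ?_,
    union_subset (union_subset (hΓb.trans ball_subset_closedBall) (hball hp hζ₁)) (hball hq hζ₂),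
    .inl (.inr (right_mem_segment ..)), .inr (right_mem_segment ..), ?_⟩
  · exact (hΓp.union p hp (left_mem_segment ..) (convex_segment ..).isPreconnected).union q
      (.inl hq) (left_mem_segment ..) (convex_segment ..).isPreconnected
  · exact union_subset (union_subset subset_union_left fun z hz => .inr (.inl (hnear hp₁ hz)))
      fun z hz => .inr (.inr (hnear hq₂ hz))

lemma frontier_connectedComponentIn_inter_subset {X : Type*} [TopologicalSpace X]
    [LocallyConnectedSpace X] {B K : Set X} (hB : IsOpen B) (hK : IsClosed K) (x : X) :
    frontier (connectedComponentIn (B \ K) x) ∩ B ⊆ K := by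
  rintro z ⟨hz, hzB⟩
  rw [(hB.sdiff hK).connectedComponentIn.frontier_eq] at hz
  by_contra hzK
  exact (closure_connectedComponentIn_subset (hB.sdiff hK) x hz.1).elim hz.2 fun h => h ⟨hzB, hzK⟩

lemma exists_closedBall_subset_of_mem_nhds {x₁ x₂ : ℂ} {U₁ U₂ : Set ℂ} (h₁ : U₁ ∈ 𝓝 x₁)
    (h₂ : U₂ ∈ 𝓝 x₂) :
    ∃ τ > 0, τ < 1 ∧ closedBall x₁ (4 * τ) ⊆ U₁ ∧ closedBall x₂ (4 * τ) ⊆ U₂ := by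
  obtain ⟨r, ⟨⟨h₁, h₂⟩, hr⟩, hr₀⟩ := (((eventually_closedBall_subset h₁).and
    (eventually_closedBall_subset h₂)).and (eventually_lt_nhds four_pos)).filter_mono
      (nhdsWithin_le_nhds (s := Ioi (0 : ℝ))) |>.and eventually_mem_nhdsWithin |>.exists
  have hr₄ : 4 * (r / 4) = r := by ring
  exact ⟨r / 4, div_pos hr₀ four_pos, by linarith, by rwa [hr₄], by rwa [hr₄]⟩

lemma exists_closedBall_inscribedAngle_lt (hζ₁ : ‖ζ₁‖ = 1) (hζ₂ : ‖ζ₂‖ = 1) (hne : ζ₁ ≠ ζ₂) :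
    ∃ x₁ x₂ : ℂ, ‖x₁‖ = 1 ∧ ‖x₂‖ = 1 ∧ ∃ τ > 0, τ < 1 ∧
      (∀ y ∈ closedBall x₁ (4 * τ), inscribedAngle ζ₁ ζ₂ y < 0 ∧ y ≠ ζ₁ ∧ y ≠ ζ₂) ∧
      ∀ y ∈ closedBall x₂ (4 * τ), 0 < inscribedAngle ζ₁ ζ₂ y ∧ y ≠ ζ₁ ∧ y ≠ ζ₂ := by
  obtain ⟨x₁, hx₁, h₁₁, h₁₂, hneg⟩ := exists_inscribedAngle_neg hζ₁ hζ₂ hne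
  obtain ⟨x₂, hx₂, h₂₁, h₂₂, hpos⟩ := exists_inscribedAngle_pos hζ₁ hζ₂ hne
  exact ⟨x₁, x₂, hx₁, hx₂, exists_closedBall_subset_of_mem_nhds
    (((continuousAt_inscribedAngle hζ₁ hζ₂ hx₁ h₁₁ h₁₂).eventually_lt_const hneg).and
      ((eventually_ne_nhds h₁₁.symm).and (eventually_ne_nhds h₁₂.symm)))
    (((continuousAt_inscribedAngle hζ₁ hζ₂ hx₂ h₂₁ h₂₂).eventually_const_lt hpos).and
      ((eventually_ne_nhds h₂₁.symm).and (eventually_ne_nhds h₂₂.symm)))⟩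

lemma inscribedAngle_eq_of_mem_closure {Ω : Set ℂ} {y₁ y₂ : ℂ} (hK : IsCompact K)
    (hKp : IsPreconnected K) (hKb : K ⊆ closedBall 0 1) (hK₀ : 0 ∉ K) (hζ₁ : ‖ζ₁‖ = 1)
    (hζ₂ : ‖ζ₂‖ = 1) (hK₁ : ζ₁ ∈ K) (hK₂ : ζ₂ ∈ K) (hΩ : IsPreconnected Ω)
    (hΩK : Ω ⊆ ball 0 1 \ K) (hy₁ : ‖y₁‖ = 1) (hy₂ : ‖y₂‖ = 1) (hyΩ₁ : y₁ ∈ closure Ω)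
    (hyΩ₂ : y₂ ∈ closure Ω) (hyK₁ : y₁ ∉ K) (hyK₂ : y₂ ∉ K) :
    inscribedAngle ζ₁ ζ₂ y₁ = inscribedAngle ζ₁ ζ₂ y₂ := by
  have hS : IsPreconnected (Ω ∪ {y₁, y₂}) := hΩ.subset_closure subset_union_left
    (union_subset subset_closure (pair_subset hyΩ₁ hyΩ₂))
  refine inscribedAngle_eq_of_isPreconnected hK hKp hKb hK₀ hζ₁ hζ₂ hK₁ hK₂ hS ?_ ?_ hy₁ hy₂
    (by simp) (by simp)
  · exact union_subset (fun z hz => ball_subset_closedBall (hΩK hz).1)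
      (pair_subset (by simp [hy₁]) (by simp [hy₂]))
  · refine disjoint_union_left.mpr ⟨disjoint_left.mpr fun z hz => (hΩK hz).2, disjoint_left.mpr ?_⟩
    rintro z (rfl | rfl)
    exacts [hyK₁, hyK₂]

lemma inter_closedBall_subset_of_subset_union (hKΓ : K ⊆ Γ ∪ (ball ζ₁ τ ∪ ball ζ₂ τ))
    (h₁ : ζ₁ ∉ closedBall x (4 * τ)) (h₂ : ζ₂ ∉ closedBall x (4 * τ)) :
    K ∩ closedBall x (3 * τ) ⊆ Γ := by
  have hfar : ∀ {z ζ : ℂ}, ζ ∉ closedBall x (4 * τ) → z ∈ closedBall x (3 * τ) → z ∉ ball ζ τ := by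
    intro z ζ hζ hz hzζ
    refine hζ ((dist_triangle_left ζ x z).trans ?_)
    linarith [mem_closedBall.mp hz, mem_ball.mp hzζ]
  exact fun z hz => (hKΓ hz.1).resolve_right fun h => h.elim (hfar h₁ hz.2) (hfar h₂ hz.2)

lemma disjoint_closedBall_of_subset_union (hζ₁ : ‖ζ₁‖ = 1) (hζ₂ : ‖ζ₂‖ = 1)
    (hKΓ : K ⊆ Γ ∪ (ball ζ₁ τ ∪ ball ζ₂ τ)) (hΓ : Disjoint (closedBall 0 (1 - τ)) Γ) :
    Disjoint (closedBall 0 (1 - τ)) K := by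
  have hball : ∀ ζ : ℂ, ‖ζ‖ = 1 → Disjoint (closedBall 0 (1 - τ)) (ball ζ τ) := fun ζ hζ =>
    closedBall_disjoint_ball (by simp [hζ])
  exact (hΓ.union_right ((hball ζ₁ hζ₁).union_right (hball ζ₂ hζ₂))).mono_right hKΓ

/-- If `f` were small on `Γ`, the component `Ω` of `0` in the complement of a continuum containing
`Γ` and joining `ζ₁` to `ζ₂` would have points of the circle in its closure on both sides. -/
lemma exists_le_norm_of_crosscut (hf : DifferentiableOn ℂ f (ball 0 1))
    (hM : ∀ z ∈ ball (0 : ℂ) 1, ‖f z‖ ≤ M) (hf₀ : ∀ z ∈ ball (0 : ℂ) 1, f z ≠ 0)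
    (hζ₁ : ‖ζ₁‖ = 1) (hζ₂ : ‖ζ₂‖ = 1) (hne : ζ₁ ≠ ζ₂) :
    ∃ ε > 0, ∃ τ > 0, ∀ Γ ⊆ ball (0 : ℂ) 1, IsCompact Γ → IsPreconnected Γ →
      (∃ p ∈ Γ, dist p ζ₁ < τ) → (∃ p ∈ Γ, dist p ζ₂ < τ) → ∃ z ∈ Γ, ε ≤ ‖f z‖ := by
  obtain ⟨x₁, x₂, hx₁, hx₂, τ, hτ, hτ₁, hneg, hpos⟩ :=
    exists_closedBall_inscribedAngle_lt hζ₁ hζ₂ hne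
  obtain ⟨ε₁, hε₁, H₁⟩ := exists_pos_forall_exists_mem_closure_dist_le hf hM hf₀ hx₁ hτ hτ₁
  obtain ⟨ε₂, hε₂, H₂⟩ := exists_pos_forall_exists_mem_closure_dist_le hf hM hf₀ hx₂ hτ hτ₁
  have hin : closedBall (0 : ℂ) (1 - τ) ⊆ ball 0 1 := closedBall_subset_ball (by linarith)
  obtain ⟨ε₃, hε₃, hmin⟩ := (isCompact_closedBall (0 : ℂ) (1 - τ)).exists_forall_le'
    (hf.continuousOn.mono hin).norm fun z hz => norm_pos_iff.mpr (hf₀ z (hin hz))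
  refine ⟨min (min ε₁ ε₂) ε₃, by positivity, τ, hτ, fun Γ hΓb hΓ hΓp h₁ h₂ => ?_⟩
  by_contra! hlt
  simp only [lt_min_iff] at hlt
  obtain ⟨K, hK, hKp, hKb, hK₁, hK₂, hKΓ⟩ :=
    exists_isCompact_isPreconnected_superset hΓ hΓp hΓb hζ₁ hζ₂ h₁ h₂
  set Ω := connectedComponentIn (ball (0 : ℂ) 1 \ K) 0
  have hΩK : Ω ⊆ ball 0 1 \ K := connectedComponentIn_subset _ _
  have hΩb : Ω ⊆ ball 0 1 := hΩK.trans sdiff_subset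
  have hΩo : IsOpen Ω := (isOpen_ball.sdiff hK.isClosed).connectedComponentIn
  have h₀ : (0 : ℂ) ∈ closedBall 0 (1 - τ) := mem_closedBall_self (by linarith)
  have hcΩ : closedBall 0 (1 - τ) ⊆ Ω :=
    (convex_closedBall 0 (1 - τ)).isPreconnected.subset_connectedComponentIn h₀ <|
      subset_sdiff.mpr ⟨hin, disjoint_closedBall_of_subset_union hζ₁ hζ₂ hKΓ <|
        disjoint_left.mpr fun z hz hzΓ => (hlt z hzΓ).2.not_ge (hmin z hz)⟩
  have hfr : frontier Ω ∩ ball 0 1 ⊆ K :=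
    frontier_connectedComponentIn_inter_subset isOpen_ball hK.isClosed 0
  have hΓ₁ := inter_closedBall_subset_of_subset_union hKΓ (fun h => (hneg _ h).2.1 rfl)
    fun h => (hneg _ h).2.2 rfl
  have hΓ₂ := inter_closedBall_subset_of_subset_union hKΓ (fun h => (hpos _ h).2.1 rfl)
    fun h => (hpos _ h).2.2 rfl
  have hout : ∀ {y : ℂ}, ‖y‖ = 1 → y ∉ Γ := fun hy h => (mem_ball_zero_iff.mp (hΓb h)).ne hy
  obtain ⟨y₁, hyΩ₁, hy₁, hyx₁⟩ := H₁ Ω hΩb hΩo hcΩ fun z hz =>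
    (hlt z (hΓ₁ ⟨hfr hz.1, hz.2⟩)).1.1.le
  obtain ⟨y₂, hyΩ₂, hy₂, hyx₂⟩ := H₂ Ω hΩb hΩo hcΩ fun z hz =>
    (hlt z (hΓ₂ ⟨hfr hz.1, hz.2⟩)).1.2.le
  have heq := inscribedAngle_eq_of_mem_closure hK hKp hKb (hΩK (hcΩ h₀)).2 hζ₁ hζ₂ hK₁ hK₂
    isPreconnected_connectedComponentIn hΩK hy₁ hy₂ hyΩ₁ hyΩ₂
    (fun h => hout hy₁ (hΓ₁ ⟨h, hyx₁⟩)) fun h => hout hy₂ (hΓ₂ ⟨h, hyx₂⟩)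
  have hτ₄ : 3 * τ ≤ 4 * τ := by linarith
  exact ((hneg y₁ (hyx₁.trans hτ₄)).1.trans (hpos y₂ (hyx₂.trans hτ₄)).1).ne heq

end Crosscut

lemma subset_of_disjoint_frontier {X : Type*} [TopologicalSpace X] {U W : Set X}
    (hW : IsPreconnected W) (hd : Disjoint W (frontier U)) (hne : (W ∩ U).Nonempty) : W ⊆ U := by
  have hW' : W ⊆ interior U ∪ (closure U)ᶜ := fun x hx => by
    by_contra! h
    simp only [mem_union, mem_compl_iff, not_or, not_not] at h
    exact disjoint_left.mp hd hx ⟨h.2, h.1⟩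
  obtain ⟨x, hxW, hxU⟩ := hne
  exact (hW.subset_left_of_subset_union isOpen_interior isClosed_closure.isOpen_compl
    (disjoint_compl_right_iff_subset.mpr (interior_subset.trans subset_closure)) hW'
    ⟨x, hxW, (hW' hxW).resolve_right (not_not_intro (subset_closure hxU))⟩).trans interior_subset

section BoundaryExtension

variable {f : Circle → ℂ} {U : Set ℂ} {ψ φ Ψ : ℂ → ℂ} {w ζ ζ₁ ζ₂ : ℂ}

lemma IsRiemannMap.norm_eq_one_of_mapClusterPt (h : IsRiemannMap U ψ φ) (hw : w ∉ U)
    (hζ : MapClusterPt ζ (𝓝[U] w) ψ) : ‖ζ‖ = 1 := by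
  have hle : ‖ζ‖ ≤ 1 := mem_closedBall_zero_iff.mp <| isClosed_closedBall.mem_of_mapClusterPt hζ <|
    eventually_mem_nhdsWithin.mono fun a ha => ball_subset_closedBall (h.mapsTo ha)
  refine hle.antisymm (not_lt.mp fun hlt => hw ?_)
  have hζb : ζ ∈ ball (0 : ℂ) 1 := mem_ball_zero_iff.mpr hlt
  have hφ : ContinuousAt φ ζ :=
    (h.differentiableOn_inv.differentiableAt (isOpen_ball.mem_nhds hζb)).continuousAt
  have hlim : Tendsto (φ ∘ ψ) (𝓝[U] w) (𝓝 w) := (tendsto_id.mono_left nhdsWithin_le_nhds).congr'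
    (eventually_mem_nhdsWithin.mono fun a ha => (h.invOn.1 ha).symm)
  have hcl : ClusterPt (φ ζ) (𝓝 w) := (hζ.continuousAt_comp hφ).clusterPt.mono hlim
  rw [← eq_of_nhds_neBot hcl]
  exact h.mapsTo_inv hζb

/-- Two cluster values of `ψ` at `w` are joined by the `ψ`-images of paths arbitrarily close to
`w`, and along these images `φ - w` is arbitrarily small. -/
lemma IsRiemannMap.eq_of_mapClusterPt (h : IsRiemannMap U ψ φ) (hf : IsEmbedding f)
    (hUo : IsOpen U) (hUc : IsPreconnected U) (hUb : Bornology.IsBounded U)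
    (hfr : frontier U = range f) (hw : w ∈ range f) (h₁ : MapClusterPt ζ₁ (𝓝[U] w) ψ)
    (h₂ : MapClusterPt ζ₂ (𝓝[U] w) ψ) : ζ₁ = ζ₂ := by
  by_contra hne
  have hdU : Disjoint U (range f) := hfr ▸ (disjoint_frontier_iff_isOpen.mpr hUo).symm
  have hwU : w ∉ U := fun hU => disjoint_left.mp hdU hU hw
  obtain ⟨M, hM⟩ := hUb.subset_closedBall w
  obtain ⟨ε, hε, τ, hτ, hcross⟩ := exists_le_norm_of_crosscut (f := fun z => φ z - w) (M := M)
    (h.differentiableOn_inv.sub_const w)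
    (fun z hz => mem_closedBall_iff_norm.mp (hM (h.mapsTo_inv hz)))
    (fun z hz h₀ => hwU (sub_eq_zero.mp h₀ ▸ h.mapsTo_inv hz))
    (h.norm_eq_one_of_mapClusterPt hwU h₁) (h.norm_eq_one_of_mapClusterPt hwU h₂) hne
  obtain ⟨δ, hδ, -, hjoin⟩ := exists_isPreconnected_subset_ball hf hUc hdU hw hε
  have hnear : ∀ ζ, MapClusterPt ζ (𝓝[U] w) ψ → ∃ a ∈ U ∩ ball w δ, dist (ψ a) ζ < τ := by
    intro ζ hζ
    obtain ⟨a, ha, haU⟩ := ((mapClusterPt_iff_frequently.mp hζ _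
      (ball_mem_nhds ζ hτ)).and_eventually
      (inter_mem self_mem_nhdsWithin (mem_nhdsWithin_of_mem_nhds (ball_mem_nhds w hδ)))).exists
    exact ⟨a, haU, ha⟩
  obtain ⟨a, ha, haζ⟩ := hnear ζ₁ h₁
  obtain ⟨b, hb, hbζ⟩ := hnear ζ₂ h₂
  obtain ⟨W, hWε, hWo, hWp, hWf, haW, hbW⟩ := hjoin a ha b hb
  have hWU : W ⊆ U := subset_of_disjoint_frontier hWp
    (hfr ▸ disjoint_compl_left.mono_left hWf) ⟨a, haW, ha.1⟩
  obtain ⟨γ, hγ⟩ := (hWo.isConnected_iff_isPathConnected.mp ⟨⟨a, haW⟩, hWp⟩).joinedIn a haW b hbW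
  have hγW : range γ ⊆ W := range_subset_iff.mpr hγ
  have hψγ : ContinuousOn ψ (range γ) := h.differentiableOn.continuousOn.mono (hγW.trans hWU)
  obtain ⟨_, ⟨x, hx, rfl⟩, hxε⟩ := hcross (ψ '' range γ)
    (image_subset_iff.mpr fun x hx => h.mapsTo (hWU (hγW hx)))
    ((isCompact_range γ.continuous).image_of_continuousOn hψγ)
    ((isPreconnected_range γ.continuous).image ψ hψγ)
    ⟨ψ a, mem_image_of_mem ψ ⟨0, γ.source⟩, haζ⟩ ⟨ψ b, mem_image_of_mem ψ ⟨1, γ.target⟩, hbζ⟩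
  simp only [h.invOn.1 (hWU (hγW hx))] at hxε
  exact hxε.not_gt (mem_ball_iff_norm.mp (hWε (hγW hx)))

lemma IsRiemannMap.exists_continuousOn_closure (h : IsRiemannMap U ψ φ) (hf : IsEmbedding f)
    (hUo : IsOpen U) (hUc : IsPreconnected U) (hUb : Bornology.IsBounded U)
    (hfr : frontier U = range f) : ∃ Ψ : ℂ → ℂ, ContinuousOn Ψ (closure U) ∧ EqOn Ψ ψ U := by
  refine ⟨extendFrom U ψ, continuousOn_extendFrom Subset.rfl fun w hw => ?_,
    extendFrom_extends h.differentiableOn.continuousOn⟩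
  by_cases hwU : w ∈ U
  · exact ⟨ψ w, h.differentiableOn.continuousOn w hwU⟩
  have hwf : w ∈ range f := hfr ▸ hUo.frontier_eq ▸ ⟨hw, hwU⟩
  have := mem_closure_iff_nhdsWithin_neBot.mp hw
  have hψ : closedBall 0 1 ∈ map ψ (𝓝[U] w) :=
    mem_map.mpr <| mem_of_superset self_mem_nhdsWithin fun a ha =>
      ball_subset_closedBall (h.mapsTo ha)
  obtain ⟨ζ, -, hζ⟩ := (isCompact_closedBall (0 : ℂ) 1) (le_principal_iff.mpr hψ)
  exact ⟨ζ, (isCompact_closedBall (0 : ℂ) 1).le_nhds_of_unique_clusterPt hψ fun ζ' _ hζ' =>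
    h.eq_of_mapClusterPt hf hUo hUc hUb hfr hwf hζ' hζ⟩

lemma IsRiemannMap.norm_eq_one_of_mem_frontier (h : IsRiemannMap U ψ φ) (hUo : IsOpen U)
    (hΨ : ContinuousOn Ψ (closure U)) (he : EqOn Ψ ψ U) (hw : w ∈ frontier U) : ‖Ψ w‖ = 1 := by
  have := mem_closure_iff_nhdsWithin_neBot.mp (frontier_subset_closure hw)
  have hlim : Tendsto ψ (𝓝[U] w) (𝓝 (Ψ w)) :=
    ((hΨ w (frontier_subset_closure hw)).mono subset_closure).congr' he.eventuallyEq_nhdsWithin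
  exact h.norm_eq_one_of_mapClusterPt (hUo.frontier_eq ▸ hw).2 hlim.mapClusterPt

lemma isPreconnected_iInter_of_antitone {X : Type*} [TopologicalSpace X] [T2Space X] {K : ℕ → Set X}
    (hK : Antitone K) (hc : ∀ n, IsCompact (K n)) (hp : ∀ n, IsPreconnected (K n)) :
    IsPreconnected (⋂ n, K n) := by
  have hI : IsCompact (⋂ n, K n) :=
    (hc 0).of_isClosed_subset (isClosed_iInter fun n => (hc n).isClosed) (iInter_subset _ 0)
  rw [isPreconnected_closed_iff]
  rintro A B hA hB hAB ⟨x, hxI, hxA⟩ ⟨y, hyI, hyB⟩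
  by_contra hcon
  have hdis : Disjoint ((⋂ n, K n) ∩ A) ((⋂ n, K n) ∩ B) :=
    disjoint_left.mpr fun z hzA hzB => hcon ⟨z, hzA.1, hzA.2, hzB.2⟩
  obtain ⟨V, W, hV, hW, hAV, hBW, hVW⟩ :=
    SeparatedNhds.of_isCompact_isCompact (hI.inter_right hA) (hI.inter_right hB) hdis
  have hsub : (⋂ n, K n) ⊆ V ∪ W := fun z hz =>
    (hAB hz).imp (fun h => hAV ⟨hz, h⟩) (fun h => hBW ⟨hz, h⟩)
  obtain ⟨n, hn⟩ := exists_subset_nhds_of_isCompact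
    (directed_of_isDirected_le fun _ _ h => hK h) hc fun z hz => (hV.union hW).mem_nhds (hsub hz)
  obtain ⟨z, -, hzV, hzW⟩ := hp n V W hV hW hn ⟨x, mem_iInter.mp hxI n, hAV ⟨hxI, hxA⟩⟩
    ⟨y, mem_iInter.mp hyI n, hBW ⟨hyI, hyB⟩⟩
  exact disjoint_left.mp hVW hzV hzW

lemma IsRiemannMap.fiber_eq_iInter (h : IsRiemannMap U ψ φ)
    (hΨ : ContinuousOn Ψ (closure U)) (he : EqOn Ψ ψ U) (ζ : ℂ) :
    {w ∈ closure U | Ψ w = ζ} =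
      ⋂ n : ℕ, closure (φ '' (ball 0 1 ∩ ball ζ (1 / ((n : ℝ) + 1)))) := by
  have hsub : ∀ r, φ '' (ball 0 1 ∩ ball ζ r) ⊆ U := fun r =>
    image_subset_iff.mpr fun z hz => h.mapsTo_inv hz.1
  ext w
  rw [mem_iInter]
  refine ⟨fun ⟨hw, hwζ⟩ n => ?_, fun hw => ⟨closure_mono (hsub _) (hw 0), ?_⟩⟩
  · have := mem_closure_iff_nhdsWithin_neBot.mp hw
    have hlim : Tendsto Ψ (𝓝[U] w) (𝓝 ζ) := hwζ ▸ (hΨ w hw).mono subset_closure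
    refine mem_closure_of_tendsto (tendsto_id.mono_left (nhdsWithin_le_nhds (s := U))) ?_
    filter_upwards [self_mem_nhdsWithin, hlim.eventually_mem
      (ball_mem_nhds ζ (Nat.one_div_pos_of_nat (α := ℝ) (n := n)))] with a ha haζ
    exact ⟨ψ a, ⟨h.mapsTo ha, he ha ▸ haζ⟩, h.invOn.1 ha⟩
  · refine dist_le_zero.mp (ge_of_tendsto' tendsto_one_div_add_atTop_nhds_zero_nat fun n => ?_)
    refine mem_closedBall.mp (closure_ball_subset_closedBall ?_)
    refine ((hΨ w (closure_mono (hsub _) (hw n))).mono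
      ((hsub _).trans subset_closure)).mem_closure (hw n) ?_
    rintro _ ⟨z, hz, rfl⟩
    rw [he (h.mapsTo_inv hz.1), h.invOn.2 hz.1]
    exact hz.2

lemma IsRiemannMap.isPreconnected_fiber (h : IsRiemannMap U ψ φ) (hUb : Bornology.IsBounded U)
    (hΨ : ContinuousOn Ψ (closure U)) (he : EqOn Ψ ψ U) (ζ : ℂ) :
    IsPreconnected {w ∈ closure U | Ψ w = ζ} := by
  rw [h.fiber_eq_iInter hΨ he ζ]
  refine isPreconnected_iInter_of_antitone (fun m n hmn => ?_) (fun n => ?_) fun n => ?_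
  · exact closure_mono (image_mono
      (inter_subset_inter_right _ (ball_subset_ball (Nat.one_div_le_one_div hmn))))
  · exact (hUb.subset (image_subset_iff.mpr fun z hz => h.mapsTo_inv hz.1)).isCompact_closure
  · exact (((convex_ball _ _).inter (convex_ball _ _)).isPreconnected.image φ
      (h.differentiableOn_inv.continuousOn.mono inter_subset_left)).closure

end BoundaryExtension

lemma nonempty_interior_of_exp_pi_notMem {Q : Set Circle} (hQ : IsPreconnected Q)
    (hQ₂ : Q.Nontrivial) (hπ : Circle.exp Real.pi ∉ Q) : (interior Q).Nonempty := by
  let θ : Circle → ℝ := fun z => arg z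
  have hθ : ContinuousOn θ Q := fun z hz => by
    have hz' : (z : ℂ) ∈ slitPlane := mem_slitPlane_iff_arg.mpr
      ⟨fun harg => hπ (harg ▸ (Circle.exp_arg z).symm ▸ hz), z.coe_ne_zero⟩
    exact ((continuousAt_arg hz').comp (f := fun z : Circle => (z : ℂ))
      continuous_subtype_val.continuousAt).continuousWithinAt
  obtain ⟨s, hs, t, ht, hst⟩ := (hQ₂.image Circle.injective_arg).exists_lt
  have hsub : Circle.exp '' Ioo s t ⊆ Q := by
    rintro _ ⟨x, hx, rfl⟩
    obtain ⟨z, hz, rfl⟩ := (hQ.image θ hθ).ordConnected.out hs ht (Ioo_subset_Icc_self hx)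
    rwa [Circle.exp_arg]
  exact ((nonempty_Ioo.mpr hst).image _).mono <|
    interior_maximal hsub (isLocalHomeomorph_circleExp.isOpenMap _ isOpen_Ioo)

lemma nonempty_interior_of_isPreconnected_circle {Q : Set Circle} (hQ : IsPreconnected Q)
    (hQ₂ : Q.Nontrivial) : (interior Q).Nonempty := by
  rcases eq_or_ne Q univ with rfl | hne
  · rw [interior_univ]
    exact univ_nonempty
  obtain ⟨q, hq⟩ := (ne_univ_iff_exists_notMem Q).mp hne
  let R := Homeomorph.mulRight (q⁻¹ * Circle.exp Real.pi)
  have hπ : Circle.exp Real.pi ∉ R '' Q := by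
    rintro ⟨z, hz, hzπ⟩
    have hzq : z = q := mul_inv_eq_one.mp (mul_eq_right.mp ((mul_assoc _ _ _).trans hzπ))
    exact hq (hzq ▸ hz)
  have := nonempty_interior_of_exp_pi_notMem (hQ.image R R.continuous.continuousOn)
    (hQ₂.image R.injective) hπ
  rwa [← R.image_interior, image_nonempty] at this

section CaratheodoryInjectivity

variable {f : Circle → ℂ} {U : Set ℂ} {ψ φ Ψ : ℂ → ℂ} {w ζ : ℂ} {r : ℝ}

lemma IsRiemannMap.norm_extension_le_one (h : IsRiemannMap U ψ φ) (hUo : IsOpen U)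
    (hΨ : ContinuousOn Ψ (closure U)) (he : EqOn Ψ ψ U) (hw : w ∈ closure U) : ‖Ψ w‖ ≤ 1 := by
  rw [closure_eq_self_union_frontier] at hw
  rcases hw with hw | hw
  · exact he hw ▸ (mem_ball_zero_iff.mp (h.mapsTo hw)).le
  · exact (h.norm_eq_one_of_mem_frontier hUo hΨ he hw).le

/-- Otherwise `Ψ - ζ` would vanish on the frontier near `w`, hence, by the rotation estimate, also
at points of `U` near `w`. -/
lemma IsRiemannMap.exists_mem_frontier_ne (h : IsRiemannMap U ψ φ) (hUo : IsOpen U)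
    (hΨ : ContinuousOn Ψ (closure U)) (he : EqOn Ψ ψ U) (hζ : ‖ζ‖ = 1) (hw : w ∈ closure U)
    (hwe : w ∈ closure (closure U)ᶜ) (hr : 0 < r) : ∃ w' ∈ frontier U ∩ ball w r, Ψ w' ≠ ζ := by
  by_contra! hconst
  obtain ⟨z, hz, hzw⟩ := Metric.mem_closure_iff.mp hw (r / 4) (by positivity)
  obtain ⟨e, heU, hew⟩ := Metric.mem_closure_iff.mp hwe (r / 4) (by positivity)
  have hez : e ≠ z := fun hez => heU (hez ▸ subset_closure hz)
  have hball : closedBall z (dist e z) ⊆ ball w r := closedBall_subset_ball' <| by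
    linarith [dist_triangle_right e z w, dist_comm z w, dist_comm e w]
  obtain ⟨T, hT, hrot⟩ :=
    exists_finset_rotateAbout_mem isClosed_closure.isOpen_compl heU hez
  have hbound := norm_pow_card_le_of_rotateAbout (f := fun z => Ψ z - ζ) (M := 2) (ε := 0) hUo hz
    (dist_pos.mpr hez) hT ((h.differentiableOn.congr he).sub_const ζ)
    ((hΨ.mono inter_subset_left).sub continuousOn_const)
    (fun x hx => (norm_sub_le _ _).trans <| by
      linarith [h.norm_extension_le_one hUo hΨ he hx.1])
    (fun x hx => (norm_eq_zero.mpr (sub_eq_zero.mpr (hconst x ⟨hx.1, hball hx.2⟩))).le) le_rfl hrot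
  rw [zero_mul] at hbound
  have hzζ : Ψ z = ζ := sub_eq_zero.mp <| norm_eq_zero.mp <|
    eq_zero_of_pow_eq_zero (hbound.antisymm (by positivity))
  have hlt := mem_ball_zero_iff.mp (h.mapsTo hz)
  rw [← he hz, hzζ, hζ] at hlt
  exact lt_irrefl 1 hlt

/-- A fibre of `Ψ` containing two boundary points is a connected subset of the curve, and so
contains an arc. -/
lemma IsRiemannMap.injOn_frontier (h : IsRiemannMap U ψ φ) (hf : IsEmbedding f) (hUo : IsOpen U)
    (hUb : Bornology.IsBounded U) (hfr : frontier U = range f)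
    (hext : range f ⊆ closure (closure U)ᶜ) (hΨ : ContinuousOn Ψ (closure U)) (he : EqOn Ψ ψ U) :
    InjOn Ψ (frontier U) := by
  rw [hfr]
  rintro _ ⟨x₁, rfl⟩ _ ⟨x₂, rfl⟩ heq
  by_contra hne
  have hcl : ∀ x, f x ∈ closure U := fun x => frontier_subset_closure (hfr ▸ mem_range_self x)
  have hnorm : ∀ x, ‖Ψ (f x)‖ = 1 := fun x =>
    h.norm_eq_one_of_mem_frontier hUo hΨ he (hfr ▸ mem_range_self x)
  let P := {w ∈ closure U | Ψ w = Ψ (f x₁)}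
  have hPf : P ⊆ range f := fun w hw => by
    rw [← hfr, hUo.frontier_eq]
    refine ⟨hw.1, fun hwU => (mem_ball_zero_iff.mp (h.mapsTo hwU)).ne ?_⟩
    rw [← he hwU, hw.2, hnorm]
  have hQ : IsPreconnected (f ⁻¹' P) := (h.isPreconnected_fiber hUb hΨ he _).preimage_of_isClosedMap
    hf.injective hf.continuous.isClosedMap hPf
  obtain ⟨x, hx⟩ := nonempty_interior_of_isPreconnected_circle hQ
    ⟨x₁, ⟨hcl x₁, rfl⟩, x₂, ⟨hcl x₂, heq.symm⟩, fun hx => hne (congrArg f hx)⟩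
  rw [mem_interior_iff_mem_nhds, hf.nhds_eq_comap, mem_comap] at hx
  obtain ⟨t, ht, hsub⟩ := hx
  obtain ⟨r, hr, hball⟩ := Metric.mem_nhds_iff.mp ht
  obtain ⟨_, ⟨hw, hwr⟩, hwne⟩ := h.exists_mem_frontier_ne hUo hΨ he (hnorm x₁) (hcl x)
    (hext (mem_range_self x)) hr
  obtain ⟨y, rfl⟩ := hfr ▸ hw
  exact hwne (hsub (hball hwr)).2

lemma IsRiemannMap.injOn_closure (h : IsRiemannMap U ψ φ) (hUo : IsOpen U)
    (hΨ : ContinuousOn Ψ (closure U)) (he : EqOn Ψ ψ U) (hinj : InjOn Ψ (frontier U)) :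
    InjOn Ψ (closure U) := by
  have hne : ∀ x ∈ U, ∀ y ∈ frontier U, Ψ x ≠ Ψ y := fun x hx y hy hxy => by
    refine (mem_ball_zero_iff.mp (h.mapsTo hx)).ne ?_
    rw [← he hx, hxy, h.norm_eq_one_of_mem_frontier hUo hΨ he hy]
  rw [closure_eq_self_union_frontier, injOn_union (disjoint_frontier_iff_isOpen.mpr hUo).symm]
  exact ⟨he.injOn_iff.mpr h.invOn.1.injOn, hinj, hne⟩

end CaratheodoryInjectivity

section HomeoOn

variable {X Y Z : Type*} [TopologicalSpace X] [TopologicalSpace Y] [TopologicalSpace Z]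
  {f f₁ f₂ : X → Y} {g g₁ g₂ : Y → X} {A A₁ A₂ : Set X} {B B₁ B₂ : Set Y}

/-- The maps `f` and `g` restrict to mutually inverse homeomorphisms between the subspaces `A` and
`B`; their values elsewhere are irrelevant. -/
structure IsHomeoOn (f : X → Y) (g : Y → X) (A : Set X) (B : Set Y) : Prop where
  continuousOn : ContinuousOn f A
  continuousOn_inv : ContinuousOn g B
  mapsTo : MapsTo f A B
  mapsTo_inv : MapsTo g B A
  invOn : InvOn g f A B

lemma IsHomeoOn.symm (h : IsHomeoOn f g A B) : IsHomeoOn g f B A :=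
  ⟨h.continuousOn_inv, h.continuousOn, h.mapsTo_inv, h.mapsTo, h.invOn.symm⟩

lemma IsHomeoOn.trans {f' : Y → Z} {g' : Z → Y} {C : Set Z} (h : IsHomeoOn f g A B)
    (h' : IsHomeoOn f' g' B C) : IsHomeoOn (f' ∘ f) (g ∘ g') A C :=
  ⟨h'.continuousOn.comp h.continuousOn h.mapsTo,
    h.continuousOn_inv.comp h'.continuousOn_inv h'.mapsTo_inv, h'.mapsTo.comp h.mapsTo,
    h.mapsTo_inv.comp h'.mapsTo_inv, h.invOn.comp h'.invOn h.mapsTo h'.mapsTo_inv⟩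

lemma IsHomeoOn.mono (h : IsHomeoOn f g A B) (hA : A₁ ⊆ A) (hB : B₁ ⊆ B) (hf : MapsTo f A₁ B₁)
    (hg : MapsTo g B₁ A₁) : IsHomeoOn f g A₁ B₁ :=
  ⟨h.continuousOn.mono hA, h.continuousOn_inv.mono hB, hf, hg, h.invOn.mono hA hB⟩

lemma IsHomeoOn.sdiff (h : IsHomeoOn f g A B) (h₁ : IsHomeoOn f g A₁ B₁) :
    IsHomeoOn f g (A \ A₁) (B \ B₁) :=
  h.mono sdiff_subset sdiff_subset
    (fun _ hx => ⟨h.mapsTo hx.1, fun hB₁ => hx.2 (h.invOn.1 hx.1 ▸ h₁.mapsTo_inv hB₁)⟩)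
    fun _ hy => ⟨h.mapsTo_inv hy.1, fun hA₁ => hy.2 (h.invOn.2 hy.1 ▸ h₁.mapsTo hA₁)⟩

lemma exists_isHomeoOn_of_isCompact [T2Space Y] [Nonempty X] (hA : IsCompact A)
    (hf : ContinuousOn f A) (hb : BijOn f A B) : ∃ g, IsHomeoOn f g A B := by
  have hmaps : MapsTo (Function.invFunOn f A) B A := hb.surjOn.mapsTo_invFunOn
  have hinv := hb.invOn_invFunOn
  refine ⟨Function.invFunOn f A, hf, continuousOn_iff_isClosed.mpr fun t ht =>
    ⟨f '' (A ∩ t), ?_, ?_⟩, hb.mapsTo, hmaps, hinv⟩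
  · exact ((hA.inter_right ht).image_of_continuousOn (hf.mono inter_subset_left)).isClosed
  · refine Subset.antisymm (fun y hy => ⟨⟨_, ⟨hmaps hy.2, hy.1⟩, hinv.2 hy.2⟩, hy.2⟩) ?_
    rintro _ ⟨⟨x, hx, rfl⟩, hy⟩
    exact ⟨mem_preimage.mpr ((hinv.1 hx.1).symm ▸ hx.2), hy⟩

lemma exists_continuous_eqOn_of_union (hA₁ : IsClosed A₁) (hA₂ : IsClosed A₂)
    (hA : A₁ ∪ A₂ = univ) (hf₁ : ContinuousOn f₁ A₁) (hf₂ : ContinuousOn f₂ A₂)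
    (hf : EqOn f₁ f₂ (A₁ ∩ A₂)) : ∃ F : X → Y, Continuous F ∧ EqOn F f₁ A₁ ∧ EqOn F f₂ A₂ := by
  classical
  have hF₁ : EqOn (A₁.piecewise f₁ f₂) f₁ A₁ := A₁.piecewise_eqOn f₁ f₂
  have hF₂ : EqOn (A₁.piecewise f₁ f₂) f₂ A₂ := fun x hx => by
    by_cases hx₁ : x ∈ A₁
    · rw [hF₁ hx₁, hf ⟨hx₁, hx⟩]
    · exact A₁.piecewise_eq_of_notMem f₁ f₂ hx₁
  refine ⟨A₁.piecewise f₁ f₂, ?_, hF₁, hF₂⟩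
  rw [← continuousOn_univ, ← hA]
  exact (hf₁.congr hF₁).union_of_isClosed (hf₂.congr hF₂) hA₁ hA₂

lemma IsHomeoOn.exists_homeomorph (h₁ : IsHomeoOn f₁ g₁ A₁ B₁) (h₂ : IsHomeoOn f₂ g₂ A₂ B₂)
    (hA₁ : IsClosed A₁) (hA₂ : IsClosed A₂) (hB₁ : IsClosed B₁) (hB₂ : IsClosed B₂)
    (hA : A₁ ∪ A₂ = univ) (hB : B₁ ∪ B₂ = univ) (hf : EqOn f₁ f₂ (A₁ ∩ A₂))
    (hg : EqOn g₁ g₂ (B₁ ∩ B₂)) : ∃ H : X ≃ₜ Y, EqOn H f₁ A₁ := by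
  obtain ⟨F, hF, hF₁, hF₂⟩ :=
    exists_continuous_eqOn_of_union hA₁ hA₂ hA h₁.continuousOn h₂.continuousOn hf
  obtain ⟨G, hG, hG₁, hG₂⟩ :=
    exists_continuous_eqOn_of_union hB₁ hB₂ hB h₁.continuousOn_inv h₂.continuousOn_inv hg
  refine ⟨⟨⟨F, G, fun x => ?_, fun y => ?_⟩, hF, hG⟩, hF₁⟩
  · rcases hA ▸ mem_univ x with hx | hx
    · rw [hF₁ hx, hG₁ (h₁.mapsTo hx), h₁.invOn.1 hx]
    · rw [hF₂ hx, hG₂ (h₂.mapsTo hx), h₂.invOn.1 hx]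
  · rcases hB ▸ mem_univ y with hy | hy
    · rw [hG₁ hy, hF₁ (h₁.mapsTo_inv hy), h₁.invOn.2 hy]
    · rw [hG₂ hy, hF₂ (h₂.mapsTo_inv hy), h₂.invOn.2 hy]

end HomeoOn

/-- The extension of a self-map `g` of the unit circle to the plane that is linear on every ray from
the origin. -/
noncomputable def radialExtension (g : ℂ → ℂ) (z : ℂ) : ℂ :=
  ‖z‖ * g (z / ‖z‖)

section RadialExtension

variable {g h : ℂ → ℂ} {z : ℂ}

lemma div_norm_mem_sphere (hz : z ≠ 0) : z / ‖z‖ ∈ sphere (0 : ℂ) 1 := by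
  rw [mem_sphere_zero_iff_norm, norm_div, norm_real, norm_norm, div_self (norm_ne_zero_iff.mpr hz)]

@[simp]
lemma radialExtension_zero : radialExtension g 0 = 0 := by
  simp [radialExtension]

lemma radialExtension_of_mem_sphere (hz : z ∈ sphere (0 : ℂ) 1) : radialExtension g z = g z := by
  simp [radialExtension, mem_sphere_zero_iff_norm.mp hz]

lemma norm_radialExtension (hg : MapsTo g (sphere 0 1) (sphere 0 1)) (z : ℂ) :
    ‖radialExtension g z‖ = ‖z‖ := by
  rcases eq_or_ne z 0 with rfl | hz
  · rw [radialExtension_zero]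
  · rw [radialExtension, norm_mul, norm_real, norm_norm,
      mem_sphere_zero_iff_norm.mp (hg (div_norm_mem_sphere hz)), mul_one]

lemma continuous_radialExtension (hgc : ContinuousOn g (sphere 0 1))
    (hg : MapsTo g (sphere 0 1) (sphere 0 1)) : Continuous (radialExtension g) := by
  refine continuous_iff_continuousAt.mpr fun z => ?_
  rcases eq_or_ne z 0 with rfl | hz
  · refine tendsto_zero_iff_norm_tendsto_zero.mpr ?_ |>.trans_eq (by simp)
    simpa only [norm_radialExtension hg] using tendsto_norm_zero
  · have hnorm : Continuous fun z : ℂ => (‖z‖ : ℂ) := continuous_ofReal.comp continuous_norm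
    have hdir : ContinuousOn (fun z : ℂ => z / ‖z‖) {0}ᶜ := fun z hz =>
      (continuousAt_id.div hnorm.continuousAt
        (ofReal_ne_zero.mpr (norm_ne_zero_iff.mpr hz))).continuousWithinAt
    exact ((hnorm.continuousOn.mul
      (hgc.comp hdir fun z hz => div_norm_mem_sphere hz)).continuousAt
        (isOpen_compl_singleton.mem_nhds hz))

lemma leftInverse_radialExtension (hg : MapsTo g (sphere 0 1) (sphere 0 1))
    (hhg : LeftInvOn h g (sphere 0 1)) :
    Function.LeftInverse (radialExtension h) (radialExtension g) := fun z => by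
  rcases eq_or_ne z 0 with rfl | hz
  · simp
  have hz' : (‖z‖ : ℂ) ≠ 0 := ofReal_ne_zero.mpr (norm_ne_zero_iff.mpr hz)
  rw [radialExtension, norm_radialExtension hg, radialExtension, mul_div_cancel_left₀ _ hz',
    hhg (div_norm_mem_sphere hz), mul_div_cancel₀ _ hz']

lemma isHomeoOn_radialExtension (hgh : IsHomeoOn g h (sphere 0 1) (sphere 0 1)) :
    IsHomeoOn (radialExtension g) (radialExtension h) (closedBall 0 1) (closedBall 0 1) where
  continuousOn := (continuous_radialExtension hgh.continuousOn hgh.mapsTo).continuousOn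
  continuousOn_inv := (continuous_radialExtension hgh.continuousOn_inv hgh.mapsTo_inv).continuousOn
  mapsTo z hz := by simpa [norm_radialExtension hgh.mapsTo] using hz
  mapsTo_inv z hz := by simpa [norm_radialExtension hgh.mapsTo_inv] using hz
  invOn := ⟨(leftInverse_radialExtension hgh.mapsTo hgh.invOn.1).leftInvOn _,
    (leftInverse_radialExtension hgh.mapsTo_inv hgh.invOn.2).leftInvOn _⟩

end RadialExtension

/-- The radial extension of the transition map `f₂ ∘ g₁` corrects `f₁` so that it agrees with `f₂`
on `C`. -/
lemma IsHomeoOn.exists_homeomorph_of_sphere {X : Type*} [TopologicalSpace X] {A₁ A₂ C : Set X}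
    {f₁ f₂ : X → ℂ} {g₁ g₂ : ℂ → X} (hA₁ : IsClosed A₁) (hA₂ : IsClosed A₂) (hA : A₁ ∪ A₂ = univ)
    (hC : A₁ ∩ A₂ = C) (h₁ : IsHomeoOn f₁ g₁ A₁ (closedBall 0 1))
    (h₂ : IsHomeoOn f₂ g₂ A₂ (ball 0 1)ᶜ) (h₁C : IsHomeoOn f₁ g₁ C (sphere 0 1))
    (h₂C : IsHomeoOn f₂ g₂ C (sphere 0 1)) : ∃ H : X ≃ₜ ℂ, H '' C = sphere 0 1 := by
  have hB : closedBall (0 : ℂ) 1 ∩ (ball 0 1)ᶜ = sphere 0 1 := by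
    rw [← sdiff_eq, closedBall_sdiff_ball]
  have hR := h₁C.symm.trans h₂C
  have hF : EqOn (radialExtension (f₂ ∘ g₁) ∘ f₁) f₂ C := fun x hx => by
    simp [radialExtension_of_mem_sphere (h₁C.mapsTo hx), h₁C.invOn.1 hx]
  have hG : EqOn (g₁ ∘ radialExtension (f₁ ∘ g₂)) g₂ (sphere 0 1) := fun y hy => by
    simp [radialExtension_of_mem_sphere hy, h₁C.invOn.1 (h₂C.mapsTo_inv hy)]
  obtain ⟨H, hH⟩ := (h₁.trans (isHomeoOn_radialExtension hR)).exists_homeomorph h₂ hA₁ hA₂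
    isClosed_closedBall isOpen_ball.isClosed_compl hA
    (eq_univ_of_subset (union_subset_union_left _ ball_subset_closedBall) (union_compl_self _))
    (hC ▸ hF) (hB ▸ hG)
  refine ⟨H, ?_⟩
  rw [((hH.mono (hC ▸ inter_subset_left)).trans hF).image_eq]
  exact (h₂C.invOn.bijOn h₂C.mapsTo h₂C.mapsTo_inv).image_eq

section JordanDecomposition

variable {f : Circle → ℂ} {C U E V : Set ℂ} {z₀ : ℂ}

lemma isBounded_image_of_continuous {X Y : Type*} [PseudoMetricSpace X] [ProperSpace X]
    [PseudoMetricSpace Y] {g : X → Y} {s : Set X} (hg : Continuous g)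
    (hs : Bornology.IsBounded s) : Bornology.IsBounded (g '' s) :=
  (hs.isCompact_closure.image hg).isBounded.subset (image_mono subset_closure)

lemma IsJordanDecomposition.closure_inside (h : IsJordanDecomposition C U E) :
    closure U = U ∪ C := by
  rw [closure_eq_self_union_frontier, h.frontier_inside]

lemma IsJordanDecomposition.closure_outside (h : IsJordanDecomposition C U E) :
    closure E = E ∪ C := by
  rw [closure_eq_self_union_frontier, h.frontier_outside]

lemma IsJordanDecomposition.disjoint_inside_curve (h : IsJordanDecomposition C U E) :
    Disjoint U C :=
  h.frontier_inside ▸ (disjoint_frontier_iff_isOpen.mpr h.isOpen_inside).symm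

lemma IsJordanDecomposition.compl_inside (h : IsJordanDecomposition C U E) : Uᶜ = closure E := by
  have hC : C = (U ∪ E)ᶜ := by rw [h.union_eq, compl_compl]
  rw [h.closure_outside]
  refine Subset.antisymm (fun z hz => ?_) (union_subset h.disjoint.subset_compl_left
    h.disjoint_inside_curve.subset_compl_left)
  by_cases hzE : z ∈ E
  · exact Or.inl hzE
  · exact Or.inr (hC ▸ fun hzUE => hzUE.elim hz hzE)

lemma IsJordanDecomposition.compl_closure_inside (h : IsJordanDecomposition C U E) :
    (closure U)ᶜ = E := by
  have hd : Disjoint E C :=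
    h.frontier_outside ▸ (disjoint_frontier_iff_isOpen.mpr h.isOpen_outside).symm
  rw [h.closure_inside, compl_union, h.compl_inside, h.closure_outside, ← sdiff_eq,
    union_sdiff_right, hd.sdiff_eq_left]

lemma IsJordanDecomposition.closure_inter_closure (h : IsJordanDecomposition C U E) :
    closure U ∩ closure E = C := by
  rw [← h.compl_inside, ← sdiff_eq, h.closure_inside, union_sdiff_left,
    h.disjoint_inside_curve.symm.sdiff_eq_left]

lemma IsJordanDecomposition.closure_union_closure (h : IsJordanDecomposition C U E) :
    closure U ∪ closure E = univ := by
  rw [← h.compl_inside]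
  exact eq_univ_of_subset (union_subset_union_left _ subset_closure) (union_compl_self U)

lemma IsJordanDecomposition.image (h : IsJordanDecomposition C U E) (e : ℂ ≃ₜ ℂ) :
    IsJordanDecomposition (e '' C) (e '' U) (e '' E) where
  isOpen_inside := e.isOpenMap U h.isOpen_inside
  isOpen_outside := e.isOpenMap E h.isOpen_outside
  isConnected_inside := h.isConnected_inside.image e e.continuous.continuousOn
  isConnected_outside := h.isConnected_outside.image e e.continuous.continuousOn
  disjoint := (disjoint_image_iff e.injective).mpr h.disjoint
  union_eq := by rw [← image_union, h.union_eq, image_compl_eq e.bijective]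
  isBounded_inside := isBounded_image_of_continuous e.continuous h.isBounded_inside
  not_isBounded_outside hb := h.not_isBounded_outside <| by
    simpa [image_image] using isBounded_image_of_continuous e.symm.continuous hb
  frontier_inside := by rw [← e.image_frontier, h.frontier_inside]
  frontier_outside := by rw [← e.image_frontier, h.frontier_outside]

lemma IsJordanDecomposition.eq_inside (h : IsJordanDecomposition C U E) (hVc : IsConnected V)
    (hVb : Bornology.IsBounded V) (hVC : Disjoint V C) (hfr : frontier V ⊆ C) : V = U := by
  have hVUE : V ⊆ U ∪ E := h.union_eq ▸ hVC.subset_compl_right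
  have hd : Disjoint (U ∪ E) (frontier V) :=
    h.union_eq ▸ disjoint_compl_left.mono_right hfr
  have hVE : Disjoint V E := disjoint_left.mpr fun z hzV hzE => h.not_isBounded_outside <|
    hVb.subset <| subset_of_disjoint_frontier h.isConnected_outside.isPreconnected
      (hd.mono_left subset_union_right) ⟨z, hzE, hzV⟩
  have hVU : V ⊆ U := hVE.subset_left_of_subset_union hVUE
  obtain ⟨z, hz⟩ := hVc.nonempty
  exact hVU.antisymm <| subset_of_disjoint_frontier h.isConnected_inside.isPreconnected
    (hd.mono_left subset_union_left) ⟨z, hVU hz, hz⟩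

lemma IsRiemannMap.exists_isHomeoOn_closure {ψ φ Ψ : ℂ → ℂ} (h : IsRiemannMap U ψ φ)
    (hUo : IsOpen U) (hUb : Bornology.IsBounded U) (hΨ : ContinuousOn Ψ (closure U))
    (he : EqOn Ψ ψ U) (hinj : InjOn Ψ (closure U)) :
    ∃ Φ, IsHomeoOn Ψ Φ (closure U) (closedBall 0 1) ∧ IsHomeoOn Ψ Φ (frontier U) (sphere 0 1) := by
  have hK : IsCompact (closure U) := hUb.isCompact_closure
  have hΨφ : ∀ z ∈ ball (0 : ℂ) 1, Ψ (φ z) = z := fun z hz => by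
    rw [he (h.mapsTo_inv hz), h.invOn.2 hz]
  have hmaps : MapsTo Ψ (closure U) (closedBall 0 1) := fun w hw =>
    mem_closedBall_zero_iff.mpr (h.norm_extension_le_one hUo hΨ he hw)
  have hsurj : SurjOn Ψ (closure U) (closedBall 0 1) := by
    rw [SurjOn, ← closure_ball (0 : ℂ) one_ne_zero]
    exact closure_minimal (fun z hz => ⟨φ z, subset_closure (h.mapsTo_inv hz), hΨφ z hz⟩)
      (hK.image_of_continuousOn hΨ).isClosed
  obtain ⟨Φ, hΦ⟩ := exists_isHomeoOn_of_isCompact hK hΨ ⟨hmaps, hinj, hsurj⟩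
  have hΦφ : ∀ z ∈ ball (0 : ℂ) 1, Φ z = φ z := fun z hz => by
    rw [← hΦ.invOn.1 (subset_closure (h.mapsTo_inv hz)), hΨφ z hz]
  have hU : IsHomeoOn Ψ Φ U (ball 0 1) := hΦ.mono subset_closure ball_subset_closedBall
    (fun w hw => he hw ▸ h.mapsTo hw) fun z hz => hΦφ z hz ▸ h.mapsTo_inv hz
  refine ⟨Φ, hΦ, ?_⟩
  rw [hUo.frontier_eq, ← closedBall_sdiff_ball]
  exact hΦ.sdiff hU

theorem IsJordanDecomposition.exists_isHomeoOn_closure_inside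
    (h : IsJordanDecomposition (range f) U E) (hf : IsEmbedding f) (hz₀ : z₀ ∈ U) :
    ∃ Ψ Φ : ℂ → ℂ, IsHomeoOn Ψ Φ (closure U) (closedBall 0 1) ∧
      IsHomeoOn Ψ Φ (range f) (sphere 0 1) ∧ Ψ z₀ = 0 := by
  have hUo := h.isOpen_inside
  have hUc := h.isConnected_inside.isPreconnected
  have hUb := h.isBounded_inside
  have hfr := h.frontier_inside
  have hsqrt : HasHolomorphicSqrt U := hasHolomorphicSqrt_of_isPreconnected_compl hUo hUc hUb
    (h.compl_inside ▸ h.isConnected_outside.isPreconnected.closure)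
  obtain ⟨ψ, φ, hψ, hψz₀⟩ := exists_isRiemannMap hUo hUc hUb hsqrt hz₀
  obtain ⟨Ψ, hΨ, he⟩ := hψ.exists_continuousOn_closure hf hUo hUc hUb hfr
  have hext : range f ⊆ closure (closure U)ᶜ :=
    h.compl_closure_inside.symm ▸ h.closure_outside ▸ subset_union_right
  obtain ⟨Φ, hΦ, hΦfr⟩ := hψ.exists_isHomeoOn_closure hUo hUb hΨ he <|
    hψ.injOn_closure hUo hΨ he (hψ.injOn_frontier hf hUo hUb hfr hext hΨ he)
  exact ⟨Ψ, Φ, hΦ, hfr ▸ hΦfr, (he hz₀).trans hψz₀⟩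

end JordanDecomposition

section Inversion

variable {f : Circle → ℂ} {C U E U' E' A : Set ℂ}

lemma isHomeoOn_inv (hA : (0 : ℂ) ∉ A) : IsHomeoOn Inv.inv Inv.inv A A⁻¹ where
  continuousOn := continuousOn_inv₀.mono fun _ hz => ne_of_mem_of_not_mem hz hA
  continuousOn_inv := continuousOn_inv₀.mono fun z hz => by
    rintro rfl
    exact hA (inv_zero (G₀ := ℂ) ▸ Set.mem_inv.mp hz)
  mapsTo _ hz := Set.inv_mem_inv.mpr hz
  mapsTo_inv _ hz := hz
  invOn := ⟨fun z _ => inv_inv z, fun z _ => inv_inv z⟩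

lemma inv_compl_ball : ((ball (0 : ℂ) 1)ᶜ)⁻¹ = closedBall 0 1 \ {0} := by
  ext z
  rcases eq_or_ne z 0 with rfl | hz
  · simp
  · simp [hz, one_le_inv₀ (norm_pos_iff.mpr hz)]

lemma inv_sphere : (sphere (0 : ℂ) 1)⁻¹ = sphere 0 1 := by
  ext z
  simp

lemma isEmbedding_inv (hf : IsEmbedding f) (h₀ : 0 ∉ range f) : IsEmbedding f⁻¹ :=
  ((hf.continuous.inv₀ fun x hx => h₀ ⟨x, hx⟩).isClosedEmbedding
    (inv_injective.comp hf.injective)).isEmbedding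

lemma range_inv : range f⁻¹ = (range f)⁻¹ := by
  rw [← image_inv_eq_inv, ← range_comp]; rfl

lemma IsJordanDecomposition.inv_outside_mem_nhdsNE (h : IsJordanDecomposition C U E) :
    E⁻¹ ∈ 𝓝[≠] (0 : ℂ) :=
  tendsto_inv₀_nhdsNE_zero <| h.compl_closure_inside ▸ h.isBounded_inside.closure

lemma IsJordanDecomposition.isBounded_inv_outside (h : IsJordanDecomposition C U E)
    (h₀ : 0 ∈ U) : Bornology.IsBounded E⁻¹ :=
  mem_of_superset (tendsto_inv₀_cobounded (h.isOpen_inside.mem_nhds h₀))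
    fun _ hzU hzE => disjoint_left.mp h.disjoint hzU hzE

lemma IsJordanDecomposition.frontier_insert_zero_subset (h : IsJordanDecomposition C U E) :
    frontier (insert 0 E⁻¹) ⊆ C⁻¹ := by
  intro z hz
  have hz₀ : z ≠ 0 := by
    rintro rfl
    exact hz.2 (mem_interior_iff_mem_nhds.mpr (insert_mem_nhds_iff.mpr h.inv_outside_mem_nhdsNE))
  have hinv : Tendsto Inv.inv (𝓝 z) (𝓝 z⁻¹) := tendsto_inv₀ hz₀
  have hzE : z⁻¹ ∉ E := fun hzE => hz.2 <| mem_interior_iff_mem_nhds.mpr <|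
    mem_of_superset (hinv (h.isOpen_outside.mem_nhds hzE)) (subset_insert 0 E⁻¹)
  have hzU : z⁻¹ ∉ U := fun hzU => by
    obtain ⟨w, ⟨hwU, hw₀⟩, rfl | hwE⟩ := mem_closure_iff_nhds.mp hz.1 _
      (inter_mem (hinv (h.isOpen_inside.mem_nhds hzU)) (isOpen_ne.mem_nhds hz₀))
    · exact hw₀ rfl
    · exact disjoint_left.mp h.disjoint hwU hwE
  by_contra hzC
  exact (h.union_eq.ge hzC).elim hzU hzE

lemma IsJordanDecomposition.insert_zero_inv_outside (h : IsJordanDecomposition C U E)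
    (h' : IsJordanDecomposition C⁻¹ U' E') (h₀ : 0 ∈ U) : insert 0 E⁻¹ = U' := by
  have h₀E : (0 : ℂ) ∉ E := disjoint_left.mp h.disjoint h₀
  have h₀C : (0 : ℂ) ∉ C := disjoint_left.mp h.disjoint_inside_curve h₀
  have h₀cl : (0 : ℂ) ∈ closure E⁻¹ :=
    mem_closure_of_tendsto (tendsto_id.mono_left nhdsWithin_le_nhds) h.inv_outside_mem_nhdsNE
  have hE : IsConnected E⁻¹ := by
    rw [← image_inv_eq_inv]
    exact h.isConnected_outside.image _ (isHomeoOn_inv h₀E).continuousOn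
  refine h'.eq_inside (hE.subset_closure (subset_insert 0 _) (insert_subset h₀cl subset_closure))
    ((h.isBounded_inv_outside h₀).insert 0) (disjoint_insert_left.mpr ⟨?_, ?_⟩)
    h.frontier_insert_zero_subset
  · rwa [Set.mem_inv, inv_zero]
  · exact disjoint_left.mpr fun z hzE hzC => h.union_eq.le (Or.inr hzE) hzC

lemma IsJordanDecomposition.closure_inside_sdiff_zero (h : IsJordanDecomposition C U E)
    (h' : IsJordanDecomposition C⁻¹ U' E') (h₀ : 0 ∈ U) : closure U' \ {0} = (closure E)⁻¹ := by
  have h₀E : (0 : ℂ) ∉ closure E := h.compl_inside ▸ not_not_intro h₀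
  rw [h'.closure_inside, ← h.insert_zero_inv_outside h' h₀, insert_union, ← union_inv,
    ← h.closure_outside, insert_sdiff_self_of_notMem (by simpa using h₀E)]

theorem IsJordanDecomposition.exists_isHomeoOn_closure_outside
    (h : IsJordanDecomposition (range f) U E) (hf : IsEmbedding f) (h₀ : 0 ∈ U) :
    ∃ F G : ℂ → ℂ, IsHomeoOn F G (closure E) (ball 0 1)ᶜ ∧
      IsHomeoOn F G (range f) (sphere 0 1) := by
  have h₀E : (0 : ℂ) ∉ closure E := h.compl_inside ▸ not_not_intro h₀
  have h₀f : 0 ∉ range f := disjoint_left.mp h.disjoint_inside_curve h₀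
  have hf' : IsEmbedding f⁻¹ := isEmbedding_inv hf h₀f
  obtain ⟨U', E', h'⟩ := jordan_curve hf'
  have h'' : IsJordanDecomposition (range f)⁻¹ U' E' := range_inv ▸ h'
  have h₀U' : 0 ∈ U' := h.insert_zero_inv_outside h'' h₀ ▸ mem_insert 0 _
  obtain ⟨Ψ, Φ, hΨ, hΨf, hΨ₀⟩ := h'.exists_isHomeoOn_closure_inside hf' h₀U'
  have hΨ0 : IsHomeoOn Ψ Φ {0} {0} :=
    hΨ.mono (by simpa using subset_closure h₀U') (by simp) (by simpa using hΨ₀)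
      (by simpa [hΨ₀] using hΨ.invOn.1 (subset_closure h₀U'))
  have hball : IsHomeoOn Ψ Φ (closure E)⁻¹ ((ball 0 1)ᶜ)⁻¹ := by
    rw [inv_compl_ball, ← h.closure_inside_sdiff_zero h'' h₀]
    exact hΨ.sdiff hΨ0
  have hsphere : IsHomeoOn Ψ Φ (range f)⁻¹ (sphere 0 1)⁻¹ := by
    rwa [inv_sphere, ← range_inv]
  exact ⟨_, _, ((isHomeoOn_inv h₀E).trans hball).trans (isHomeoOn_inv (by simp)).symm,
    ((isHomeoOn_inv h₀f).trans hsphere).trans (isHomeoOn_inv (by simp)).symm⟩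

end Inversion

lemma exists_homeomorph_image_eq_sphere_of_zero_mem {f : Circle → ℂ} {U E : Set ℂ}
    (hf : IsEmbedding f) (h : IsJordanDecomposition (range f) U E) (h₀ : 0 ∈ U) :
    ∃ H : ℂ ≃ₜ ℂ, H '' range f = sphere 0 1 := by
  obtain ⟨f₁, g₁, hin, hinC, -⟩ := h.exists_isHomeoOn_closure_inside hf h₀
  obtain ⟨f₂, g₂, hout, houtC⟩ := h.exists_isHomeoOn_closure_outside hf h₀
  exact IsHomeoOn.exists_homeomorph_of_sphere isClosed_closure isClosed_closure
    h.closure_union_closure h.closure_inter_closure hin hout hinC houtC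

theorem exists_homeomorph_image_eq_sphere {f : Circle → ℂ} (hf : IsEmbedding f) :
    ∃ H : ℂ ≃ₜ ℂ, H '' range f = sphere 0 1 := by
  obtain ⟨U, E, h⟩ := jordan_curve hf
  obtain ⟨a, ha⟩ := h.isConnected_inside.nonempty
  let T : ℂ ≃ₜ ℂ := Homeomorph.subRight a
  have hT : IsJordanDecomposition (range (T ∘ f)) (T '' U) (T '' E) := range_comp T f ▸ h.image T
  obtain ⟨H, hH⟩ := exists_homeomorph_image_eq_sphere_of_zero_mem (T.isEmbedding.comp hf) hT
    ⟨a, ha, sub_self a⟩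
  refine ⟨T.trans H, ?_⟩
  rw [← hH, range_comp, image_image]
  rfl

lemma exists_homeomorph_image_eq_sphere_of_linearIsometryEquiv {F : Type*} [NormedAddCommGroup F]
    [NormedSpace ℝ F] (e : ℂ ≃ₗᵢ[ℝ] F) {f : sphere (0 : F) 1 → F} (hf : IsEmbedding f) :
    ∃ h : F ≃ₜ F, h '' range f = sphere 0 1 := by
  let σ : Circle ≃ₜ sphere (0 : F) 1 := e.toHomeomorph.subtype fun z => by
    simp [Submonoid.unitSphere]
  obtain ⟨H, hH⟩ := exists_homeomorph_image_eq_sphere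
    (e.symm.toHomeomorph.isEmbedding.comp (hf.comp σ.isEmbedding))
  refine ⟨(e.symm.toHomeomorph.trans H).trans e.toHomeomorph, ?_⟩
  rw [range_comp, range_comp, σ.range_coe, image_univ] at hH
  calc _ = e '' (H '' (e.symm '' range f)) := by simp only [image_image]; rfl
    _ = e '' sphere 0 1 := congrArg (e '' ·) hH
    _ = sphere 0 1 := by rw [e.image_sphere, map_zero]

end Schoenflies

/-- **The Schönflies theorem.** For every Jordan curve `C` in the plane (the image of a
continuous injective map from the unit circle into `ℝ²`) there is a homeomorphism `h` of
`ℝ²` onto itself carrying `C` onto the unit circle. -/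
theorem schoenflies_theorem (C : Set (EuclideanSpace ℝ (Fin 2)))
    (f : Metric.sphere (0 : EuclideanSpace ℝ (Fin 2)) 1 → EuclideanSpace ℝ (Fin 2))
    (hf : Continuous f) (hinj : Function.Injective f) (hC : C = Set.range f) :
    ∃ h : EuclideanSpace ℝ (Fin 2) ≃ₜ EuclideanSpace ℝ (Fin 2),
      h '' C = Metric.sphere (0 : EuclideanSpace ℝ (Fin 2)) 1 := by
  subst hC
  exact Schoenflies.exists_homeomorph_image_eq_sphere_of_linearIsometryEquiv
    Complex.orthonormalBasisOneI.repr (hf.isClosedEmbedding hinj).isEmbedding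
end

section
/- Let K be a field of characteristic zero and f ∈ K[X] an irreducible polynomial of prime degree p with splitting field L over K. Then f is solvable by radicals if and only if for every pair of distinct roots x, y of f in L one has L = K(x, y), i.e., every root of f is a rational expression in any two given roots (Galois's criterion of solvability for irreducible equations of prime degree). -/
open Polynomial IntermediateField

/-!
Write `G` for the Galois group of `f`, acting faithfully and transitively on the `p` roots. By the
Galois correspondence, the field condition says that an element of `G` fixing two roots is trivial.

A transitive action on a set of prime size is primitive, so every nontrivial normal subgroup of `G`
is again transitive, and the centralizer of a transitive subgroup acts freely. If `G` is solvable,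
a nontrivial abelian normal subgroup is therefore cyclic of order `p`, and an element fixing `x` and
`c • x` commutes with its generator `c`, hence is trivial. Conversely, if two-point stabilizers are
trivial, then `|G| = p * m` with `m ∣ p - 1`, so the Sylow `p`-subgroup is normal, cyclic and
self-centralizing, and `G` embeds in the affine group of the line over `ℤ/p`.

That `|G|` divides `p * (p - 1)` also shows which roots of unity Kummer theory needs in order to
solve `f` by radicals when `G` is solvable.
-/

section Solvable

variable {G : Type*} [Group G]

theorem exists_normal_isMulCommutative_ne_bot [Nontrivial G] [Group.IsSolvable G] :
    ∃ A : Subgroup G, A.Normal ∧ IsMulCommutative A ∧ A ≠ ⊥ := by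
  classical
  have hex : ∃ n, derivedSeries G n = ⊥ := Group.IsSolvable.solvable
  obtain ⟨m, hm⟩ : ∃ m, Nat.find hex = m + 1 := Nat.exists_eq_succ_of_ne_zero fun h0 ↦
    top_ne_bot (h0 ▸ Nat.find_spec hex :)
  refine ⟨derivedSeries G m, inferInstance, ?_, Nat.find_min hex (by lia)⟩
  rw [← Subgroup.commutator_self_eq_bot_iff, ← derivedSeries_succ, ← hm]
  exact Nat.find_spec hex

theorem exists_normal_ne_top_isCyclic_quotient [Finite G] [Nontrivial G] [Group.IsSolvable G] :
    ∃ (N : Subgroup G) (_ : N.Normal), N ≠ ⊤ ∧ IsCyclic (G ⧸ N) := by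
  obtain ⟨N, hN, hle⟩ := (eq_top_or_exists_le_coatom (commutator G)).resolve_left
    (Group.IsSolvable.commutator_lt_top_of_nontrivial G).ne
  have hnormal : N.Normal := Subgroup.Normal.of_commutator_le _ hle
  obtain ⟨g, hg⟩ : ∃ g, g ∉ N := not_forall.mp (mt N.eq_top_iff'.mpr hN.1)
  have htop : N ⊔ Subgroup.zpowers g = ⊤ :=
    hN.2 _ (left_lt_sup.mpr fun h ↦ hg (h (Subgroup.mem_zpowers g)))
  refine ⟨N, hnormal, hN.1, isCyclic_iff_exists_zpowers_eq_top.mpr ⟨QuotientGroup.mk' N g, ?_⟩⟩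
  rw [← MonoidHom.map_zpowers, ← bot_sup_eq (Subgroup.map _ _), ← QuotientGroup.map_mk'_self N,
    ← Subgroup.map_sup, htop, ← MonoidHom.range_eq_map, QuotientGroup.range_mk']

theorem isSolvable_of_centralizer_le (N : Subgroup G) [N.Normal] [IsCyclic N]
    (hN : Subgroup.centralizer (N : Set G) ≤ N) : Group.IsSolvable G := by
  have : Group.IsSolvable N := Group.isSolvable_of_comm (IsMulCommutative.is_comm.comm)
  have : Group.IsSolvable (MulAut N) := Group.isSolvable_of_comm fun a b ↦
    (IsCyclic.mulAutMulEquiv N).injective (by rw [map_mul, map_mul, mul_comm])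
  refine Group.isSolvable_of_ker_le_range N.subtype (MulAut.conjNormal : G →* MulAut N)
    fun g hg ↦ ?_
  rw [Subgroup.range_subtype]
  refine hN (Subgroup.mem_centralizer_iff.mpr fun n hn ↦ ?_)
  have hconj : g * n * g⁻¹ = n := by
    simpa only [MulAut.conjNormal_apply, MulAut.one_apply] using
      congrArg Subtype.val (DFunLike.congr_fun (MonoidHom.mem_ker.mp hg) ⟨n, hn⟩)
  exact (mul_inv_eq_iff_eq_mul.mp hconj).symm

theorem exists_normal_card_eq_prime_pow {p k m : ℕ} [Fact p.Prime] (hm0 : m ≠ 0) (hm : m < p)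
    (hG : Nat.card G = p ^ k * m) : ∃ N : Subgroup G, N.Normal ∧ Nat.card N = p ^ k := by
  have hp : p.Prime := Fact.out
  have hpk : p ^ k ≠ 0 := pow_ne_zero k hp.ne_zero
  have : Finite G := Nat.finite_of_card_ne_zero (hG ▸ mul_ne_zero hpk hm0)
  let P : Sylow p G := default
  have hP : Nat.card (P : Subgroup G) = p ^ k := by
    rw [P.card_eq_multiplicity, hG, Nat.factorization_mul hpk hm0, Finsupp.add_apply,
      hp.factorization_pow, Finsupp.single_eq_same, Nat.factorization_eq_zero_of_lt hm, add_zero]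
  have hindex : (P : Subgroup G).index = m := by
    refine Nat.eq_of_mul_eq_mul_left (Nat.pos_of_ne_zero hpk) ?_
    rw [← hG, ← hP, Subgroup.card_mul_index]
  have hle : Nat.card (Sylow p G) ≤ m :=
    Nat.le_of_dvd (Nat.pos_of_ne_zero hm0) (hindex ▸ P.card_dvd_index)
  have hcard : Nat.card (Sylow p G) = 1 :=
    Nat.ModEq.eq_of_lt_of_lt (card_sylow_modEq_one p G) (hle.trans_lt hm) hp.one_lt
  have : Subsingleton (Sylow p G) := (Nat.card_eq_one_iff_unique.mp hcard).1
  exact ⟨P, P.normal_of_subsingleton, hP⟩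

end Solvable

section PermutationGroup

variable {G X : Type*} [Group G] [MulAction G X]

theorem card_dvd_card_of_stabilizer_eq_bot (h : ∀ x : X, MulAction.stabilizer G x = ⊥) :
    Nat.card G ∣ Nat.card X := by
  rw [Nat.card_congr (MulAction.selfEquivOrbitsQuotientProd h), Nat.card_prod]
  exact dvd_mul_left _ _

theorem card_stabilizer_dvd_card_sub_one [Finite X]
    (h : ∀ x y : X, x ≠ y → fixingSubgroup G {x, y} = ⊥) (x : X) :
    Nat.card (MulAction.stabilizer G x) ∣ Nat.card X - 1 := by
  rw [← SubMulAction.nat_card_ofStabilizer_eq G x]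
  refine card_dvd_card_of_stabilizer_eq_bot fun y ↦
    (Subgroup.eq_bot_iff_forall _).mpr fun g hg ↦ Subtype.ext ?_
  have hy : (g : G) • (y : X) = y := congrArg Subtype.val hg
  rw [Subgroup.coe_one, ← Subgroup.mem_bot, ← h x y (Ne.symm y.2), mem_fixingSubgroup_iff]
  rintro z (rfl | rfl)
  exacts [g.2, hy]

theorem card_eq_card_mul_card_stabilizer [MulAction.IsPretransitive G X] (x : X) :
    Nat.card G = Nat.card X * Nat.card (MulAction.stabilizer G x) := by
  rw [← MulAction.index_stabilizer_of_transitive G x, Subgroup.index_mul_card]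

theorem commute_of_smul_eq_of_smul_smul_eq (A : Subgroup G) [A.Normal] {x : X}
    (hfree : ∀ a ∈ A, a • x = x → a = 1) {c g : G} (hc : c ∈ A) (hgx : g • x = x)
    (hgcx : g • c • x = c • x) : Commute g c := by
  have hmem : c⁻¹ * (g * c * g⁻¹) ∈ A :=
    A.mul_mem (A.inv_mem hc) (‹A.Normal›.conj_mem c hc g)
  refine mul_inv_eq_iff_eq_mul.mp (inv_mul_eq_one.mp (hfree _ hmem ?_)).symm
  rw [mul_smul, mul_smul, mul_smul, inv_smul_eq_iff.mpr hgx.symm, hgcx, inv_smul_smul]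

variable [FaithfulSMul G X]

theorem eq_one_of_mem_centralizer_of_smul_eq (A : Subgroup G) [MulAction.IsPretransitive A X]
    {g : G} (hg : g ∈ Subgroup.centralizer (A : Set G)) {x : X} (hx : g • x = x) : g = 1 := by
  refine FaithfulSMul.eq_of_smul_eq_smul fun z : X ↦ ?_
  obtain ⟨a, rfl⟩ := MulAction.exists_smul_eq A x z
  rw [one_smul, Subgroup.smul_def, smul_smul, ← Subgroup.mem_centralizer_iff.mp hg a a.2,
    mul_smul, hx]

theorem isPretransitive_of_normal_of_ne_bot [MulAction.IsQuasiPreprimitive G X]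
    {N : Subgroup G} [N.Normal] (hN : N ≠ ⊥) : MulAction.IsPretransitive N X := by
  refine MulAction.IsQuasiPreprimitive.isPretransitive_of_normal (G := G) fun hfix ↦ hN ?_
  refine (Subgroup.eq_bot_iff_forall N).mpr fun n hn ↦ ?_
  refine FaithfulSMul.eq_of_smul_eq_smul fun x : X ↦ ?_
  have hx : x ∈ MulAction.fixedPoints N X := hfix ▸ Set.mem_univ x
  rw [one_smul]
  exact hx ⟨n, hn⟩

variable [MulAction.IsPretransitive G X]

theorem fixingSubgroup_pair_eq_bot_of_isSolvable (hX : (Nat.card X).Prime) [Group.IsSolvable G]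
    {x y : X} (hxy : x ≠ y) : fixingSubgroup G {x, y} = ⊥ := by
  have : MulAction.IsPreprimitive G X := .of_prime_card hX
  have : Nontrivial G := by
    obtain ⟨g, rfl⟩ := MulAction.exists_smul_eq G x y
    exact ⟨g, 1, by rintro rfl; exact hxy (one_smul G x).symm⟩
  obtain ⟨A, _, _, hA⟩ := exists_normal_isMulCommutative_ne_bot (G := G)
  have := isPretransitive_of_normal_of_ne_bot (X := X) hA
  have hfree (a : G) (ha : a ∈ A) : a • x = x → a = 1 :=
    eq_one_of_mem_centralizer_of_smul_eq A (A.le_centralizer ha)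
  have hcard : Nat.card A = Nat.card X := by
    have hstab : MulAction.stabilizer A x = ⊥ := (Subgroup.eq_bot_iff_forall _).mpr
      fun a ha ↦ Subtype.ext (hfree a a.2 ha)
    rw [card_eq_card_mul_card_stabilizer x, hstab, Subgroup.card_bot, mul_one]
  have : Fact (Nat.card A).Prime := ⟨hcard ▸ hX⟩
  obtain ⟨c, rfl⟩ := MulAction.exists_smul_eq A x y
  have hc1 : c ≠ 1 := by
    rintro rfl
    exact hxy (one_smul A x).symm
  refine (Subgroup.eq_bot_iff_forall _).mpr fun g hg ↦ ?_
  have hgx : g • x = x := (mem_fixingSubgroup_iff G).mp hg x (by simp)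
  have hgc : Commute g c := commute_of_smul_eq_of_smul_smul_eq A hfree c.2 hgx
    ((mem_fixingSubgroup_iff G).mp hg (c • x) (by simp))
  have hcent : g ∈ Subgroup.centralizer (A : Set G) := by
    refine Subgroup.mem_centralizer_iff.mpr fun a ha ↦ ?_
    obtain ⟨k, hk⟩ : (⟨a, ha⟩ : A) ∈ Subgroup.zpowers c := mem_zpowers_of_prime_card rfl hc1
    rw [← show (c : G) ^ k = a from congrArg Subtype.val hk]
    exact (hgc.zpow_right k).symm
  exact eq_one_of_mem_centralizer_of_smul_eq A hcent hgx

theorem card_dvd_card_mul_card_sub_one_of_isSolvable (hX : (Nat.card X).Prime)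
    [Group.IsSolvable G] :
    Nat.card G ∣ Nat.card X * (Nat.card X - 1) := by
  obtain ⟨⟨x⟩, _⟩ := Nat.card_ne_zero.mp hX.ne_zero
  rw [card_eq_card_mul_card_stabilizer x]
  exact mul_dvd_mul_left _ (card_stabilizer_dvd_card_sub_one
    (fun _ _ ↦ fixingSubgroup_pair_eq_bot_of_isSolvable hX) x)

theorem isSolvable_of_fixingSubgroup_pair_eq_bot (hX : (Nat.card X).Prime)
    (h : ∀ x y : X, x ≠ y → fixingSubgroup G {x, y} = ⊥) : Group.IsSolvable G := by
  have : MulAction.IsPreprimitive G X := .of_prime_card hX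
  obtain ⟨⟨x⟩, _⟩ := Nat.card_ne_zero.mp hX.ne_zero
  have hdvd := card_stabilizer_dvd_card_sub_one h x
  have hpos : 0 < Nat.card X - 1 := Nat.sub_pos_of_lt hX.one_lt
  have hlt := (Nat.le_of_dvd hpos hdvd).trans_lt (Nat.sub_one_lt hX.ne_zero)
  have : Fact (Nat.card X).Prime := ⟨hX⟩
  obtain ⟨N, _, hN⟩ := exists_normal_card_eq_prime_pow (G := G) (k := 1)
    (ne_zero_of_dvd_ne_zero hpos.ne' hdvd) hlt
    (by rw [pow_one, card_eq_card_mul_card_stabilizer x])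
  rw [pow_one] at hN
  have : IsCyclic N := isCyclic_of_prime_card hN
  have := isPretransitive_of_normal_of_ne_bot (X := X) (N := N) (by
    rintro rfl
    exact hX.ne_one (hN ▸ Subgroup.card_bot))
  refine isSolvable_of_centralizer_le N fun g hg ↦ ?_
  obtain ⟨n, hn⟩ := MulAction.exists_smul_eq N x (g • x)
  have hmem : (n : G)⁻¹ * g ∈ Subgroup.centralizer (N : Set G) :=
    mul_mem (inv_mem (N.le_centralizer n.2)) hg
  have hfix : ((n : G)⁻¹ * g) • x = x := by
    rw [mul_smul, ← hn, Subgroup.smul_def, inv_smul_smul]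
  exact inv_mul_eq_one.mp (eq_one_of_mem_centralizer_of_smul_eq N hmem hfix) ▸ n.2

theorem isSolvable_iff_fixingSubgroup_pair_eq_bot (hX : (Nat.card X).Prime) :
    Group.IsSolvable G ↔ ∀ x y : X, x ≠ y → fixingSubgroup G {x, y} = ⊥ :=
  ⟨fun _ _ _ ↦ fixingSubgroup_pair_eq_bot_of_isSolvable hX,
    isSolvable_of_fixingSubgroup_pair_eq_bot hX⟩

end PermutationGroup

section GaloisTheory

variable {K E : Type*} [Field K] [Field E] [Algebra K E]

theorem fixingSubgroup_adjoin (T : Set E) :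
    (adjoin K T).fixingSubgroup = fixingSubgroup Gal(E/K) T := by
  refine eq_of_forall_le_iff fun H ↦ ?_
  rw [← IntermediateField.le_iff_le, adjoin_le_iff]
  exact ⟨fun h σ hσ x ↦ h x.2 ⟨σ, hσ⟩, fun h x hx σ ↦ h σ.2 ⟨x, hx⟩⟩

theorem adjoin_eq_top_iff_fixingSubgroup_eq_bot [FiniteDimensional K E] [IsGalois K E] (T : Set E) :
    adjoin K T = ⊤ ↔ fixingSubgroup Gal(E/K) T = ⊥ := by
  rw [← fixingSubgroup_adjoin, ← IntermediateField.fixingSubgroup_top]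
  exact (IsGalois.intermediateFieldEquivSubgroup.injective.eq_iff (b := ⊤)).symm

variable {f : K[X]} [Fact (f.map (algebraMap K E)).Splits]

theorem adjoin_eq_adjoin_rootSet_iff (hf : f.Separable) (S : Set (f.rootSet E)) :
    adjoin K (Subtype.val '' S) = adjoin K (f.rootSet E) ↔ fixingSubgroup f.Gal S = ⊥ := by
  have : IsGalois K f.SplittingField := .of_separable_splitting_field hf
  let ι : f.SplittingField →ₐ[K] E := IsScalarTower.toAlgHom K f.SplittingField E
  let e := Gal.rootsEquivRoots f E
  let T : Set f.SplittingField := Subtype.val '' (e ⁻¹' S)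
  have hS : adjoin K (Subtype.val '' S) = (adjoin K T).map ι := by
    rw [adjoin_map, Set.image_image, ← e.image_preimage S, Set.image_image, e.image_preimage]
    rfl
  have hroots : adjoin K (f.rootSet E) = (⊤ : IntermediateField K f.SplittingField).map ι := by
    rw [← (SplittingField.splits f).image_rootSet ι, ← adjoin_map,
      (isSplittingField_iff_intermediateField.mp (IsSplittingField.splittingField f)).2]
  have hfix : fixingSubgroup f.Gal S = fixingSubgroup Gal(f.SplittingField/K) T := by
    ext σ
    have hsmul (z : f.rootSet f.SplittingField) : σ • e z = e z ↔ σ z = z := by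
      rw [Gal.smul_def, Equiv.symm_apply_apply, e.apply_eq_iff_eq, Subtype.ext_iff]
      rfl
    rw [_root_.mem_fixingSubgroup_iff, e.surjective.forall]
    refine Iff.trans (forall_congr' fun z ↦ imp_congr_right fun _ ↦ hsmul z) ?_
    exact (Set.forall_mem_image (p := fun w ↦ σ w = w)).symm.trans
      (_root_.mem_fixingSubgroup_iff Gal(f.SplittingField/K)).symm
  rw [hS, hroots, (IntermediateField.map_injective ι).eq_iff, hfix]
  exact adjoin_eq_top_iff_fixingSubgroup_eq_bot T

end GaloisTheory

section Kummer

variable {K L : Type*} [Field K] [Field L] [Algebra K L] [FiniteDimensional K L] [IsGalois K L]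

theorem finrank_eq_one_of_isCyclic [IsCyclic Gal(L/K)]
    (hζ : (primitiveRoots (Module.finrank K L) K).Nonempty)
    (hroot : ∀ a : K, ∃ b, b ^ Module.finrank K L = a) : Module.finrank K L = 1 := by
  obtain ⟨α, ⟨a, ha⟩, hα⟩ := exists_root_adjoin_eq_top_of_isCyclic K L hζ
  obtain ⟨ζ, hζ⟩ := hζ
  obtain ⟨b, hb⟩ := hroot a
  have hpos := Module.finrank_pos (R := K) (M := L)
  have hαK : α ∈ (algebraMap K L).range :=
    (X_pow_sub_C_splits_of_isPrimitiveRoot ((mem_primitiveRoots hpos).mp hζ) hb).mem_range_of_isRoot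
      (X_pow_sub_C_ne_zero hpos a) (by simp [ha])
  rw [← IntermediateField.bot_eq_top_iff_finrank_eq_one, ← hα]
  exact (adjoin_simple_eq_bot_iff.mpr hαK).symm

theorem finrank_eq_one_of_isSolvable [Group.IsSolvable Gal(L/K)]
    (hζ : (primitiveRoots (Module.finrank K L) K).Nonempty)
    (hroot : ∀ a : K, ∃ b, b ^ Module.finrank K L = a) : Module.finrank K L = 1 := by
  rw [← IsGalois.card_aut_eq_finrank]
  by_contra! hcard
  have : Nontrivial Gal(L/K) := Finite.one_lt_card_iff_nontrivial.mp
    (lt_of_le_of_ne Nat.card_pos hcard.symm)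
  obtain ⟨N, _, hN, _⟩ := exists_normal_ne_top_isCyclic_quotient (G := Gal(L/K))
  let F := fixedField N
  have : IsGalois K F := .of_fixedField_normal_subgroup N
  have : IsCyclic Gal(F/K) :=
    isCyclic_of_surjective (IsGalois.normalAutEquivQuotient N) (MulEquiv.surjective _)
  have htower := Module.finrank_mul_finrank K F L
  obtain ⟨ζ, hζ⟩ := hζ
  have hζF := ((mem_primitiveRoots Module.finrank_pos).mp hζ).pow Module.finrank_pos
    ((mul_comm _ _).trans htower).symm
  have hF : F = ⊥ := by
    refine IntermediateField.finrank_eq_one_iff.mp (finrank_eq_one_of_isCyclic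
      ⟨_, (mem_primitiveRoots Module.finrank_pos).mpr hζF⟩ fun a ↦ ?_)
    obtain ⟨b, hb⟩ := hroot a
    exact ⟨b ^ Module.finrank F L, by rw [← hb, ← htower, mul_comm, pow_mul]⟩
  rw [← fixingSubgroup_fixedField N, show fixedField N = ⊥ from hF] at hN
  exact hN IntermediateField.fixingSubgroup_bot

end Kummer

section Radicals

variable {K : Type*} [Field K]

theorem exists_injective_gal_map_monoidHom (f : K[X]) (S : Type*) [Field S] [Algebra K S] :
    ∃ φ : (f.map (algebraMap K S)).Gal →* f.Gal, Function.Injective φ := by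
  let g := f.map (algebraMap K S)
  have hsplits : Fact (f.map (algebraMap K g.SplittingField)).Splits := ⟨by
    rw [IsScalarTower.algebraMap_eq K S, ← Polynomial.map_map]
    exact SplittingField.splits g⟩
  refine ⟨(Gal.restrict f g.SplittingField).comp (AlgEquiv.restrictScalarsHom K),
    (injective_iff_map_eq_one _).mpr fun σ hσ ↦ Gal.ext g fun x hx ↦ ?_⟩
  have hxf : x ∈ f.rootSet g.SplittingField := by
    rw [mem_rootSet', Polynomial.map_map, ← IsScalarTower.algebraMap_eq, aeval_map_algebraMap] at hx
    exact mem_rootSet'.mpr hx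
  have hrestrict := Gal.restrict_smul (AlgEquiv.restrictScalarsHom K σ) ⟨x, hxf⟩
  rw [show Gal.restrict f g.SplittingField (AlgEquiv.restrictScalarsHom K σ) = 1 from hσ,
    one_smul] at hrestrict
  exact hrestrict.symm

theorem splits_of_isSolvable_gal {f : K[X]} (hf : f.Separable) [Group.IsSolvable f.Gal]
    (hζ : (primitiveRoots (Nat.card f.Gal) K).Nonempty)
    (hroot : ∀ a : K, ∃ b, b ^ Nat.card f.Gal = a) : f.Splits := by
  have : IsGalois K f.SplittingField := .of_separable_splitting_field hf
  have : Group.IsSolvable Gal(f.SplittingField/K) := ‹Group.IsSolvable f.Gal›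
  rw [Gal.card_of_separable hf] at hζ hroot
  rw [IsSplittingField.splits_iff f.SplittingField, eq_comm,
    Subalgebra.bot_eq_top_iff_finrank_eq_one]
  exact finrank_eq_one_of_isSolvable hζ hroot

theorem rootSet_subset_solvableByRad (E : Type*) [Field E] [Algebra K E] [IsSepClosed E]
    {f : K[X]} (hf : f.Separable) [Group.IsSolvable f.Gal] (hcard : (Nat.card f.Gal : K) ≠ 0) :
    f.rootSet E ⊆ solvableByRad K E := by
  let S := solvableByRad K E
  let g := f.map (algebraMap K S)
  obtain ⟨φ, hφ⟩ := exists_injective_gal_map_monoidHom f S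
  have : Group.IsSolvable g.Gal := Group.isSolvable_of_isSolvable_injective hφ
  have hn : (Nat.card g.Gal : E) ≠ 0 := by
    obtain ⟨m, hm⟩ := Subgroup.card_dvd_of_injective φ hφ
    rw [hm, ← map_ne_zero (algebraMap K E), map_natCast, Nat.cast_mul] at hcard
    exact left_ne_zero_of_mul hcard
  have : NeZero (Nat.card g.Gal : E) := ⟨hn⟩
  have hrad {x : E} (hx : x ^ Nat.card g.Gal ∈ S) : x ∈ S :=
    solvableByRad.rad_mem Nat.card_pos.ne' hx
  have hζ : (primitiveRoots (Nat.card g.Gal) S).Nonempty := by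
    obtain ⟨ζ, hζ⟩ := HasEnoughRootsOfUnity.exists_primitiveRoot E (Nat.card g.Gal)
    have hζS : ζ ∈ S := hrad (hζ.pow_eq_one ▸ one_mem S)
    exact ⟨⟨ζ, hζS⟩, (mem_primitiveRoots Nat.card_pos).mpr
      (.of_map_of_injective (f := algebraMap S E) hζ (algebraMap S E).injective)⟩
  have hroot (a : S) : ∃ b, b ^ Nat.card g.Gal = a := by
    obtain ⟨b, hb⟩ := IsSepClosed.exists_pow_nat_eq (a : E) (Nat.card g.Gal)
    exact ⟨⟨b, hrad (hb ▸ a.2)⟩, Subtype.ext hb⟩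
  intro z hz
  have hg : g.Splits := splits_of_isSolvable_gal hf.map hζ hroot
  obtain ⟨s, rfl⟩ := hg.mem_range_of_isRoot hf.map.ne_zero (i := algebraMap S E) (x := z) (by
    rw [Polynomial.map_map, ← IsScalarTower.algebraMap_eq, IsRoot.def, eval_map_algebraMap]
    exact (mem_rootSet.mp hz).2)
  exact s.2

theorem isSolvableByRad_iff_mem_solvableByRad {E : Type*} [Field E] [Algebra K E] {x : E} :
    IsSolvableByRad K x ↔ x ∈ solvableByRad K E := by
  constructor
  · intro h
    induction h with
    | base a => exact _root_.algebraMap_mem _ a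
    | add a b _ _ ha hb => exact add_mem ha hb
    | neg a _ ha => exact neg_mem ha
    | mul a b _ _ ha hb => exact mul_mem ha hb
    | inv a _ ha => exact inv_mem ha
    | rad a n hn _ ha => exact solvableByRad.rad_mem hn ha
  · intro h
    induction h using solvableByRad.induction with
    | mem a => exact .base a
    | add a b _ _ ha hb => exact .add a b ha hb
    | mul a b _ _ ha hb => exact .mul a b ha hb
    | rad n a hn _ ha => exact .rad a n hn ha

end Radicals

section PrimeDegree

theorem separable_of_natDegree_cast_ne_zero {K : Type*} [Field K] {f : K[X]}
    (hirr : Irreducible f) (hdeg : (f.natDegree : K) ≠ 0) : f.Separable := by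
  refine (separable_iff_derivative_ne_zero hirr).mpr fun h ↦ ?_
  have hpos : f.natDegree - 1 + 1 = f.natDegree := Nat.sub_add_cancel hirr.natDegree_pos
  have hcoeff : f.leadingCoeff * f.natDegree = 0 := by
    simpa only [leadingCoeff, coeff_derivative, coeff_zero, ← Nat.cast_succ, Nat.succ_eq_add_one,
      hpos] using congrArg (coeff · (f.natDegree - 1)) h
  exact mul_ne_zero (leadingCoeff_ne_zero.mpr hirr.ne_zero) hdeg hcoeff

variable {K E : Type*} [Field K] [Field E] [Algebra K E] {f : K[X]}

theorem rootSet_subset_solvableByRad_iff_isSolvable_gal [IsSepClosed E] (hirr : Irreducible f)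
    (hf : f.Separable) (hcard : Group.IsSolvable f.Gal → (Nat.card f.Gal : K) ≠ 0) :
    f.rootSet E ⊆ solvableByRad K E ↔ Group.IsSolvable f.Gal := by
  refine ⟨fun h ↦ ?_, fun hsol ↦ rootSet_subset_solvableByRad E hf (hcard hsol)⟩
  obtain ⟨α, hα⟩ := IsSepClosed.exists_aeval_eq_zero E f hirr.degree_pos.ne' hf
  exact isSolvable_gal_of_irreducible (h (mem_rootSet.mpr ⟨hirr.ne_zero, hα⟩)) hirr hα

section Splits

variable [hE : Fact (f.map (algebraMap K E)).Splits]

theorem faithfulSMul_gal_rootSet : FaithfulSMul f.Gal (f.rootSet E) :=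
  ⟨fun h ↦ Gal.galActionHom_injective f E (Equiv.ext h)⟩

theorem natCard_rootSet_eq_natDegree (hf : f.Separable) : Nat.card (f.rootSet E) = f.natDegree := by
  rw [Nat.card_eq_fintype_card, card_rootSet_eq_natDegree hf hE.out]

theorem isSolvable_gal_iff_adjoin_pair (hirr : Irreducible f) (hf : f.Separable)
    (hp : f.natDegree.Prime) :
    Group.IsSolvable f.Gal ↔ ∀ x ∈ f.rootSet E, ∀ y ∈ f.rootSet E, x ≠ y →
      adjoin K {x, y} = adjoin K (f.rootSet E) := by
  have := Gal.galAction_isPretransitive f E hirr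
  have := faithfulSMul_gal_rootSet (f := f) (E := E)
  rw [isSolvable_iff_fixingSubgroup_pair_eq_bot (X := f.rootSet E)
    (by rwa [natCard_rootSet_eq_natDegree hf])]
  simp only [SetCoe.forall, ← adjoin_eq_adjoin_rootSet_iff hf, Set.image_pair, ne_eq,
    Subtype.mk.injEq]

end Splits

theorem card_gal_dvd_of_isSolvable (hirr : Irreducible f) (hf : f.Separable)
    (hp : f.natDegree.Prime) [Group.IsSolvable f.Gal] :
    Nat.card f.Gal ∣ f.natDegree * (f.natDegree - 1) := by
  have : Fact (f.map (algebraMap K (AlgebraicClosure K))).Splits := ⟨IsAlgClosed.splits _⟩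
  have := Gal.galAction_isPretransitive f (AlgebraicClosure K) hirr
  have := faithfulSMul_gal_rootSet (f := f) (E := AlgebraicClosure K)
  have hcard := natCard_rootSet_eq_natDegree (E := AlgebraicClosure K) hf
  rw [← hcard]
  exact card_dvd_card_mul_card_sub_one_of_isSolvable (by rwa [hcard])

theorem galois_criterion_prime_degree_general {K E : Type*} [Field K] [Field E] [Algebra K E]
    [IsSepClosed E] (p : ℕ) (hp : p.Prime) (hK : ((p * (p - 1) : ℕ) : K) ≠ 0) (f : Polynomial K)
    (hirr : Irreducible f) (hdeg : f.natDegree = p) :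
    (∀ α ∈ f.rootSet E, IsSolvableByRad K α) ↔
    (∀ x ∈ f.rootSet E, ∀ y ∈ f.rootSet E, x ≠ y →
      IntermediateField.adjoin K {x, y} = IntermediateField.adjoin K (f.rootSet E)) := by
  subst hdeg
  have hf : f.Separable := separable_of_natDegree_cast_ne_zero hirr
    fun h0 ↦ hK (by rw [Nat.cast_mul, h0, zero_mul])
  have : Fact (f.map (algebraMap K E)).Splits := ⟨IsSepClosed.splits_codomain f hf⟩
  have hcard (_ : Group.IsSolvable f.Gal) : (Nat.card f.Gal : K) ≠ 0 := fun h0 ↦ by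
    obtain ⟨m, hm⟩ := card_gal_dvd_of_isSolvable hirr hf hp
    rw [hm, Nat.cast_mul, h0, zero_mul] at hK
    exact hK rfl
  simp only [isSolvableByRad_iff_mem_solvableByRad]
  exact (rootSet_subset_solvableByRad_iff_isSolvable_gal hirr hf hcard).trans
    (isSolvable_gal_iff_adjoin_pair hirr hf hp)

end PrimeDegree

/-- **Galois's criterion of solvability for irreducible equations of prime degree.**
Let `K` be a field of characteristic zero and `f ∈ K[X]` irreducible of prime degree `p`.
Working inside an algebraic closure of `K`, where the splitting field `L` of `f` is the
field generated over `K` by all roots of `f`: `f` is solvable by radicals if and only if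
for every pair of distinct roots `x, y` of `f` one has `L = K(x, y)`. -/
theorem galois_criterion_prime_degree {K : Type*} [Field K] [CharZero K]
    (p : ℕ) (hp : p.Prime) (f : Polynomial K) (hirr : Irreducible f)
    (hdeg : f.natDegree = p) :
    (∀ α ∈ f.rootSet (AlgebraicClosure K), IsSolvableByRad K α) ↔
    (∀ x ∈ f.rootSet (AlgebraicClosure K), ∀ y ∈ f.rootSet (AlgebraicClosure K), x ≠ y →
      IntermediateField.adjoin K {x, y} =
        IntermediateField.adjoin K (f.rootSet (AlgebraicClosure K))) :=
  galois_criterion_prime_degree_general p hp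
    (Nat.cast_ne_zero.mpr (Nat.mul_pos hp.pos (Nat.sub_pos_of_lt hp.one_lt)).ne') f hirr hdeg
end
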